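/- Let (Q, m, k) be a commutative Noetherian local ring and let f, g be an exact pair of zerodivisors in m, i.e. f and g are nonzero elements of m with ann_Q(f) = (g) and ann_Q(g) = (f). Set R = Q/(f). If M is a finitely generated R-module with f ∈ m·ann_Q(M), then M is inert by the surjection Q → R; that is, for every integer i ≥ 0, Σ_{p+q=i} β_p^R(M)·β_q^Q(k) = Σ_{p+q=i} β_p^Q(M)·β_q^R(k). -/

import Mathlib

namespace EZ
open Finsupp

section tools
variable {S : Type} [CommRing S]

/-- graded piece -/
def gr (S : Type) [CommRing S] {ι M : Type} [AddCommGroup M] [Module S M] (deg : ι → ℕ) (n : ℤ) :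
    Submodule S (ι →₀ M) := Finsupp.supported M S {i | (deg i : ℤ) = n}

lemma mem_gr {ι M : Type} [AddCommGroup M] [Module S M] {deg : ι → ℕ} {n : ℤ} {x : ι →₀ M} :
    x ∈ gr S deg n ↔ ∀ i, x i ≠ 0 → (deg i : ℤ) = n := by
  unfold gr
  rw [Finsupp.mem_supported]
  simp [Set.subset_def]

lemma single_mem_gr {ι M : Type} [AddCommGroup M] [Module S M] {deg : ι → ℕ} (i : ι) (m : M) :
    single i m ∈ gr S deg (deg i) := by
  classical
  rw [mem_gr]; intro j hj
  rw [Finsupp.single_apply] at hj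
  split_ifs at hj with h
  · rw [h]
  · exact absurd rfl hj

lemma single_mem_gr' {ι M : Type} [AddCommGroup M] [Module S M] {deg : ι → ℕ} (i : ι) (m : M) {n : ℤ}
    (h : (deg i : ℤ) = n) :
    single i m ∈ gr S deg n := h ▸ single_mem_gr i m

lemma gr_neg {ι M : Type} [AddCommGroup M] [Module S M] {deg : ι → ℕ} {n : ℤ} (hn : n < 0)
    {x : ι →₀ M} (hx : x ∈ gr S deg n) : x = 0 := by
  ext i
  by_contra h
  have := mem_gr.1 hx i h
  omega

/-- induction for membership -/
lemma gr_induction {ι M : Type} [AddCommGroup M] [Module S M] {deg : ι → ℕ} {n : ℤ}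
    {N : Type} [AddCommGroup N] (F : (ι →₀ M) →+ N) (W : AddSubgroup N)
    (h : ∀ i m, (deg i : ℤ) = n → F (single i m) ∈ W) {x : ι →₀ M} (hx : x ∈ gr S deg n) : F x ∈ W := by
  rw [← Finsupp.sum_single x, Finsupp.sum, map_sum]
  refine AddSubgroup.sum_mem _ fun i hi => h i _ (mem_gr.1 hx i (Finsupp.mem_support_iff.1 hi))

/-- degree predicate -/
def IsDeg {ι κ M N : Type} [AddCommGroup M] [Module S M] [AddCommGroup N] [Module S N]
    (deg : ι → ℕ) (deg' : κ → ℕ) (p : ℤ)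
    (A : (ι →₀ M) →ₗ[S] (κ →₀ N)) : Prop := ∀ n, ∀ x ∈ gr S deg n, A x ∈ gr S deg' (n + p)

lemma isDeg_iff {ι κ M N : Type} [AddCommGroup M] [Module S M] [AddCommGroup N] [Module S N]
    {deg : ι → ℕ} {deg' : κ → ℕ} {p : ℤ}
    {A : (ι →₀ M) →ₗ[S] (κ →₀ N)} : IsDeg deg deg' p A ↔ ∀ i m, A (single i m) ∈ gr S deg' (deg i + p) := by
  constructor
  · intro h i m
    exact h _ _ (single_mem_gr i m)
  · intro h n x hx
    exact gr_induction (S := S) A.toAddMonoidHom (gr S deg' (n + p)).toAddSubgroup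
      (fun i m hi => by have := h i m; rw [hi] at this; exact this) hx

lemma isDeg_iff_one {ι κ N : Type} [AddCommGroup N] [Module S N]
    {deg : ι → ℕ} {deg' : κ → ℕ} {p : ℤ}
    {A : (ι →₀ S) →ₗ[S] (κ →₀ N)} : IsDeg deg deg' p A ↔ ∀ i, A (single i 1) ∈ gr S deg' (deg i + p) := by
  rw [isDeg_iff]
  refine forall_congr' fun i => ⟨fun h => h 1, fun h m => ?_⟩
  rw [← mul_one m, ← smul_eq_mul, ← Finsupp.smul_single, map_smul]
  exact Submodule.smul_mem _ _ h

section
variable {ι κ ρ M N L : Type} [AddCommGroup M] [Module S M] [AddCommGroup N] [Module S N]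
  [AddCommGroup L] [Module S L]
  {deg : ι → ℕ} {deg' : κ → ℕ} {deg'' : ρ → ℕ} {p q : ℤ}

lemma IsDeg.add {A B : (ι →₀ M) →ₗ[S] (κ →₀ N)} (hA : IsDeg deg deg' p A) (hB : IsDeg deg deg' p B) :
    IsDeg deg deg' p (A + B) := fun n x hx => Submodule.add_mem _ (hA n x hx) (hB n x hx)
lemma IsDeg.sub {A B : (ι →₀ M) →ₗ[S] (κ →₀ N)} (hA : IsDeg deg deg' p A) (hB : IsDeg deg deg' p B) :
    IsDeg deg deg' p (A - B) := fun n x hx => Submodule.sub_mem _ (hA n x hx) (hB n x hx)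
lemma IsDeg.neg {A : (ι →₀ M) →ₗ[S] (κ →₀ N)} (hA : IsDeg deg deg' p A) :
    IsDeg deg deg' p (-A) := fun n x hx => Submodule.neg_mem _ (hA n x hx)
lemma IsDeg.smul {A : (ι →₀ M) →ₗ[S] (κ →₀ N)} (c : S) (hA : IsDeg deg deg' p A) :
    IsDeg deg deg' p (c • A) := fun n x hx => Submodule.smul_mem _ c (hA n x hx)
lemma isDeg_zero : IsDeg deg deg' p (0 : (ι →₀ M) →ₗ[S] (κ →₀ N)) :=
  fun _ _ _ => Submodule.zero_mem _
lemma isDeg_sum {T : Type} (s : Finset T) {A : T → (ι →₀ M) →ₗ[S] (κ →₀ N)}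
    (hA : ∀ t ∈ s, IsDeg deg deg' p (A t)) : IsDeg deg deg' p (∑ t ∈ s, A t) := by
  intro n x hx
  rw [LinearMap.sum_apply]
  exact Submodule.sum_mem _ fun t ht => hA t ht n x hx
lemma IsDeg.comp {A : (κ →₀ N) →ₗ[S] (ρ →₀ L)} {B : (ι →₀ M) →ₗ[S] (κ →₀ N)}
    (hA : IsDeg deg' deg'' p A) (hB : IsDeg deg deg' q B) {r : ℤ} (hr : q + p = r) :
    IsDeg deg deg'' r (A ∘ₗ B) := by
  intro n x hx
  have := hA _ _ (hB n x hx)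
  rwa [add_assoc, hr] at this
lemma isDeg_id : IsDeg deg deg 0 (LinearMap.id : (ι →₀ M) →ₗ[S] (ι →₀ M)) := by
  intro n x hx; simpa using hx
lemma IsDeg.mem {A : (ι →₀ M) →ₗ[S] (κ →₀ N)} (hA : IsDeg deg deg' p A) {n r : ℤ} {x : ι →₀ M}
    (hx : x ∈ gr S deg n) (hr : n + p = r) : A x ∈ gr S deg' r := hr ▸ hA n x hx
end

/-- agreement of linear maps on graded pieces -/
lemma eq_of_lower {ι Y : Type} [AddCommGroup Y] [Module S Y] {deg : ι → ℕ} {n : ℤ}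
    {h h' : (ι →₀ S) →ₗ[S] Y} (H : ∀ j, (deg j : ℤ) = n → h (single j 1) = h' (single j 1))
    {x : ι →₀ S} (hx : x ∈ gr S deg n) : h x = h' x := by
  have := gr_induction (S := S) (deg := deg) (n := n) (h - h').toAddMonoidHom ⊥ (fun i m hi => by
    rw [AddSubgroup.mem_bot]
    have : single i m = m • single i (1 : S) := by simp
    simp only [LinearMap.toAddMonoidHom_coe]
    rw [this, map_smul, LinearMap.sub_apply, H i hi, sub_self, smul_zero]) hx
  simpa [sub_eq_zero] using this

lemma exists_lift {ι Y : Type} [AddCommGroup Y] [Module S Y] {deg : ι → ℕ}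
    {d : (ι →₀ S) →ₗ[S] (ι →₀ S)} (hd : IsDeg deg deg (-1) d)
    (P : ι → Y → Y → Prop)
    (hP : ∀ i (h : (ι →₀ S) →ₗ[S] Y),
      (∀ j, deg j < deg i → P j (h (d (single j 1))) (h (single j 1))) →
      ∃ y, P i (h (d (single i 1))) y) :
    ∃ h : (ι →₀ S) →ₗ[S] Y, ∀ i, P i (h (d (single i 1))) (h (single i 1)) := by
  classical
  let lc : (ι → Y) → ((ι →₀ S) →ₗ[S] Y) := fun v => Finsupp.linearCombination S v
  have lc1 : ∀ v i, lc v (single i 1) = v i := by intro v i; simp [lc]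
  let F : (i : ι) → ((j : ι) → deg j < deg i → Y) → Y := fun i prev =>
    if H : ∃ y, P i (lc (fun j => if hj : deg j < deg i then prev j hj else 0) (d (single i 1))) y
    then H.choose else 0
  let wf : WellFounded (fun i j : ι => deg i < deg j) := InvImage.wf deg Nat.lt_wfRel.wf
  let v : ι → Y := wf.fix F
  have hv : ∀ i, v i = F i (fun j _ => v j) := fun i => wf.fix_eq F i
  have key : ∀ i, lc (fun j => if deg j < deg i then v j else 0) (d (single i 1)) = lc v (d (single i 1)) := by
    intro i
    refine eq_of_lower (deg := deg) (fun j hj => ?_) (hd _ _ (single_mem_gr i 1))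
    rw [lc1, lc1, if_pos (by omega)]
  refine ⟨lc v, ?_⟩
  have : ∀ n i, deg i = n → P i (lc v (d (single i 1))) (lc v (single i 1)) := by
    intro n
    induction n using Nat.strong_induction_on with
    | _ n ih =>
      intro i hi
      obtain ⟨y, hy⟩ := hP i (lc v) (fun j hj => ih _ (hi ▸ hj) j rfl)
      have H : ∃ y, P i (lc (fun j => if hj : deg j < deg i then v j else 0) (d (single i 1))) y :=
        ⟨y, by simpa [key i] using hy⟩
      have e : v i = H.choose := by
        rw [hv]; simp only [F]; rw [dif_pos H]
      rw [lc1, e]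
      have := H.choose_spec
      simpa [key i] using this
  exact fun i => this _ i rfl

/-- null homotopy -/
lemma exists_nh {ι κ : Type} {deg : ι → ℕ} {deg' : κ → ℕ}
    {d : (ι →₀ S) →ₗ[S] (ι →₀ S)} (hd : IsDeg deg deg (-1) d) (hdd : d ∘ₗ d = 0)
    {d' : (κ →₀ S) →ₗ[S] (κ →₀ S)} {p : ℤ} (σ : S)
    {o : (ι →₀ S) →ₗ[S] (κ →₀ S)} (hcom : d' ∘ₗ o = σ • (o ∘ₗ d))
    (W : (κ →₀ S) → Prop)
    (hsol : ∀ i (h : (ι →₀ S) →ₗ[S] (κ →₀ S)),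
      (∀ j, (deg j : ℤ) = deg i - 1 → W (h (single j 1)) ∧ h (single j 1) ∈ gr S deg' (deg j + p + 1)) →
      h (d (single i 1)) ∈ gr S deg' (deg i + p) →
      d' (o (single i 1) - σ • h (d (single i 1))) = 0 →
      ∃ y ∈ gr S deg' (deg i + p + 1), W y ∧ d' y = o (single i 1) - σ • h (d (single i 1))) :
    ∃ h : (ι →₀ S) →ₗ[S] (κ →₀ S), IsDeg deg deg' (p + 1) h ∧ d' ∘ₗ h + σ • (h ∘ₗ d) = o ∧
      ∀ i, W (h (single i 1)) := by
  obtain ⟨h, hh⟩ := exists_lift hd (Y := κ →₀ S)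
    (fun i x y => y ∈ gr S deg' (deg i + p + 1) ∧ W y ∧ d' y = o (single i 1) - σ • x) (by
      intro i h H
      have hlow : h (d (single i 1)) ∈ gr S deg' (deg i + p) := by
        have h1 : d (single i 1) ∈ gr S deg (deg i - 1) := hd.mem (single_mem_gr i 1) (by ring)
        exact gr_induction (S := S) (n := deg i - 1) h.toAddMonoidHom (gr S deg' (deg i + p)).toAddSubgroup
          (fun j m hj => by
            have : single j m = m • single j (1 : S) := by simp
            simp only [LinearMap.toAddMonoidHom_coe]
            rw [this, map_smul]
            refine Submodule.smul_mem _ _ ?_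
            have := (H j (by omega)).1
            rwa [show (deg j : ℤ) + p + 1 = deg i + p by omega] at this) h1
      obtain ⟨y, hy, hw, hy2⟩ := hsol i h (fun j hj => ⟨(H j (by omega)).2.1, (H j (by omega)).1⟩) hlow (by
        have e : d' (h (d (single i 1))) = o (d (single i 1)) - σ • h (d (d (single i 1))) :=
          eq_of_lower (deg := deg) (h := d' ∘ₗ h) (h' := o - σ • (h ∘ₗ d)) (n := deg i - 1)
            (fun j hj => (H j (by omega)).2.2) (hd.mem (single_mem_gr i 1) (by ring))
        have e2 : d (d (single i 1)) = 0 := LinearMap.congr_fun hdd _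
        rw [e2] at e
        rw [map_sub, map_smul, e]
        have := LinearMap.congr_fun hcom (single i 1)
        simp only [LinearMap.comp_apply, LinearMap.smul_apply] at this
        rw [this]; simp)
      exact ⟨y, hy, hw, hy2⟩)
  refine ⟨h, ?_, ?_, fun i => (hh i).2.1⟩
  · rw [isDeg_iff_one]; intro i; rw [← add_assoc]; exact (hh i).1
  · ext1 i
    ext1
    simp [(hh i).2.2]

end tools
end EZ

namespace EZ
open Finsupp

set_option linter.unusedSectionVars false
section ext
variable {Q : Type} [CommRing Q] {P : Type} [CommRing P]

/-- `x ⊗ m`. -/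
noncomputable def tm {ι M : Type} [AddCommGroup M] [Module Q M] (m : M) : (ι →₀ Q) →ₗ[Q] (ι →₀ M) :=
  Finsupp.mapRange.linearMap (LinearMap.toSpanSingleton Q M m)

lemma tm_apply {ι M : Type} [AddCommGroup M] [Module Q M] (m : M) (x : ι →₀ Q) (i : ι) :
    tm m x i = x i • m := by simp [tm]

lemma tm_single {ι M : Type} [AddCommGroup M] [Module Q M] (m : M) (i : ι) (c : Q) :
    tm m (single i c) = single i (c • m) := by simp [tm]

lemma tm_add {ι M : Type} [AddCommGroup M] [Module Q M] (m m' : M) (x : ι →₀ Q) :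
    tm (m + m') x = tm m x + tm m' x := by ext i; simp [tm_apply]

lemma tm_smul {ι M : Type} [AddCommGroup M] [Module Q M] [Module P M] [SMulCommClass Q P M]
    (c : P) (m : M) (x : ι →₀ Q) :
    tm (c • m) x = c • tm m x := by ext i; simp [tm_apply, smul_comm]

/-- extension of coefficients of an operator -/
noncomputable def ext (P M : Type) [CommRing P] [AddCommGroup M] [Module Q M] [Module P M] [SMulCommClass Q P M]
    {ι κ : Type} (A : (ι →₀ Q) →ₗ[Q] (κ →₀ Q)) : (ι →₀ M) →ₗ[P] (κ →₀ M) :=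
  Finsupp.lsum ℕ (fun i =>
    { toFun := fun m => tm m (A (single i 1))
      map_add' := fun m m' => tm_add m m' _
      map_smul' := fun c m => tm_smul c m _ } : ι → M →ₗ[P] (κ →₀ M))

variable {M : Type} [AddCommGroup M] [Module Q M] [Module P M] [SMulCommClass Q P M]
variable {ι κ ρ : Type}

lemma ext_single (A : (ι →₀ Q) →ₗ[Q] (κ →₀ Q)) (i : ι) (m : M) :
    ext P M A (single i m) = tm m (A (single i 1)) := by
  simp only [ext, Finsupp.lsum_apply]
  rw [Finsupp.sum_single_index]
  · rfl
  · exact map_zero _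

lemma ext_tm (A : (ι →₀ Q) →ₗ[Q] (κ →₀ Q)) (m : M) (x : ι →₀ Q) :
    ext P M A (tm m x) = tm m (A x) := by
  induction x using Finsupp.induction_linear with
  | zero => simp
  | add x y hx hy => simp [hx, hy]
  | single i c =>
    rw [tm_single, ext_single]
    have : single i c = c • single i (1 : Q) := by simp
    rw [this, map_smul, map_smul]
    exact tm_smul c m _

lemma ext_ext {N : Type} [AddCommGroup N] [Module P N] {F G : (ι →₀ M) →ₗ[P] N}
    (h : ∀ i m, F (single i m) = G (single i m)) : F = G := by
  ext i m; exact h i m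

lemma ext_comp (A : (κ →₀ Q) →ₗ[Q] (ρ →₀ Q)) (B : (ι →₀ Q) →ₗ[Q] (κ →₀ Q)) :
    ext P M (A ∘ₗ B) = ext P M A ∘ₗ ext P M B := by
  apply ext_ext; intro i m
  simp only [LinearMap.comp_apply, ext_single, ext_tm]

lemma ext_id : ext P M (LinearMap.id : (ι →₀ Q) →ₗ[Q] (ι →₀ Q)) = LinearMap.id := by
  apply ext_ext; intro i m
  simp only [ext_single, LinearMap.id_apply, tm_single, one_smul]

lemma ext_add (A B : (ι →₀ Q) →ₗ[Q] (κ →₀ Q)) : ext P M (A + B) = ext P M A + ext P M B := by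
  apply ext_ext; intro i m
  simp only [LinearMap.add_apply, ext_single, map_add]

lemma ext_sub (A B : (ι →₀ Q) →ₗ[Q] (κ →₀ Q)) : ext P M (A - B) = ext P M A - ext P M B := by
  apply ext_ext; intro i m
  simp only [LinearMap.sub_apply, ext_single, map_sub]

lemma ext_zero : ext P M (0 : (ι →₀ Q) →ₗ[Q] (κ →₀ Q)) = 0 := by
  apply ext_ext; intro i m
  simp only [LinearMap.zero_apply, ext_single, map_zero]

lemma ext_smul_apply (c : Q) (A : (ι →₀ Q) →ₗ[Q] (κ →₀ Q)) (x : ι →₀ M) :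
    ext P M (c • A) x = c • ext P M A x := by
  induction x using Finsupp.induction_linear with
  | zero => simp
  | add x y hx hy => simp [hx, hy]
  | single i m => simp [ext_single]

lemma gr_tm {deg : ι → ℕ} {n : ℤ} {x : ι →₀ Q} (hx : x ∈ gr Q deg n) (m : M) : tm m x ∈ gr P deg n := by
  rw [mem_gr] at *
  intro i hi
  refine hx i fun h => hi ?_
  rw [tm_apply, h, zero_smul]

lemma isDeg_ext {deg : ι → ℕ} {deg' : κ → ℕ} {p : ℤ} {A : (ι →₀ Q) →ₗ[Q] (κ →₀ Q)}
    (hA : IsDeg deg deg' p A) : IsDeg deg deg' p (ext P M A) := by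
  rw [isDeg_iff]; intro i m
  rw [ext_single]
  exact gr_tm (hA _ _ (single_mem_gr i 1)) m

/-- entries acting as zero -/
lemma ext_eq_zero {A : (ι →₀ Q) →ₗ[Q] (κ →₀ Q)} (h : ∀ i j (m : M), A (single i 1) j • m = 0) :
    ext P M A = 0 := by
  apply ext_ext; intro i m
  rw [ext_single]
  ext j
  simp [tm_apply, h]

/-- transitivity -/
lemma ext_trans {R : Type} [CommRing R] [Algebra Q R] [Module R M] [IsScalarTower Q R M]
    [SMulCommClass R P M]
    (A : (ι →₀ Q) →ₗ[Q] (κ →₀ Q)) : ext P M (ext R R A) = ext P M A := by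
  apply ext_ext; intro i m
  rw [ext_single, ext_single, ext_single]
  ext j
  simp [tm_apply]

end ext

section endo
variable {Q : Type} [CommRing Q] {R : Type} [CommRing R] [Algebra Q R] {ι : Type}

/-- base change of endomorphisms as a ring hom -/
noncomputable def bc (R : Type) [CommRing R] [Algebra Q R] (ι : Type) :
    Module.End Q (ι →₀ Q) →+* Module.End R (ι →₀ R) where
  toFun A := ext R R A
  map_one' := ext_id
  map_mul' A B := ext_comp A B
  map_zero' := ext_zero
  map_add' A B := ext_add A B

/-- base change of vectors -/
noncomputable abbrev bv (R : Type) [CommRing R] [Algebra Q R] {ι : Type} : (ι →₀ Q) →ₗ[Q] (ι →₀ R) := tm (1 : R)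

lemma bv_apply (x : ι →₀ Q) (i : ι) : bv (Q := Q) R x i = algebraMap Q R (x i) := by
  rw [tm_apply, Algebra.smul_def, mul_one]

lemma bv_single (i : ι) (c : Q) : bv R (single i c) = single i (algebraMap Q R c) := by
  rw [tm_single, Algebra.smul_def, mul_one]

lemma ext_bv {κ : Type} (A : (ι →₀ Q) →ₗ[Q] (κ →₀ Q)) (x : ι →₀ Q) : ext R R A (bv R x) = bv R (A x) := ext_tm A _ _

lemma bv_surj (h : Function.Surjective (algebraMap Q R)) {deg : ι → ℕ} {n : ℤ} {y : ι →₀ R} (hy : y ∈ gr R deg n) :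
    ∃ x : ι →₀ Q, x ∈ gr Q deg n ∧ bv R x = y := by
  classical
  choose s hs using h
  refine ⟨Finsupp.mapRange (fun r => if r = 0 then 0 else s r) (by simp) y, ?_, ?_⟩
  · rw [mem_gr] at *
    intro i hi
    refine hy i fun h => hi ?_
    simp [h]
  · ext i
    rw [bv_apply, Finsupp.mapRange_apply]
    split_ifs with h
    · simp [h]
    · exact hs _

end endo
end EZ

namespace EZ
open Finsupp

section subq
variable {P : Type} [CommRing P] {W W' W'' : Type} [AddCommGroup W] [Module P W]
  [AddCommGroup W'] [Module P W'] [AddCommGroup W''] [Module P W'']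

/-- subquotient -/
abbrev Sq (Z B : Submodule P W) : Type := Z ⧸ B.submoduleOf Z

/-- induced map -/
def sqMap {Z B : Submodule P W} {Z' B' : Submodule P W'} (φ : W →ₗ[P] W')
    (hZ : ∀ z ∈ Z, φ z ∈ Z') (hB : ∀ z ∈ Z, z ∈ B → φ z ∈ B') : Sq Z B →ₗ[P] Sq Z' B' :=
  Submodule.mapQ _ _ (φ.restrict hZ) (by
    intro z hz
    exact hB z.1 z.2 hz)

lemma sqMap_mk {Z B : Submodule P W} {Z' B' : Submodule P W'} (φ : W →ₗ[P] W')
    (hZ : ∀ z ∈ Z, φ z ∈ Z') (hB : ∀ z ∈ Z, z ∈ B → φ z ∈ B') (z : Z) :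
    sqMap φ hZ hB (Submodule.Quotient.mk z) = Submodule.Quotient.mk ⟨φ z, hZ z z.2⟩ := rfl

lemma sq_mk_eq_zero {Z B : Submodule P W} (z : Z) : (Submodule.Quotient.mk z : Sq Z B) = 0 ↔ z.1 ∈ B := by
  rw [Submodule.Quotient.mk_eq_zero]; rfl

lemma sqMap_inj {Z B : Submodule P W} {Z' B' : Submodule P W'} (φ : W →ₗ[P] W')
    (hZ : ∀ z ∈ Z, φ z ∈ Z') (hB : ∀ z ∈ Z, z ∈ B → φ z ∈ B')
    (h : ∀ z ∈ Z, φ z ∈ B' → z ∈ B) : Function.Injective (sqMap φ hZ hB) := by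
  rw [← LinearMap.ker_eq_bot, LinearMap.ker_eq_bot']
  intro x
  obtain ⟨z, rfl⟩ := Submodule.Quotient.mk_surjective _ x
  rw [sqMap_mk, sq_mk_eq_zero, sq_mk_eq_zero]
  exact h z.1 z.2

lemma sqMap_surj {Z B : Submodule P W} {Z' B' : Submodule P W'} (φ : W →ₗ[P] W')
    (hZ : ∀ z ∈ Z, φ z ∈ Z') (hB : ∀ z ∈ Z, z ∈ B → φ z ∈ B')
    (h : ∀ z ∈ Z', ∃ y ∈ Z, φ y - z ∈ B') : Function.Surjective (sqMap φ hZ hB) := by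
  intro x
  obtain ⟨z, rfl⟩ := Submodule.Quotient.mk_surjective _ x
  obtain ⟨y, hy, hyz⟩ := h z.1 z.2
  refine ⟨Submodule.Quotient.mk ⟨y, hy⟩, ?_⟩
  rw [sqMap_mk, ← sub_eq_zero, ← Submodule.Quotient.mk_sub, sq_mk_eq_zero]
  exact hyz

lemma sq_length_eq {Z B : Submodule P W} {Z' B' : Submodule P W'} (φ : W →ₗ[P] W')
    (hZ : ∀ z ∈ Z, φ z ∈ Z') (hB : ∀ z ∈ Z, z ∈ B → φ z ∈ B')
    (hi : ∀ z ∈ Z, φ z ∈ B' → z ∈ B) (hs : ∀ z ∈ Z', ∃ y ∈ Z, φ y - z ∈ B') :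
    Module.length P (Sq Z B) = Module.length P (Sq Z' B') :=
  (LinearEquiv.ofBijective (sqMap φ hZ hB) ⟨sqMap_inj φ hZ hB hi, sqMap_surj φ hZ hB hs⟩).length_eq

lemma sq_length_add {Z B : Submodule P W} {Z' B' : Submodule P W'} {Z'' B'' : Submodule P W''}
    (φ : W →ₗ[P] W') (ψ : W' →ₗ[P] W'')
    (hZ : ∀ z ∈ Z, φ z ∈ Z') (hB : ∀ z ∈ Z, z ∈ B → φ z ∈ B')
    (hZ' : ∀ z ∈ Z', ψ z ∈ Z'') (hB' : ∀ z ∈ Z', z ∈ B' → ψ z ∈ B'')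
    (hi : ∀ z ∈ Z, φ z ∈ B' → z ∈ B) (hs : ∀ z ∈ Z'', ∃ y ∈ Z', ψ y - z ∈ B'')
    (h0 : ∀ z ∈ Z, ψ (φ z) ∈ B'')
    (he : ∀ z ∈ Z', ψ z ∈ B'' → ∃ y ∈ Z, φ y - z ∈ B') :
    Module.length P (Sq Z' B') = Module.length P (Sq Z B) + Module.length P (Sq Z'' B'') := by
  refine Module.length_eq_add_of_exact (sqMap φ hZ hB) (sqMap ψ hZ' hB')
    (sqMap_inj φ hZ hB hi) (sqMap_surj ψ hZ' hB' hs) ?_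
  intro x
  obtain ⟨z, rfl⟩ := Submodule.Quotient.mk_surjective _ x
  constructor
  · intro h
    rw [sqMap_mk, sq_mk_eq_zero] at h
    obtain ⟨y, hy, hyz⟩ := he z.1 z.2 h
    refine ⟨Submodule.Quotient.mk ⟨y, hy⟩, ?_⟩
    rw [sqMap_mk, ← sub_eq_zero, ← Submodule.Quotient.mk_sub, sq_mk_eq_zero]
    exact hyz
  · rintro ⟨x, hx⟩
    obtain ⟨y, rfl⟩ := Submodule.Quotient.mk_surjective _ x
    rw [← hx, sqMap_mk, sqMap_mk, sq_mk_eq_zero]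
    exact h0 y.1 y.2

end subq

section homology
variable {P : Type} [CommRing P] {M : Type} [AddCommGroup M] [Module P M] {ι κ : Type}

/-- cycles -/
noncomputable def Zc (deg : ι → ℕ) (d : (ι →₀ M) →ₗ[P] (ι →₀ M)) (n : ℤ) : Submodule P (ι →₀ M) :=
  LinearMap.ker d ⊓ gr P deg n
/-- boundaries -/
noncomputable def Bc (deg : ι → ℕ) (d : (ι →₀ M) →ₗ[P] (ι →₀ M)) (n : ℤ) : Submodule P (ι →₀ M) :=
  (gr P deg (n + 1)).map d

lemma mem_Zc {deg : ι → ℕ} {d : (ι →₀ M) →ₗ[P] (ι →₀ M)} {n : ℤ} {x : ι →₀ M} :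
    x ∈ Zc deg d n ↔ d x = 0 ∧ x ∈ gr P deg n := by
  simp [Zc]
lemma mem_Bc {deg : ι → ℕ} {d : (ι →₀ M) →ₗ[P] (ι →₀ M)} {n : ℤ} {x : ι →₀ M} :
    x ∈ Bc deg d n ↔ ∃ y ∈ gr P deg (n + 1), d y = x := by
  simp [Bc]

/-- homology -/
abbrev Hm (deg : ι → ℕ) (d : (ι →₀ M) →ₗ[P] (ι →₀ M)) (n : ℤ) : Type := Sq (Zc deg d n) (Bc deg d n)

/-- homology length -/
noncomputable abbrev hl (deg : ι → ℕ) (d : (ι →₀ M) →ₗ[P] (ι →₀ M)) (n : ℤ) : ℕ∞ :=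
  Module.length P (Hm deg d n)

lemma hl_eq_of_homotopy {deg : ι → ℕ} {deg' : κ → ℕ} {d : (ι →₀ M) →ₗ[P] (ι →₀ M)}
    {d' : (κ →₀ M) →ₗ[P] (κ →₀ M)}
    (φ : (ι →₀ M) →ₗ[P] (κ →₀ M)) (ψ : (κ →₀ M) →ₗ[P] (ι →₀ M)) (hφ : IsDeg deg deg' 0 φ)
    (hψ : IsDeg deg' deg 0 ψ)
    (cφ : d' ∘ₗ φ = φ ∘ₗ d) (cψ : d ∘ₗ ψ = ψ ∘ₗ d')
    (h : (ι →₀ M) →ₗ[P] (ι →₀ M)) (h' : (κ →₀ M) →ₗ[P] (κ →₀ M))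
    (dh : IsDeg deg deg 1 h) (dh' : IsDeg deg' deg' 1 h')
    (H : d ∘ₗ h + h ∘ₗ d = ψ ∘ₗ φ - LinearMap.id) (H' : d' ∘ₗ h' + h' ∘ₗ d' = φ ∘ₗ ψ - LinearMap.id) (n : ℤ) :
    hl deg d n = hl deg' d' n := by
  have cφ' := fun x => LinearMap.congr_fun cφ x
  have cψ' := fun x => LinearMap.congr_fun cψ x
  have H1 := fun x => LinearMap.congr_fun H x
  have H1' := fun x => LinearMap.congr_fun H' x
  simp only [LinearMap.comp_apply, LinearMap.add_apply, LinearMap.sub_apply, LinearMap.id_apply] at cφ' cψ' H1 H1'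
  refine sq_length_eq φ ?_ ?_ ?_ ?_
  · intro z hz
    rw [mem_Zc] at *
    exact ⟨by rw [cφ', hz.1, map_zero], hφ.mem hz.2 (by ring)⟩
  · intro z _ hz
    rw [mem_Bc] at *
    obtain ⟨y, hy, rfl⟩ := hz
    exact ⟨φ y, hφ.mem hy (by ring), cφ' y⟩
  · intro z hz hb
    rw [mem_Bc] at *
    rw [mem_Zc] at hz
    obtain ⟨y, hy, e⟩ := hb
    refine ⟨ψ y - h z, Submodule.sub_mem _ (hψ.mem hy (by ring)) (dh.mem hz.2 rfl), ?_⟩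
    have := H1 z
    rw [hz.1, map_zero, add_zero] at this
    rw [map_sub, cψ', e, this]; abel
  · intro z hz
    rw [mem_Zc] at hz
    refine ⟨ψ z, ?_, ?_⟩
    · rw [mem_Zc]
      exact ⟨by rw [cψ', hz.1, map_zero], hψ.mem hz.2 (by ring)⟩
    · rw [mem_Bc]
      refine ⟨h' z, dh'.mem hz.2 rfl, ?_⟩
      have := H1' z
      rwa [hz.1, map_zero, add_zero] at this
end homology

section comparison
variable {S : Type} [CommRing S] [IsLocalRing S]

/-- complexes of free modules with homology `k` in even degrees -/
structure EvC {ι : Type} (deg : ι → ℕ) (d : (ι →₀ S) →ₗ[S] (ι →₀ S)) (ε : (ι →₀ S) →ₗ[S] S) : Prop where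
  hd : IsDeg deg deg (-1) d
  dd : d ∘ₗ d = 0
  eps_odd : ∀ n : ℤ, ¬ Even n → ∀ x ∈ gr S deg n, ε x = 0
  eps_d : ∀ x, ε (d x) ∈ IsLocalRing.maximalIdeal S
  exact : ∀ n x, x ∈ gr S deg n → d x = 0 → ε x ∈ IsLocalRing.maximalIdeal S →
    ∃ y ∈ gr S deg (n + 1), d y = x
  gen : ∀ n : ℕ, Even (n : ℤ) → ∃ z ∈ gr S deg n, d z = 0 ∧ ε z = 1

variable {ι κ : Type} {deg : ι → ℕ} {d : (ι →₀ S) →ₗ[S] (ι →₀ S)} {ε : (ι →₀ S) →ₗ[S] S}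
  {deg' : κ → ℕ} {d' : (κ →₀ S) →ₗ[S] (κ →₀ S)} {ε' : (κ →₀ S) →ₗ[S] S}

lemma EvC.exact' (h : EvC deg d ε) {n : ℤ} (hn : -1 ≤ n) {x : ι →₀ S} (hx : x ∈ gr S deg n) (h0 : d x = 0)
    (he : ε x ∈ IsLocalRing.maximalIdeal S) (c : S) (hc : ¬ Even (n + 1) → c = 0) :
    ∃ y ∈ gr S deg (n + 1), ε y = c ∧ d y = x := by
  obtain ⟨y, hy, e⟩ := h.exact n x hx h0 he
  by_cases hev : Even (n + 1)
  · obtain ⟨m, hm⟩ : ∃ m : ℕ, n + 1 = m := ⟨(n + 1).toNat, by omega⟩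
    rw [hm] at hev hy ⊢
    obtain ⟨z, hz, z0, z1⟩ := h.gen m hev
    refine ⟨y + (c - ε y) • z, Submodule.add_mem _ hy (Submodule.smul_mem _ _ hz), ?_, ?_⟩
    · simp [z1]
    · simp [z0, e]
  · exact ⟨y, hy, by rw [h.eps_odd _ hev y hy, hc hev], e⟩

lemma EvC.exists_map (h : EvC deg d ε) (h' : EvC deg' d' ε') :
    ∃ φ : (ι →₀ S) →ₗ[S] (κ →₀ S), IsDeg deg deg' 0 φ ∧ d' ∘ₗ φ = φ ∘ₗ d ∧ ε' ∘ₗ φ = ε := by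
  obtain ⟨φ, hφ⟩ := exists_lift h.hd (Y := κ →₀ S)
    (fun i x y => y ∈ gr S deg' (deg i) ∧ ε' y = ε (single i 1) ∧ d' y = x) (by
      intro i φ H
      have h1 : d (single i 1) ∈ gr S deg (deg i - 1) := h.hd.mem (single_mem_gr i 1) (by ring)
      have hlow : φ (d (single i 1)) ∈ gr S deg' (deg i - 1) := by
        exact gr_induction (S := S) (n := deg i - 1) φ.toAddMonoidHom (gr S deg' (deg i - 1)).toAddSubgroup
          (fun j m hj => by
            have : single j m = m • single j (1 : S) := by simp
            simp only [LinearMap.toAddMonoidHom_coe]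
            rw [this, map_smul]
            refine Submodule.smul_mem _ _ ?_
            have := (H j (by omega)).1
            rwa [hj] at this) h1
      have e1 : d' (φ (d (single i 1))) = 0 := by
        refine (eq_of_lower (deg := deg) (h := d' ∘ₗ φ) (h' := φ ∘ₗ d) (n := deg i - 1)
            (fun j hj => (H j (by omega)).2.2) h1).trans ?_
        have := LinearMap.congr_fun h.dd (single i 1)
        simp only [LinearMap.comp_apply, LinearMap.zero_apply] at this ⊢
        rw [this, map_zero]
      have e2 : ε' (φ (d (single i 1))) = ε (d (single i 1)) :=
        eq_of_lower (deg := deg) (h := ε' ∘ₗ φ) (h' := ε) (n := deg i - 1)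
            (fun j hj => (H j (by omega)).2.1) h1
      obtain ⟨y, hy, hy1, hy2⟩ := h'.exact' (n := deg i - 1) (by omega) hlow e1 (by rw [e2]; exact h.eps_d _) (ε (single i 1)) (by
        intro hn
        rw [sub_add_cancel] at hn
        exact h.eps_odd _ hn _ (single_mem_gr i 1))
      rw [sub_add_cancel] at hy
      exact ⟨y, hy, hy1, hy2⟩)
  refine ⟨φ, ?_, ?_, ?_⟩
  · rw [isDeg_iff_one]; intro i; rw [add_zero]; exact (hφ i).1
  · ext1 i; ext1; simp [(hφ i).2.2]
  · ext1 i; ext1; simp [(hφ i).2.1]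

lemma EvC.homotopy (h : EvC deg d ε) (ψ : (ι →₀ S) →ₗ[S] (ι →₀ S)) (hψ : IsDeg deg deg 0 ψ) (c : d ∘ₗ ψ = ψ ∘ₗ d)
    (e : ε ∘ₗ ψ = 0) : ∃ h, IsDeg deg deg 1 h ∧ d ∘ₗ h + h ∘ₗ d = ψ := by
  obtain ⟨k, hk, hk1, -⟩ := exists_nh (d' := d) (deg' := deg) h.hd h.dd (1 : S) (o := ψ) (p := 0) (by rw [one_smul, c])
    (fun y => ε y = 0) (by
      intro i k hlow hg h0
      rw [one_smul] at h0 ⊢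
      have h1 : d (single i 1) ∈ gr S deg (deg i - 1) := h.hd.mem (single_mem_gr i 1) (by ring)
      refine h.exact' (by omega) (Submodule.sub_mem _ (hψ _ _ (single_mem_gr i 1)) hg) h0 ?_ 0 (fun _ => rfl)
      have e2 : ε (k (d (single i 1))) = 0 :=
        eq_of_lower (deg := deg) (h := ε ∘ₗ k) (h' := 0) (n := deg i - 1)
            (fun j hj => (hlow j hj).1) h1
      have e3 : ε (ψ (single i 1)) = 0 := LinearMap.congr_fun e _
      rw [map_sub, e2, e3, sub_zero]
      exact Ideal.zero_mem _)
  exact ⟨k, hk, by rwa [one_smul] at hk1⟩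

/-- comparison lemma -/
lemma EvC.hl_eq (h : EvC deg d ε) (h' : EvC deg' d' ε') {P M : Type} [CommRing P] [AddCommGroup M]
    [Module S M] [Module P M] [SMulCommClass S P M] (n : ℤ) :
    hl deg (ext P M d) n = hl deg' (ext P M d') n := by
  obtain ⟨φ, dφ, cφ, eφ⟩ := h.exists_map h'
  obtain ⟨ψ, dψ, cψ, eψ⟩ := h'.exists_map h
  obtain ⟨k, dk, hk⟩ := h.homotopy (ψ ∘ₗ φ - LinearMap.id) ((dψ.comp dφ (by ring)).sub isDeg_id)
    (by rw [LinearMap.comp_sub, LinearMap.sub_comp, ← LinearMap.comp_assoc, cψ, LinearMap.comp_assoc, cφ,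
          LinearMap.comp_assoc]; rfl)
    (by rw [LinearMap.comp_sub, ← LinearMap.comp_assoc, eψ, eφ, LinearMap.comp_id, sub_self])
  obtain ⟨k', dk', hk'⟩ := h'.homotopy (φ ∘ₗ ψ - LinearMap.id) ((dφ.comp dψ (by ring)).sub isDeg_id)
    (by rw [LinearMap.comp_sub, LinearMap.sub_comp, ← LinearMap.comp_assoc, cφ, LinearMap.comp_assoc, cψ,
          LinearMap.comp_assoc]; rfl)
    (by rw [LinearMap.comp_sub, ← LinearMap.comp_assoc, eφ, eψ, LinearMap.comp_id, sub_self])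
  refine hl_eq_of_homotopy (ext P M φ) (ext P M ψ) (isDeg_ext dφ) (isDeg_ext dψ)
    (by rw [← ext_comp, cφ, ext_comp]) (by rw [← ext_comp, cψ, ext_comp]) (ext P M k) (ext P M k')
    (isDeg_ext dk) (isDeg_ext dk') ?_ ?_ n
  · rw [← ext_comp, ← ext_comp, ← ext_comp, ← ext_add, hk, ext_sub, ext_id]
  · rw [← ext_comp, ← ext_comp, ← ext_comp, ← ext_add, hk', ext_sub, ext_id]

end comparison
end EZ

namespace EZ
open Finsupp

section tot
variable {P : Type} [CommRing P] {M : Type} [AddCommGroup M] [Module P M] {ι κ : Type}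

lemma inj_mk (l : ℕ) : Function.Injective (fun i : ι => (l, i)) := fun _ _ h => (Prod.mk.inj h).2
lemma inj_sh : Function.Injective (fun p : ℕ × ι => (p.1 + 1, p.2)) := fun a b h => by
  simp only [Prod.mk.injEq, add_left_inj] at h
  exact Prod.ext h.1 h.2

/-- inclusion of the `l`-th copy -/
noncomputable def inc (P : Type) [CommRing P] {M : Type} [AddCommGroup M] [Module P M] {ι : Type} (l : ℕ) :
    (ι →₀ M) →ₗ[P] (ℕ × ι →₀ M) := Finsupp.lmapDomain M P (fun i => (l, i))
/-- projection to the `l`-th copy -/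
noncomputable def pr (P : Type) [CommRing P] {M : Type} [AddCommGroup M] [Module P M] {ι : Type} (l : ℕ) :
    (ℕ × ι →₀ M) →ₗ[P] (ι →₀ M) := Finsupp.lcomapDomain (fun i => (l, i)) (inj_mk l)
/-- shift down -/
noncomputable def tau (P : Type) [CommRing P] {M : Type} [AddCommGroup M] [Module P M] {ι : Type} :
    (ℕ × ι →₀ M) →ₗ[P] (ℕ × ι →₀ M) := Finsupp.lcomapDomain (fun p => (p.1 + 1, p.2)) inj_sh
/-- shift up -/
noncomputable def sg (P : Type) [CommRing P] {M : Type} [AddCommGroup M] [Module P M] {ι : Type} :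
    (ℕ × ι →₀ M) →ₗ[P] (ℕ × ι →₀ M) := Finsupp.lmapDomain M P (fun p => (p.1 + 1, p.2))
/-- degree on the total object -/
def dT (deg : ι → ℕ) : ℕ × ι → ℕ := fun p => 2 * p.1 + deg p.2

lemma inc_single (l : ℕ) (i : ι) (m : M) : inc P l (single i m) = single (l, i) m := by simp [inc]
lemma pr_apply (l : ℕ) (x : ℕ × ι →₀ M) (i : ι) : pr P l x i = x (l, i) := by simp [pr]
lemma tau_apply (x : ℕ × ι →₀ M) (l : ℕ) (i : ι) : tau P x (l, i) = x (l + 1, i) := by simp [tau]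
lemma sg_single (l : ℕ) (i : ι) (m : M) : sg P (single (l, i) m) = single (l + 1, i) m := by simp [sg]
lemma inc_apply (l : ℕ) (x : ι →₀ M) (i : ι) : inc P l x (l, i) = x i :=
  Finsupp.mapDomain_apply (inj_mk l) x i
lemma inc_apply_ne (l : ℕ) (x : ι →₀ M) (l' : ℕ) (i : ι) (h : l' ≠ l) : inc P l x (l', i) = 0 := by
  refine Finsupp.mapDomain_of_notMem_range x _ ?_
  rintro ⟨j, hj⟩
  exact h (Prod.mk.inj hj).1.symm
lemma sg_apply (x : ℕ × ι →₀ M) (l : ℕ) (i : ι) : sg P x (l + 1, i) = x (l, i) :=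
  Finsupp.mapDomain_apply inj_sh x (l, i)
lemma sg_apply_zero (x : ℕ × ι →₀ M) (i : ι) : sg P x (0, i) = 0 := by
  refine Finsupp.mapDomain_of_notMem_range x _ ?_
  rintro ⟨j, hj⟩
  simp at hj

lemma tau_sg (x : ℕ × ι →₀ M) : tau P (sg P x) = x := by
  ext ⟨l, i⟩; rw [tau_apply, sg_apply]
lemma tau_inc_zero (x : ι →₀ M) : tau P (inc P 0 x) = 0 := by
  ext ⟨l, i⟩; rw [tau_apply, inc_apply_ne _ _ _ _ (by omega)]; rfl
lemma sg_inc (l : ℕ) (x : ι →₀ M) : sg P (inc P l x) = inc P (l + 1) x := by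
  ext ⟨l', i⟩
  cases l' with
  | zero => rw [sg_apply_zero, inc_apply_ne _ _ _ _ (by omega)]
  | succ k =>
    rw [sg_apply]
    by_cases h : k = l
    · subst h; rw [inc_apply, inc_apply]
    · rw [inc_apply_ne _ _ _ _ h, inc_apply_ne _ _ _ _ (by omega)]
lemma tau_inc (l : ℕ) (x : ι →₀ M) : tau P (inc P (l + 1) x) = inc P l x := by
  rw [← sg_inc, tau_sg]
lemma pr_inc (l : ℕ) (x : ι →₀ M) : pr P l (inc P l x) = x := by
  ext i; rw [pr_apply, inc_apply]
lemma pr_inc_ne (l l' : ℕ) (h : l ≠ l') (x : ι →₀ M) : pr P l (inc P l' x) = 0 := by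
  ext i; rw [pr_apply, inc_apply_ne _ _ _ _ h]; rfl
lemma pr_sg (x : ℕ × ι →₀ M) : pr P 0 (sg P x) = 0 := by
  ext i; rw [pr_apply, sg_apply_zero]; rfl
lemma decomp (x : ℕ × ι →₀ M) : x = sg P (tau P x) + inc P 0 (pr P 0 x) := by
  ext ⟨l, i⟩
  rw [Finsupp.add_apply]
  cases l with
  | zero => rw [sg_apply_zero, inc_apply, pr_apply, zero_add]
  | succ k => rw [sg_apply, tau_apply, inc_apply_ne _ _ _ _ (by omega), add_zero]

lemma eq_inc_of_tau {x : ℕ × ι →₀ M} (h : tau P x = 0) : x = inc P 0 (pr P 0 x) := by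
  have := decomp (P := P) x
  rwa [h, map_zero, zero_add] at this

lemma tot_ext {N : Type} [AddCommGroup N] [Module P N] {F G : (ℕ × ι →₀ M) →ₗ[P] N}
    (h : ∀ l i m, F (inc P l (single i m)) = G (inc P l (single i m))) : F = G := by
  refine ext_ext fun ⟨l, i⟩ m => ?_
  rw [← inc_single (P := P)]; exact h l i m

lemma inc_mem {deg : ι → ℕ} (l : ℕ) {n r : ℤ} {x : ι →₀ M} (hx : x ∈ gr P deg n) (h : n + 2 * l = r) :
    inc P l x ∈ gr P (dT deg) r := by
  rw [mem_gr] at *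
  rintro ⟨l', i⟩ hi
  by_cases e : l' = l
  · subst e
    rw [inc_apply] at hi
    have := hx i hi
    simp only [dT]; push_cast; omega
  · exact absurd (inc_apply_ne _ _ _ _ e) hi

lemma pr_mem {deg : ι → ℕ} (l : ℕ) {n r : ℤ} {x : ℕ × ι →₀ M} (hx : x ∈ gr P (dT deg) n) (h : n - 2 * l = r) :
    pr P l x ∈ gr P deg r := by
  rw [mem_gr] at *
  intro i hi
  rw [pr_apply] at hi
  have := hx _ hi
  simp only [dT] at this; push_cast at this; omega

lemma tau_deg {deg : ι → ℕ} : IsDeg (dT deg) (dT deg) (-2) (tau P (M := M)) := by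
  intro n x hx
  rw [mem_gr] at *
  rintro ⟨l, i⟩ hi
  rw [tau_apply] at hi
  have := hx _ hi
  simp only [dT] at *; push_cast at *; omega

lemma sg_deg {deg : ι → ℕ} : IsDeg (dT deg) (dT deg) 2 (sg P (M := M)) := by
  intro n x hx
  rw [mem_gr] at *
  rintro ⟨l, i⟩ hi
  cases l with
  | zero => exact absurd (sg_apply_zero x i) hi
  | succ k =>
    rw [sg_apply] at hi
    have := hx _ hi
    simp only [dT] at *; push_cast at *; omega

/-- S6 -/
lemma hl_tot {deg : ι → ℕ} {d : (ι →₀ M) →ₗ[P] (ι →₀ M)} 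
    {D : (ℕ × ι →₀ M) →ₗ[P] (ℕ × ι →₀ M)} (h : ∀ l x, D (inc P l x) = inc P l (d x)) (n : ℤ) :
    hl (dT deg) D n = hl deg d n + hl (dT deg) D (n - 2) := by
  have ht : ∀ x, tau P (D x) = D (tau P x) := by
    intro x
    have : tau P ∘ₗ D = D ∘ₗ tau P := tot_ext fun l i m => by
      simp only [LinearMap.comp_apply, h]
      cases l with
      | zero => rw [tau_inc_zero, tau_inc_zero, map_zero]
      | succ k => rw [tau_inc, tau_inc, h]
    exact LinearMap.congr_fun this x
  have hs : ∀ x, sg P (D x) = D (sg P x) := by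
    intro x
    have : sg P ∘ₗ D = D ∘ₗ sg P := tot_ext fun l i m => by
      simp only [LinearMap.comp_apply, h, sg_inc]
    exact LinearMap.congr_fun this x
  have hp : ∀ x, pr P 0 (D x) = d (pr P 0 x) := by
    intro x
    have : pr P 0 ∘ₗ D = d ∘ₗ pr P 0 := tot_ext fun l i m => by
      simp only [LinearMap.comp_apply, h]
      cases l with
      | zero => rw [pr_inc, pr_inc]
      | succ k => rw [pr_inc_ne _ _ (by omega), pr_inc_ne _ _ (by omega), map_zero]
    exact LinearMap.congr_fun this x
  refine sq_length_add (inc P 0) (tau P) ?_ ?_ ?_ ?_ ?_ ?_ ?_ ?_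
  · intro z hz
    rw [mem_Zc] at *
    exact ⟨by rw [h, hz.1, map_zero], inc_mem 0 hz.2 (by simp)⟩
  · intro z _ hz
    rw [mem_Bc] at *
    obtain ⟨y, hy, rfl⟩ := hz
    exact ⟨inc P 0 y, inc_mem 0 hy (by simp), h _ _⟩
  · intro z hz
    rw [mem_Zc] at *
    exact ⟨by rw [← ht, hz.1, map_zero], tau_deg.mem hz.2 (by ring)⟩
  · intro z _ hz
    rw [mem_Bc] at *
    obtain ⟨y, hy, rfl⟩ := hz
    exact ⟨tau P y, tau_deg.mem hy (by ring), (ht y).symm⟩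
  · intro z hz hb
    rw [mem_Bc] at *
    obtain ⟨y, hy, e⟩ := hb
    refine ⟨pr P 0 y, pr_mem 0 hy (by simp), ?_⟩
    rw [← hp, e, pr_inc]
  · intro z hz
    rw [mem_Zc] at hz
    refine ⟨sg P z, ?_, ?_⟩
    · rw [mem_Zc]
      exact ⟨by rw [← hs, hz.1, map_zero], sg_deg.mem hz.2 (by ring)⟩
    · rw [tau_sg, sub_self]; exact Submodule.zero_mem _
  · intro z hz
    rw [tau_inc_zero]; exact Submodule.zero_mem _
  · intro z hz hb
    rw [mem_Bc] at hb
    rw [mem_Zc] at hz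
    obtain ⟨y, hy, e⟩ := hb
    refine ⟨pr P 0 (z - D (sg P y)), ?_, ?_⟩
    · rw [mem_Zc]
      constructor
      · rw [← hp, map_sub, hz.1, ← hs, e, ← hs, ← ht, hz.1]; simp
      · rw [map_sub, ← hs, pr_sg, sub_zero]
        exact pr_mem 0 hz.2 (by simp)
    · rw [mem_Bc]
      refine ⟨-(sg P y), Submodule.neg_mem _ (sg_deg.mem hy (by ring)), ?_⟩
      have := decomp (P := P) z
      rw [map_sub, ← hs, pr_sg, sub_zero, map_neg, ← hs, e, eq_sub_iff_add_eq]
      nth_rewrite 2 [this]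
      abel
end tot

section Theta
variable {S : Type} [CommRing S] {ι : Type}

/-- operators on the total object from power series of operators -/
noncomputable def Th (A : PowerSeries (Module.End S (ι →₀ S))) : Module.End S (ℕ × ι →₀ S) :=
  Finsupp.linearCombination S (fun p : ℕ × ι =>
    ∑ q ∈ Finset.HasAntidiagonal.antidiagonal p.1, inc S q.2 (PowerSeries.coeff q.1 A (single p.2 1)))

lemma Th_inc (A : PowerSeries (Module.End S (ι →₀ S))) (n : ℕ) (x : ι →₀ S) :
    Th A (inc S n x) = ∑ q ∈ Finset.HasAntidiagonal.antidiagonal n, inc S q.2 (PowerSeries.coeff q.1 A x) := by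
  induction x using Finsupp.induction_linear with
  | zero => simp
  | add x y hx hy => simp [hx, hy, Finset.sum_add_distrib]
  | single i c =>
    rw [inc_single]
    have : single i c = c • single i (1 : S) := by simp
    rw [this]
    simp only [Th, Finsupp.linearCombination_single, Finset.smul_sum, map_smul]

lemma Th_mul (A B : PowerSeries (Module.End S (ι →₀ S))) : Th (A * B) = Th A * Th B := by
  refine tot_ext fun n i m => ?_
  rw [Module.End.mul_apply, Th_inc, Th_inc, map_sum]
  simp only [Th_inc, PowerSeries.coeff_mul, LinearMap.sum_apply, map_sum, Module.End.mul_apply]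
  rw [Finset.sum_sigma', Finset.sum_sigma']
  apply Finset.sum_nbij' (fun x ↦ ⟨(x.2.2, x.2.1 + x.1.2), (x.2.1, x.1.2)⟩)
    (fun x ↦ ⟨(x.2.1 + x.1.1, x.2.2), (x.2.1, x.1.1)⟩)
  · rintro ⟨⟨a, b⟩, ⟨c, d⟩⟩ h; simp at *; omega
  · rintro ⟨⟨a, b⟩, ⟨c, d⟩⟩ h; simp at *; omega
  · rintro ⟨⟨a, b⟩, ⟨c, d⟩⟩ h; simp at *; obtain ⟨h1, h2⟩ := h; subst h2; simp
  · rintro ⟨⟨a, b⟩, ⟨c, d⟩⟩ h; simp at *; obtain ⟨h1, h2⟩ := h; subst h2; simp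
  · rintro ⟨⟨a, b⟩, ⟨c, d⟩⟩ h; rfl

lemma Th_tau (A : PowerSeries (Module.End S (ι →₀ S))) (x : ℕ × ι →₀ S) :
    tau S (Th A x) = Th A (tau S x) := by
  have : tau S ∘ₗ Th A = Th A ∘ₗ tau S := tot_ext fun n i m => by
    simp only [LinearMap.comp_apply]
    rw [Th_inc]
    cases n with
    | zero => simp [tau_inc_zero]
    | succ n =>
      rw [Finset.Nat.sum_antidiagonal_succ', tau_inc, Th_inc]
      simp [tau_inc_zero, tau_inc]
  exact LinearMap.congr_fun this x

lemma Th_fX (f : S) (x : ℕ × ι →₀ S) :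
    Th (PowerSeries.C (f • (1 : Module.End S (ι →₀ S))) * PowerSeries.X) x = f • tau S x := by
  have : Th (PowerSeries.C (f • (1 : Module.End S (ι →₀ S))) * PowerSeries.X) = f • tau S :=
    tot_ext fun n i m => by
    generalize single i m = y
    rw [Th_inc]
    cases n with
    | zero => simp [tau_inc_zero]
    | succ n =>
      rw [LinearMap.smul_apply, tau_inc, Finset.Nat.sum_antidiagonal_succ]
      simp only [PowerSeries.coeff_C_mul, PowerSeries.coeff_X]
      cases n with
      | zero => simp
      | succ n => 
        rw [Finset.Nat.sum_antidiagonal_succ]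
        simp
  rw [this]; rfl

lemma Th_deg {deg : ι → ℕ} {A : PowerSeries (Module.End S (ι →₀ S))} {p : ℤ}
    (h : ∀ j : ℕ, IsDeg deg deg (2 * j + p) (PowerSeries.coeff j A)) : IsDeg (dT deg) (dT deg) p (Th A) := by
  rw [isDeg_iff]
  rintro ⟨n, i⟩ m
  rw [← inc_single (P := S), Th_inc]
  refine Submodule.sum_mem _ fun q hq => ?_
  refine inc_mem q.2 ((h q.1) _ _ (single_mem_gr i m)) ?_
  have := Finset.HasAntidiagonal.mem_antidiagonal.1 hq
  simp only [dT]; push_cast; rw [← this]; push_cast; ring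

/-- the extension of the total operator when positive coefficients act as zero -/
lemma ext_Th {P M : Type} [CommRing P] [AddCommGroup M] [Module S M] [Module P M] [SMulCommClass S P M]
    (A : PowerSeries (Module.End S (ι →₀ S))) 
    (h : ∀ n : ℕ, n ≠ 0 → ∀ i j (m : M), PowerSeries.coeff n A (single i 1) j • m = 0) (l : ℕ) (x : ι →₀ M) :
    ext P M (Th A) (inc P l x) = inc P l (ext P M (PowerSeries.coeff 0 A) x) := by
  have key : ∀ (l : ℕ) (y : ι →₀ S) (m : M), tm m (inc S l y) = inc P l (tm m y) := by
    intro l y m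
    ext ⟨l', i⟩
    rw [tm_apply]
    by_cases e : l' = l
    · subst e; rw [inc_apply, inc_apply, tm_apply]
    · rw [inc_apply_ne _ _ _ _ e, inc_apply_ne _ _ _ _ e, zero_smul]
  induction x using Finsupp.induction_linear with
  | zero => simp
  | add x y hx hy => simp [hx, hy]
  | single i m =>
    rw [inc_single, ext_single, ext_single, ← inc_single (P := S), Th_inc, map_sum,
      Finset.sum_eq_single (0, l)]
    · exact key _ _ _
    · rintro ⟨j, l'⟩ hj hne
      rw [Finset.HasAntidiagonal.mem_antidiagonal] at hj
      rw [key]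
      have : tm m (PowerSeries.coeff j A (single i 1)) = 0 := by
        ext k
        rw [tm_apply]
        refine h j ?_ _ _ _
        rintro rfl
        apply hne
        simp at hj
        rw [hj]
      rw [this, map_zero]
    · intro h
      simp at h

end Theta
end EZ

namespace EZ
open Finsupp

section res
variable {S : Type} [CommRing S] [IsLocalRing S]

/-- free resolutions of the residue field -/
structure Res {ι : Type} (deg : ι → ℕ) (d : (ι →₀ S) →ₗ[S] (ι →₀ S)) (i0 : ι) : Prop where
  hd : IsDeg deg deg (-1) d
  dd : d ∘ₗ d = 0
  deg0 : ∀ i, deg i = 0 ↔ i = i0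
  exact : ∀ n : ℤ, n ≠ 0 → ∀ x ∈ gr S deg n, d x = 0 → ∃ y ∈ gr S deg (n + 1), d y = x
  surj : ∀ c ∈ IsLocalRing.maximalIdeal S, ∃ y ∈ gr S deg 1, d y = single i0 c
  min0 : ∀ x, d x i0 ∈ IsLocalRing.maximalIdeal S
  fin : ∀ n, {i | deg i = n}.Finite

lemma exists_fin_gen [IsNoetherianRing S] {a : ℕ} (K : Submodule S (Fin a →₀ S)) :
    ∃ b : ℕ, ∃ F : (Fin b →₀ S) →ₗ[S] (Fin a →₀ S), LinearMap.range F = K := by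
  have hK : K.FG := IsNoetherian.noetherian K
  obtain ⟨n, s, hs⟩ := Submodule.fg_iff_exists_fin_generating_family.1 hK
  exact ⟨n, Finsupp.linearCombination S s, by rw [Finsupp.range_linearCombination, hs]⟩

lemma exists_seq_res [IsNoetherianRing S] :
    ∃ c : ℕ → ℕ, ∃ F : ∀ n, (Fin (c (n + 1)) →₀ S) →ₗ[S] (Fin (c n) →₀ S), c 0 = 1 ∧
      (∀ x, x ∈ LinearMap.range (F 0) ↔ ∀ i, x i ∈ IsLocalRing.maximalIdeal S) ∧
      ∀ n, LinearMap.range (F (n + 1)) = LinearMap.ker (F n) := by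
  let K0 : Submodule S (Fin 1 →₀ S) :=
    { carrier := {x | ∀ i, x i ∈ IsLocalRing.maximalIdeal S}
      add_mem' := fun ha hb i => Ideal.add_mem _ (ha i) (hb i)
      zero_mem' := fun i => Ideal.zero_mem _
      smul_mem' := fun c x hx i => Ideal.mul_mem_left _ _ (hx i) }
  obtain ⟨b0, F0, hF0⟩ := exists_fin_gen K0
  have nx : ∀ s : (Σ a : ℕ, Σ b : ℕ, ((Fin b →₀ S) →ₗ[S] (Fin a →₀ S))),
      ∃ b' : ℕ, ∃ F : (Fin b' →₀ S) →ₗ[S] (Fin s.2.1 →₀ S), LinearMap.range F = LinearMap.ker s.2.2 :=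
    fun s => exists_fin_gen _
  choose nb nF hn using nx
  let st : ℕ → (Σ a : ℕ, Σ b : ℕ, ((Fin b →₀ S) →ₗ[S] (Fin a →₀ S))) := fun n =>
    Nat.rec ⟨1, b0, F0⟩ (fun _ s => ⟨s.2.1, nb s, nF s⟩) n
  refine ⟨fun n => (st n).1, fun n => (st n).2.2, rfl, ?_, fun n => hn (st n)⟩
  intro x
  change x ∈ LinearMap.range F0 ↔ _
  rw [hF0]; rfl

lemma exists_res [IsNoetherianRing S] :
    ∃ (ι : Type) (deg : ι → ℕ) (d : (ι →₀ S) →ₗ[S] (ι →₀ S)) (i0 : ι), Res deg d i0 := by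
  obtain ⟨c, F, hc, hF0, hF⟩ := exists_seq_res (S := S)
  have inj : ∀ n, Function.Injective (@Sigma.mk ℕ (fun n => Fin (c n)) n) :=
    fun n => sigma_mk_injective
  let J : ∀ n, (Fin (c n) →₀ S) →ₗ[S] ((Σ n, Fin (c n)) →₀ S) := fun n =>
    Finsupp.lmapDomain S S (@Sigma.mk ℕ (fun n => Fin (c n)) n)
  let deg : (Σ n, Fin (c n)) → ℕ := Sigma.fst
  let v : (Σ n, Fin (c n)) → ((Σ n, Fin (c n)) →₀ S) := fun p =>
    match p with
    | ⟨0, _⟩ => 0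
    | ⟨n + 1, j⟩ => J n (F n (single j 1))
  let d : ((Σ n, Fin (c n)) →₀ S) →ₗ[S] ((Σ n, Fin (c n)) →₀ S) := Finsupp.linearCombination S v
  have Jap : ∀ n x j, J n x ⟨n, j⟩ = x j := fun n x j => Finsupp.mapDomain_apply (inj n) x j
  have Jinj : ∀ n, Function.Injective (J n) := fun n => Finsupp.mapDomain_injective (inj n)
  have Jsurj : ∀ (n : ℕ) (x : (Σ n, Fin (c n)) →₀ S), x ∈ gr S deg n → ∃ y, x = J n y := by
    intro n x hx
    refine ⟨Finsupp.comapDomain (@Sigma.mk ℕ (fun n => Fin (c n)) n) x (inj n).injOn, ?_⟩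
    rw [mem_gr] at hx
    exact (Finsupp.mapDomain_comapDomain _ (inj n) x (by
      rintro ⟨k, j⟩ hk
      have := hx _ (Finsupp.mem_support_iff.1 hk)
      have h2 : k = n := by exact_mod_cast this
      subst h2
      exact ⟨j, rfl⟩)).symm
  have Jgr : ∀ (n : ℕ) x, J n x ∈ gr S deg n := by
    intro n x
    rw [mem_gr]
    intro p hp
    by_contra h
    refine hp (Finsupp.mapDomain_of_notMem_range x _ ?_)
    rintro ⟨j, rfl⟩
    exact h rfl
  have d0 : ∀ x, d (J 0 x) = 0 := by
    intro x
    have : d ∘ₗ J 0 = 0 := by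
      ext1 j; ext1; simp [d, J, v]
    exact LinearMap.congr_fun this x
  have ds : ∀ n x, d (J (n + 1) x) = J n (F n x) := by
    intro n x
    have : d ∘ₗ J (n + 1) = J n ∘ₗ F n := by
      ext1 j; ext1; simp [d, J, v]
    exact LinearMap.congr_fun this x
  have hFF : ∀ n x, F n (F (n + 1) x) = 0 := by
    intro n x
    have : F (n + 1) x ∈ LinearMap.ker (F n) := by rw [← hF]; exact ⟨x, rfl⟩
    exact this
  have hs : ∀ p : (Σ n, Fin (c n)), single p (1 : S) = J p.1 (single p.2 1) := by
    rintro ⟨n, j⟩; simp [J]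
  have u : Unique (Fin (c 0)) := by rw [hc]; infer_instance
  have hmin : ∀ x j, d x ⟨0, j⟩ ∈ IsLocalRing.maximalIdeal S := by
    intro x j
    have key : ∀ p, d (single p (1 : S)) ⟨0, j⟩ ∈ IsLocalRing.maximalIdeal S := by
      intro p
      rw [hs]
      match p with
      | ⟨0, k⟩ => simp only; rw [d0]; exact Ideal.zero_mem _
      | ⟨1, k⟩ =>
        simp only
        rw [ds, Jap]
        exact (hF0 _).1 ⟨_, rfl⟩ j
      | ⟨n + 2, k⟩ =>
        simp only
        rw [ds, Finsupp.notMem_support_iff.1]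
        · exact Ideal.zero_mem _
        · intro h
          have := mem_gr.1 (Jgr (n + 1) (F (n + 1) (single k 1))) _ (Finsupp.mem_support_iff.1 h)
          simp [deg] at this
          omega
    induction x using Finsupp.induction_linear with
    | zero => simp
    | add x y hx hy => rw [map_add, Finsupp.add_apply]; exact Ideal.add_mem _ hx hy
    | single p a =>
      have : single p a = a • single p (1 : S) := by simp
      rw [this, map_smul, Finsupp.smul_apply]
      exact Ideal.mul_mem_left _ _ (key p)
  refine ⟨_, deg, d, ⟨0, default⟩, ?_, ?_, ?_, ?_, ?_, ?_, ?_⟩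
  · rw [isDeg_iff_one]
    rintro ⟨n, j⟩
    rw [hs]
    cases n with
    | zero => simp only; rw [d0]; exact Submodule.zero_mem _
    | succ n =>
      simp only
      rw [ds]
      convert Jgr n _ using 2
      simp [deg]
  · ext1 p; ext1
    simp only [LinearMap.comp_apply, lsingle_apply]
    rw [hs]
    match p with
    | ⟨0, k⟩ => simp only; rw [d0]; simp
    | ⟨1, k⟩ => simp only; rw [ds, d0]; rfl
    | ⟨n + 2, k⟩ => simp only; rw [ds, ds, hFF]; simp
  · rintro ⟨n, j⟩
    constructor
    · intro h
      change n = 0 at h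
      subst h
      rw [Subsingleton.elim j default]
    · intro h; rw [h]
  · intro n hn x hx h0
    rcases lt_or_ge n 0 with hlt | hge
    · rw [gr_neg hlt hx]
      exact ⟨0, Submodule.zero_mem _, map_zero _⟩
    · obtain ⟨k, rfl⟩ : ∃ k : ℕ, n = (k + 1 : ℕ) := ⟨(n - 1).toNat, by omega⟩
      obtain ⟨y, rfl⟩ := Jsurj _ _ hx
      rw [ds] at h0
      have h1 : F k y = 0 := Jinj k (by rw [h0, map_zero])
      have h2 : y ∈ LinearMap.range (F (k + 1)) := by rw [hF]; exact h1
      obtain ⟨z, rfl⟩ := h2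
      exact ⟨J (k + 2) z, by have := Jgr (k + 2) z; push_cast at *; convert this using 1; ring_nf, ds _ _⟩
  · intro a ha
    have : single (default : Fin (c 0)) a ∈ LinearMap.range (F 0) := by
      rw [hF0]
      intro i
      rw [Subsingleton.elim i default, Finsupp.single_eq_same]; exact ha
    obtain ⟨z, hz⟩ := this
    refine ⟨J 1 z, Jgr 1 z, ?_⟩
    rw [ds, hz]
    simp [J]
  · intro x; exact hmin x _
  · intro n
    refine Set.Finite.subset (Set.finite_range (@Sigma.mk ℕ (fun n => Fin (c n)) n)) ?_
    rintro ⟨k, j⟩ h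
    change k = n at h
    subst h
    exact ⟨j, rfl⟩

variable {ι : Type} {deg : ι → ℕ} {d : (ι →₀ S) →ₗ[S] (ι →₀ S)} {i0 : ι}

lemma Res.gr0 (h : Res deg d i0) {x : ι →₀ S} (hx : x ∈ gr S deg 0) : x = single i0 (x i0) := by
  classical
  ext i
  rw [Finsupp.single_apply]
  split_ifs with e
  · rw [e]
  · by_contra hne
    have := mem_gr.1 hx i hne
    exact e ((h.deg0 i).1 (by exact_mod_cast this)).symm

/-- exactness in all degrees given smallness of the augmentation -/
lemma Res.exact' (h : Res deg d i0) (n : ℤ) (x : ι →₀ S) (hx : x ∈ gr S deg n) (h0 : d x = 0)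
    (hm : n = 0 → x i0 ∈ IsLocalRing.maximalIdeal S) : ∃ y ∈ gr S deg (n + 1), d y = x := by
  by_cases hn : n = 0
  · subst hn
    obtain ⟨y, hy, e⟩ := h.surj _ (hm rfl)
    refine ⟨y, by simpa using hy, ?_⟩
    rw [e, ← h.gr0 hx]
  · exact h.exact n hn x hx h0

lemma Res.dd' (h : Res deg d i0) (x : ι →₀ S) : d (d x) = 0 := LinearMap.congr_fun h.dd x

lemma Res.degi0 (h : Res deg d i0) : deg i0 = 0 := (h.deg0 i0).2 rfl

open Classical in
/-- `F[z]` -/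
lemma Res.evc (h : Res deg d i0) :
    ∃ ε, EvC (dT deg) (Th (PowerSeries.C (d : Module.End S (ι →₀ S)))) ε := by
  have hD : ∀ n x, Th (PowerSeries.C (d : Module.End S (ι →₀ S))) (inc S n x) = inc S n (d x) := by
    intro n x
    rw [Th_inc]
    cases n with
    | zero => simp
    | succ n =>
      rw [Finset.Nat.sum_antidiagonal_succ]
      simp [PowerSeries.coeff_C]
  set D := Th (PowerSeries.C (d : Module.End S (ι →₀ S))) with hDdef
  let ε : (ℕ × ι →₀ S) →ₗ[S] S := Finsupp.linearCombination S (fun p => if p.2 = i0 then 1 else 0)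
  have hε : ∀ l x, ε (inc S l x) = x i0 := by
    intro l x
    have : ε ∘ₗ inc S l = Finsupp.lapply i0 := by
      ext1 i; ext1
      simp only [LinearMap.comp_apply, lsingle_apply, inc_single]
      simp [ε, Finsupp.single_apply]
    exact LinearMap.congr_fun this x
  have hp : ∀ l x, pr S l (D x) = d (pr S l x) := by
    intro l x
    have : pr S l ∘ₗ D = d ∘ₗ pr S l := tot_ext fun l' i m => by
      simp only [LinearMap.comp_apply, hD]
      by_cases e : l = l'
      · subst e; rw [pr_inc, pr_inc]
      · rw [pr_inc_ne _ _ e, pr_inc_ne _ _ e, map_zero]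
    exact LinearMap.congr_fun this x
  have hsum : ∀ x : ℕ × ι →₀ S, ∃ N : ℕ, x = ∑ l ∈ Finset.range N, inc S l (pr S l x) := by
    intro x
    refine ⟨(x.support.sup Prod.fst) + 1, ?_⟩
    ext ⟨l, i⟩
    rw [Finsupp.finsetSum_apply]
    by_cases hl : l ∈ Finset.range ((x.support.sup Prod.fst) + 1)
    · rw [Finset.sum_eq_single_of_mem l hl]
      · rw [inc_apply, pr_apply]
      · intro b _ hb
        exact inc_apply_ne _ _ _ _ hb.symm
    · rw [Finset.sum_eq_zero]
      · by_contra hne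
        apply hl
        have := Finset.le_sup (f := Prod.fst) (Finsupp.mem_support_iff.2 hne)
        simp only [Finset.mem_range]; simp only at this; omega
      · intro b hb
        refine inc_apply_ne _ _ _ _ ?_
        rintro rfl; exact hl hb
  refine ⟨ε, ?_, ?_, ?_, ?_, ?_, ?_⟩
  · apply Th_deg
    intro j
    rw [PowerSeries.coeff_C]
    split_ifs with hj
    · subst hj; simpa using h.hd
    · exact isDeg_zero
  · refine tot_ext fun l i m => ?_
    simp only [LinearMap.comp_apply, hD, h.dd']; simp
  · intro n hn x hx
    refine eq_of_lower (deg := dT deg) (h := ε) (h' := 0) (n := n) ?_ hx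
    rintro ⟨l, i⟩ hj
    rw [← inc_single (P := S), hε, LinearMap.zero_apply, Finsupp.single_apply]
    split_ifs with e
    · exfalso; apply hn
      subst e
      rw [← hj]; simp [dT, h.degi0]
    · rfl
  · intro x
    obtain ⟨N, e⟩ := hsum x
    rw [e, map_sum, map_sum]
    refine Ideal.sum_mem _ fun l _ => ?_
    rw [hD, hε]; exact h.min0 _
  · intro n x hx h0 hm
    obtain ⟨N, e⟩ := hsum x
    have key : ∀ l : ℕ, ∃ y ∈ gr S deg (n - 2 * l + 1), d y = pr S l x := by
      intro l
      refine h.exact' _ _ (pr_mem l hx rfl) (by rw [← hp, h0, map_zero]) ?_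
      intro hn
      have : ε x = pr S l x i0 := by
        rw [pr_apply]
        have e1 := eq_of_lower (deg := dT deg) (h := ε) (h' := Finsupp.lapply (l, i0)) (n := n) ?_ hx
        · rw [e1]; rfl
        rintro ⟨l', i⟩ hj
        rw [← inc_single (P := S), hε, inc_single, Finsupp.lapply_apply, Finsupp.single_apply, Finsupp.single_apply]
        by_cases e : i = i0
        · subst e
          have : l' = l := by simp [dT, h.degi0] at hj; omega
          rw [this]; simp
        · simp [e]
      rwa [← this]
    choose y hy hy2 using key
    refine ⟨∑ l ∈ Finset.range N, inc S l (y l), ?_, ?_⟩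
    · exact Submodule.sum_mem _ fun l _ => inc_mem l (hy l) (by ring)
    · rw [map_sum]
      simp only [hD, hy2]
      exact e.symm
  · intro n hn
    obtain ⟨k, hk⟩ := hn
    obtain ⟨k, rfl⟩ : ∃ j : ℕ, k = j := ⟨k.toNat, by omega⟩
    refine ⟨inc S k (single i0 1), ?_, ?_, ?_⟩
    · exact inc_mem k (single_mem_gr i0 1) (by rw [h.degi0, hk]; simp; ring)
    · rw [hD]
      have : d (single i0 1) = 0 := gr_neg (by norm_num) (h.hd.mem (single_mem_gr i0 1) (r := -1) (by rw [h.degi0]; simp))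
      rw [this, map_zero]
    · rw [hε, Finsupp.single_eq_same]

end res
end EZ

namespace EZ
open Finsupp
set_option linter.unusedSectionVars false

section ps
variable {E : Type} [Ring E]
open PowerSeries

lemma coeff_mul_of_low {A U : PowerSeries E} {n : ℕ} (h : ∀ m < n, coeff m U = 0) :
    coeff n (A * U) = coeff 0 A * coeff n U := by
  rw [coeff_mul, Finset.sum_eq_single (0, n)]
  · rintro ⟨a, b⟩ hab hne
    rw [Finset.HasAntidiagonal.mem_antidiagonal] at hab
    simp only at hab ⊢
    rw [h b, mul_zero]
    by_contra hb
    have : a = 0 := by omega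
    subst this
    apply hne
    simp at hab; rw [hab]
  · simp

lemma coeff_mul_of_low' {A U : PowerSeries E} {n : ℕ} (h : ∀ m < n, coeff m U = 0) :
    coeff n (U * A) = coeff n U * coeff 0 A := by
  rw [coeff_mul, Finset.sum_eq_single (n, 0)]
  · rintro ⟨a, b⟩ hab hne
    rw [Finset.HasAntidiagonal.mem_antidiagonal] at hab
    simp only at hab ⊢
    rw [h a, zero_mul]
    by_contra hb
    have : b = 0 := by omega
    subst this
    apply hne
    simp at hab; rw [hab]
  · simp

lemma comm_low {B L : PowerSeries E} {n : ℕ} (hL : B * L = L * B) (h : ∀ m < n, coeff m (B * B - L) = 0) :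
    coeff 0 B * coeff n (B * B - L) = coeff n (B * B - L) * coeff 0 B := by
  rw [← coeff_mul_of_low h, ← coeff_mul_of_low' h, mul_sub, sub_mul, hL, mul_assoc]

lemma corr {E' : Type} [Ring E'] (cst : E →+* E') (be : E' →+* E) (hcc : ∀ a, cst (be a) = a)
    (k u : E) (d' : E') (hk : be d' * k + k * be d' = -u) (hu : cst u = 0) :
    cst (k - be (cst k)) = 0 ∧ be d' * (k - be (cst k)) + (k - be (cst k)) * be d' = -u := by
  have hk3 : d' * cst k + cst k * d' = 0 := by
    have := congrArg cst hk
    rw [map_add, map_mul, map_mul, map_neg, hu, hcc, neg_zero] at this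
    exact this
  refine ⟨by rw [map_sub, hcc, sub_self], ?_⟩
  have := congrArg be hk3
  rw [map_add, map_mul, map_mul, map_zero] at this
  rw [mul_sub, sub_mul, sub_add_sub_comm, hk, this, sub_zero]

lemma low_monomial (n : ℕ) (b : E) : ∀ m < n + 1, coeff m (monomial (n + 1) b) = 0 := by
  intro m hm
  rw [coeff_monomial, if_neg (by omega)]

lemma coeff_add_mono {B : PowerSeries E} {n : ℕ} (hlow : ∀ m > n, coeff m B = 0) (b : E) :
    coeff (n + 1) (B + monomial (n + 1) b) = b := by
  rw [map_add, hlow _ (by omega), zero_add, coeff_monomial_same]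

lemma step_sq {B L : PowerSeries E} {n : ℕ} {b b0 : E} (hB0 : coeff 0 B = b0)
    (hb : b0 * b + b * b0 = -coeff (n + 1) (B * B - L)) :
    coeff (n + 1) ((B + monomial (n + 1) b) * (B + monomial (n + 1) b)) = coeff (n + 1) L := by
  have hmono := low_monomial n b
  rw [mul_add, map_add, coeff_mul_of_low hmono, add_mul, map_add, coeff_mul_of_low' hmono, map_add,
    coeff_monomial_same, hB0, hmono 0 (by omega), add_zero]
  rw [map_sub] at hb
  rw [add_assoc, add_comm (b * b0), hb]; abel

lemma coeff_mul_congr {A A' B B' : PowerSeries E} {n : ℕ} (h : ∀ m ≤ n, coeff m A = coeff m A')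
    (h' : ∀ m ≤ n, coeff m B = coeff m B') : coeff n (A * B) = coeff n (A' * B') := by
  rw [coeff_mul, coeff_mul]
  refine Finset.sum_congr rfl ?_
  rintro ⟨a, b⟩ hab
  rw [Finset.HasAntidiagonal.mem_antidiagonal] at hab
  simp only at hab ⊢
  rw [h a (by omega), h' b (by omega)]

lemma exists_ps (b0 : E) (G : ℕ → PowerSeries E → Prop)
    (hG : ∀ n B B', (∀ m ≤ n, coeff m B = coeff m B') → G n B → G n B')
    (h0 : G 0 (C b0))
    (step : ∀ n B, coeff 0 B = b0 → (∀ m ≤ n, G m B) → (∀ m > n, coeff m B = 0) →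
      ∃ b, G (n + 1) (B + monomial (n + 1) b)) :
    ∃ B, coeff 0 B = b0 ∧ ∀ n, G n B := by
  choose nx hnx using step
  let T : ℕ → Type := fun n => {B : PowerSeries E // coeff 0 B = b0 ∧ (∀ m ≤ n, G m B) ∧ (∀ m > n, coeff m B = 0)}
  let s : ∀ n, T n := fun n => Nat.rec
    (⟨C b0, by simp, fun m hm => by
      have : m = 0 := by omega
      subst this; exact h0, fun m hm => by rw [coeff_C, if_neg (by omega)]⟩ : T 0)
    (fun n B => (⟨B.1 + monomial (n + 1) (nx n B.1 B.2.1 B.2.2.1 B.2.2.2), by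
        rw [map_add, coeff_monomial, if_neg (by omega), add_zero]; exact B.2.1, fun m hm => by
        rcases Nat.lt_or_ge n m with h | h
        · have : m = n + 1 := by omega
          subst this
          exact hnx n B.1 B.2.1 B.2.2.1 B.2.2.2
        · refine hG m B.1 _ (fun k hk => ?_) (B.2.2.1 m h)
          rw [map_add, coeff_monomial, if_neg (by omega), add_zero], fun m hm => by
        rw [map_add, B.2.2.2 m (by omega), coeff_monomial, if_neg (by omega), add_zero]⟩ : T (n + 1))) n
  have hs : ∀ n m, m ≤ n → coeff m (s (n + 1)).1 = coeff m (s n).1 := by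
    intro n m hm
    change coeff m ((s n).1 + monomial (n + 1) _) = _
    rw [map_add, coeff_monomial, if_neg (by omega), add_zero]
  have hs' : ∀ k m, coeff m (s (m + k)).1 = coeff m (s m).1 := by
    intro k m
    induction k with
    | zero => rfl
    | succ k ih => rw [← add_assoc, hs _ _ (by omega), ih]
  refine ⟨PowerSeries.mk fun n => coeff n (s n).1, ?_, ?_⟩
  · rw [coeff_mk]; exact (s 0).2.1
  · intro n
    refine hG n (s n).1 _ (fun m hm => ?_) ((s n).2.2.1 n le_rfl)
    rw [coeff_mk]
    obtain ⟨k, rfl⟩ := Nat.exists_eq_add_of_le hm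
    exact hs' k m
end ps

section bchom
variable {P Q : Type} [CommRing P] [CommRing Q] {ι : Type}

/-- base change along a ring hom -/
noncomputable def bcHom (θ : P →+* Q) (ι : Type) : Module.End P (ι →₀ P) →+* Module.End Q (ι →₀ Q) :=
  let := θ.toAlgebra
  bc Q ι

lemma bcHom_single (θ : P →+* Q) (A : Module.End P (ι →₀ P)) (i j : ι) :
    bcHom θ ι A (single i 1) j = θ (A (single i 1) j) := by
  let := θ.toAlgebra
  change ext Q Q A (single i 1) j = _
  rw [ext_single, tm_apply, Algebra.smul_def, mul_one]
  rfl

lemma end_ext {A B : Module.End Q (ι →₀ Q)} (h : ∀ i j, A (single i 1) j = B (single i 1) j) : A = B := by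
  ext1 i; ext1; ext j; exact h i j

lemma bcHom_bcHom (θ : P →+* Q) (η : Q →+* P) (h : ∀ q, θ (η q) = q) (A : Module.End Q (ι →₀ Q)) :
    bcHom θ ι (bcHom η ι A) = A := by
  refine end_ext fun i j => ?_
  rw [bcHom_single, bcHom_single, h]

lemma bcHom_smul_one (θ : P →+* Q) (c : P) : bcHom θ ι (c • 1) = θ c • 1 := by
  classical
  refine end_ext fun i j => ?_
  rw [bcHom_single]
  simp only [LinearMap.smul_apply, Module.End.one_apply, Finsupp.smul_apply, Finsupp.single_apply, smul_eq_mul]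
  split_ifs <;> simp

lemma bcHom_deg (θ : P →+* Q) {deg : ι → ℕ} {p : ℤ} {A : Module.End P (ι →₀ P)} (h : IsDeg deg deg p A) :
    IsDeg deg deg p (bcHom θ ι A) := by
  let := θ.toAlgebra
  exact isDeg_ext h

end bchom

section S2
variable {Q : Type} [CommRing Q] [IsLocalRing Q] {ι : Type} {deg : ι → ℕ} {d : (ι →₀ Q) →ₗ[Q] (ι →₀ Q)} {i0 : ι}
variable {σ : Type}

/-- coefficient vectors -/
noncomputable def cf (ν : σ →₀ ℕ) : (ι →₀ MvPolynomial σ Q) →ₗ[Q] (ι →₀ Q) :=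
  Finsupp.mapRange.linearMap (MvPolynomial.lcoeff Q ν)

lemma cf_apply (ν : σ →₀ ℕ) (x : ι →₀ MvPolynomial σ Q) (i : ι) : cf ν x i = MvPolynomial.coeff ν (x i) := by
  simp [cf]

/-- `d` over the polynomial ring -/
noncomputable abbrev dP (σ : Type) (d : (ι →₀ Q) →ₗ[Q] (ι →₀ Q)) : Module.End (MvPolynomial σ Q) (ι →₀ MvPolynomial σ Q) :=
  bcHom (MvPolynomial.C : Q →+* MvPolynomial σ Q) ι d

lemma dP_apply (x : ι →₀ MvPolynomial σ Q) : dP σ d x = ext (MvPolynomial σ Q) (MvPolynomial σ Q) d x := by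
  have : dP σ d = ext (MvPolynomial σ Q) (MvPolynomial σ Q) d := by
    refine end_ext fun i j => ?_
    rw [bcHom_single, ext_single, tm_apply, Algebra.smul_def, mul_one]; rfl
  rw [this]

lemma cf_dP (ν : σ →₀ ℕ) (x : ι →₀ MvPolynomial σ Q) : cf ν (dP σ d x) = d (cf ν x) := by
  rw [dP_apply]
  induction x using Finsupp.induction_linear with
  | zero => simp
  | add x y hx hy => simp only [map_add, hx, hy]
  | single i p =>
    rw [ext_single]
    have : cf ν (single i p) = MvPolynomial.coeff ν p • single i (1 : Q) := by simp [cf]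
    rw [this, map_smul]
    ext j
    rw [cf_apply, tm_apply, MvPolynomial.coeff_smul, Finsupp.smul_apply, smul_eq_mul, smul_eq_mul, mul_comm]

lemma exactP (h : Res deg d i0) (n : ℤ) (x : ι →₀ MvPolynomial σ Q) (hx : x ∈ gr (MvPolynomial σ Q) deg n)
    (h0 : dP σ d x = 0) (hm : n = 0 → ∀ ν, MvPolynomial.coeff ν (x i0) ∈ IsLocalRing.maximalIdeal Q) :
    ∃ y ∈ gr (MvPolynomial σ Q) deg (n + 1), dP σ d y = x := by
  classical
  have key : ∀ ν, ∃ y ∈ gr Q deg (n + 1), d y = cf ν x := by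
    intro ν
    refine h.exact' n _ ?_ ?_ ?_
    · rw [mem_gr] at *
      intro i hi
      refine hx i fun e => hi ?_
      rw [cf_apply, e, MvPolynomial.coeff_zero]
    · rw [← cf_dP, h0, map_zero]
    · intro hn; rw [cf_apply]; exact hm hn ν
  choose y hy hy2 using key
  let s : Finset (σ →₀ ℕ) := x.support.biUnion fun i => (x i).support
  refine ⟨∑ ν ∈ s, MvPolynomial.monomial ν (1 : Q) • bv (MvPolynomial σ Q) (y ν), ?_, ?_⟩
  · exact Submodule.sum_mem _ fun ν _ => Submodule.smul_mem _ _ (gr_tm (hy ν) _)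
  · rw [map_sum]
    simp only [map_smul, dP_apply, ext_bv, hy2]
    ext1 i
    rw [Finsupp.finsetSum_apply]
    simp only [Finsupp.smul_apply, bv_apply, cf_apply, smul_eq_mul]
    conv_rhs => rw [MvPolynomial.as_sum (x i)]
    have : ∀ ν, MvPolynomial.monomial ν (1 : Q) * algebraMap Q (MvPolynomial σ Q) (MvPolynomial.coeff ν (x i)) =
        MvPolynomial.monomial ν (MvPolynomial.coeff ν (x i)) := by
      intro ν
      rw [MvPolynomial.algebraMap_eq, mul_comm, MvPolynomial.C_mul_monomial, mul_one]
    simp only [this]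
    symm
    apply Finset.sum_subset
    · intro ν hν
      rw [Finset.mem_biUnion]
      refine ⟨i, ?_, hν⟩
      rw [Finsupp.mem_support_iff]
      intro e
      rw [e] at hν
      simp at hν
    · intro ν _ hν
      rw [MvPolynomial.notMem_support_iff.1 hν]; simp

open PowerSeries in
lemma exists_B (h : Res deg d i0) (ell : MvPolynomial σ Q) (hl : ∀ ν, MvPolynomial.coeff ν ell ∈ IsLocalRing.maximalIdeal Q)
    (hl0 : MvPolynomial.constantCoeff ell = 0) :
    ∃ B : PowerSeries (Module.End (MvPolynomial σ Q) (ι →₀ MvPolynomial σ Q)),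
      coeff 0 B = dP σ d ∧ (∀ n : ℕ, IsDeg deg deg (2 * n - 1) (coeff n B)) ∧
      (∀ n ≠ 0, bcHom (MvPolynomial.constantCoeff) ι (coeff n B) = 0) ∧
      B * B = C (ell • 1) * X := by
  have hdP : IsDeg deg deg (-1) (dP σ d) := bcHom_deg _ h.hd
  have hddP : dP σ d * dP σ d = 0 := by
    rw [← map_mul, show (d : Module.End Q (ι →₀ Q)) * d = 0 from h.dd, map_zero]
  have hcc : ∀ A : Module.End Q (ι →₀ Q), bcHom (MvPolynomial.constantCoeff : MvPolynomial σ Q →+* Q) ι (bcHom MvPolynomial.C ι A) = A :=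
    fun A => bcHom_bcHom _ _ (fun q => by simp) A
  set cst := bcHom (MvPolynomial.constantCoeff : MvPolynomial σ Q →+* Q) ι with hcst
  suffices hs : ∃ B : PowerSeries (Module.End (MvPolynomial σ Q) (ι →₀ MvPolynomial σ Q)), coeff 0 B = dP σ d ∧
      ∀ n : ℕ, IsDeg deg deg (2 * n - 1) (coeff n B) ∧
      (n ≠ 0 → cst (coeff n B) = 0) ∧
      coeff n (B * B) = coeff n (C (ell • (1 : Module.End (MvPolynomial σ Q) (ι →₀ MvPolynomial σ Q))) * X) by
    obtain ⟨B, hB0, hB⟩ := hs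
    exact ⟨B, hB0, fun n => (hB n).1, fun n hn => (hB n).2.1 hn, PowerSeries.ext fun n => (hB n).2.2⟩
  refine exists_ps (dP σ d) (fun n B => IsDeg deg deg (2 * n - 1) (coeff n B) ∧
      (n ≠ 0 → cst (coeff n B) = 0) ∧
      coeff n (B * B) = coeff n (C (ell • (1 : Module.End (MvPolynomial σ Q) (ι →₀ MvPolynomial σ Q))) * X))
    ?_ ?_ ?_
  · intro n B B' hBB ⟨h1, h2, h3⟩
    refine ⟨by rw [← hBB n le_rfl]; exact h1, by rw [← hBB n le_rfl]; exact h2, ?_⟩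
    rw [← h3]
    exact (coeff_mul_congr hBB hBB).symm
  · refine ⟨by simpa using hdP, fun h => absurd rfl h, ?_⟩
    rw [← map_mul, hddP]; simp
  · intro n B hB0 hB hlow
    set L := C (ell • (1 : Module.End (MvPolynomial σ Q) (ι →₀ MvPolynomial σ Q))) * X with hL
    have hLcom : B * L = L * B := by
      have h1 : B * C (ell • (1 : Module.End (MvPolynomial σ Q) (ι →₀ MvPolynomial σ Q))) = C (ell • 1) * B := by
        ext1 m
        rw [coeff_mul_C, coeff_C_mul]
        simp
      rw [hL, ← mul_assoc, h1, mul_assoc, mul_assoc, (commute_X B).eq]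
    set U := B * B - L with hU
    have hUlow : ∀ m < n + 1, coeff m U = 0 := by
      intro m hm
      rw [hU, map_sub, (hB m (by omega)).2.2, sub_self]
    have hcomm : dP σ d * coeff (n + 1) U = coeff (n + 1) U * dP σ d := by
      rw [← hB0]
      exact comm_low hLcom hUlow
    have hdegB : ∀ m : ℕ, IsDeg deg deg (2 * m - 1) (coeff m B) := by
      intro m
      rcases Nat.lt_or_ge n m with hm | hm
      · rw [hlow m hm]; exact isDeg_zero
      · exact (hB m hm).1
    have hLn : coeff (n + 1) L = if n = 0 then ell • 1 else 0 := by
      rw [hL, coeff_C_mul, coeff_X]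
      by_cases hn : n = 0 <;> simp [hn]
    have hUdeg : IsDeg deg deg (2 * n) (coeff (n + 1) U) := by
      rw [hU, map_sub]
      refine IsDeg.sub ?_ ?_
      · rw [coeff_mul]
        refine isDeg_sum _ ?_
        rintro ⟨a, b⟩ hab
        rw [Finset.HasAntidiagonal.mem_antidiagonal] at hab
        simp only at hab
        refine IsDeg.comp (hdegB a) (hdegB b) ?_
        have : (a : ℤ) + b = n + 1 := by exact_mod_cast hab
        linarith
      · rw [hLn]
        split_ifs with hn
        · subst hn
          have := IsDeg.smul ell (isDeg_id (S := MvPolynomial σ Q) (M := MvPolynomial σ Q) (deg := deg))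
          rw [Nat.cast_zero, mul_zero]
          exact this
        · exact isDeg_zero
    have hUcst : cst (coeff (n + 1) U) = 0 := by
      rw [hU, map_sub, map_sub, sub_eq_zero]
      trans 0
      · rw [coeff_mul, map_sum]
        refine Finset.sum_eq_zero ?_
        rintro ⟨a, b⟩ hab
        rw [Finset.HasAntidiagonal.mem_antidiagonal] at hab
        simp only at hab ⊢
        rw [map_mul]
        by_cases ha : a = 0
        · rw [hlow b (by omega), map_zero, mul_zero]
        · rcases Nat.lt_or_ge n a with hm | hm
          · rw [hlow a hm, map_zero, zero_mul]
          · rw [(hB a hm).2.1 ha, zero_mul]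
      · rw [hLn]
        split_ifs
        · rw [hcst, bcHom_smul_one, hl0, zero_smul]
        · rw [map_zero]
    obtain ⟨k, hk, hk1, -⟩ := exists_nh (d' := dP σ d) (deg' := deg) hdP hddP (1 : MvPolynomial σ Q)
      (o := -coeff (n + 1) U) (p := 2 * n) (by
        rw [one_smul, LinearMap.comp_neg, LinearMap.neg_comp]
        exact congrArg _ hcomm)
      (fun _ => True) (by
        intro i k hlow' hg h0'
        rw [one_smul] at h0' ⊢
        obtain ⟨y, hy, hy2⟩ := exactP h (deg i + 2 * n)
          ((-coeff (n + 1) U) (single i 1) - k (dP σ d (single i 1)))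
          (Submodule.sub_mem _ (hUdeg.neg _ _ (single_mem_gr i 1)) hg) h0' (by
            intro hz ν
            have hn : n = 0 := by omega
            have hi : deg i = 0 := by omega
            have : dP σ d (single i 1) = 0 := gr_neg (n := -1) (by norm_num) (hdP.mem (single_mem_gr i 1) (by rw [hi]; simp))
            rw [this, map_zero, sub_zero, LinearMap.neg_apply, hU, map_sub, hLn, if_pos hn]
            have hb : coeff (n + 1) (B * B) (single i 1) = 0 := by
              rw [coeff_mul, LinearMap.sum_apply]
              refine Finset.sum_eq_zero ?_
              rintro ⟨a, b⟩ hab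
              rw [Finset.HasAntidiagonal.mem_antidiagonal] at hab
              simp only at hab ⊢
              by_cases ha : a = 0
              · rw [hlow b (by omega), mul_zero]; rfl
              · have hb : b = 0 := by omega
                rw [hb, hB0, Module.End.mul_apply, this, map_zero]
            rw [LinearMap.sub_apply, hb, zero_sub, neg_neg]
            have hii : i = i0 := (h.deg0 i).1 hi
            rw [hii]
            simpa using hl ν)
        exact ⟨y, hy, trivial, hy2⟩)
    rw [one_smul] at hk1
    have hk1' : dP σ d * k + k * dP σ d = -coeff (n + 1) U := hk1
    obtain ⟨hcb, hb⟩ := corr cst (bcHom (MvPolynomial.C : Q →+* MvPolynomial σ Q) ι) hcc k _ d hk1' hUcst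
    set b : Module.End (MvPolynomial σ Q) (ι →₀ MvPolynomial σ Q) := k - bcHom MvPolynomial.C ι (cst k) with hbdef
    have hbdeg : IsDeg deg deg (2 * n + 1) b := hk.sub (bcHom_deg _ (bcHom_deg _ hk))
    have hcoe : coeff (n + 1) (B + monomial (n + 1) b) = b := coeff_add_mono hlow b
    refine ⟨b, ?_, ?_, step_sq hB0 hb⟩
    · rw [hcoe]; convert hbdeg using 1; push_cast; ring
    · rw [hcoe]; exact fun _ => hcb

lemma exists_ell (f : Q) (a : Ideal Q) (hf : f ∈ IsLocalRing.maximalIdeal Q * a) :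
    ∃ ell : MvPolynomial a Q, (∀ ν, MvPolynomial.coeff ν ell ∈ IsLocalRing.maximalIdeal Q) ∧
      MvPolynomial.constantCoeff ell = 0 ∧ MvPolynomial.eval Subtype.val ell = f := by
  classical
  refine Submodule.mul_induction_on hf ?_ ?_
  · intro r hr s hs
    refine ⟨MvPolynomial.C r * MvPolynomial.X ⟨s, hs⟩, ?_, ?_, ?_⟩
    · intro ν
      rw [MvPolynomial.coeff_C_mul]
      exact Ideal.mul_mem_right _ _ hr
    · simp
    · simp
  · rintro x y ⟨l1, h1, h2, h3⟩ ⟨l2, k1, k2, k3⟩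
    refine ⟨l1 + l2, fun ν => ?_, ?_, ?_⟩
    · rw [MvPolynomial.coeff_add]; exact Ideal.add_mem _ (h1 ν) (k1 ν)
    · rw [map_add, h2, k2, add_zero]
    · rw [map_add, h3, k3]

lemma eval_mem (a : Ideal Q) (p : MvPolynomial a Q) (hp : MvPolynomial.constantCoeff p = 0) :
    MvPolynomial.eval Subtype.val p ∈ a := by
  rw [← Ideal.Quotient.eq_zero_iff_mem]
  have : (Ideal.Quotient.mk a).comp (MvPolynomial.eval Subtype.val) =
      (Ideal.Quotient.mk a).comp (MvPolynomial.constantCoeff : MvPolynomial a Q →+* Q) := by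
    apply MvPolynomial.ringHom_ext
    · intro r; simp
    · intro i; simp [Ideal.Quotient.eq_zero_iff_mem]
  have h2 := RingHom.congr_fun this p
  simp only [RingHom.comp_apply] at h2
  rw [h2, hp, map_zero]

open PowerSeries in
lemma exists_w (h : Res deg d i0) (f : Q) (a : Ideal Q) (hf : f ∈ IsLocalRing.maximalIdeal Q * a) :
    ∃ w : PowerSeries (Module.End Q (ι →₀ Q)), coeff 0 w = d ∧ (∀ n : ℕ, IsDeg deg deg (2 * n - 1) (coeff n w)) ∧
      (∀ n ≠ 0, ∀ i j, coeff n w (single i 1) j ∈ a) ∧ w * w = C (f • 1) * X := by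
  obtain ⟨ell, h1, h2, h3⟩ := exists_ell f a hf
  obtain ⟨B, b1, b2, b3, b4⟩ := exists_B h ell h1 h2
  let θ : MvPolynomial a Q →+* Q := MvPolynomial.eval Subtype.val
  refine ⟨PowerSeries.map (bcHom θ ι) B, ?_, ?_, ?_, ?_⟩
  · rw [coeff_map, b1]
    exact bcHom_bcHom _ _ (fun q => by simp [θ]) d
  · intro n
    rw [coeff_map]
    exact bcHom_deg _ (b2 n)
  · intro n hn i j
    rw [coeff_map, bcHom_single]
    refine eval_mem a _ ?_
    rw [← bcHom_single, b3 n hn]; rfl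
  · rw [← map_mul, b4, map_mul, map_C, map_X, bcHom_smul_one, ← h3]
end S2
end EZ

namespace EZ
open Finsupp
set_option linter.unusedSectionVars false

section koszul
variable {Q : Type} [CommRing Q] {V : Type} [AddCommGroup V] [Module Q V]


/-- the Koszul differential -/
noncomputable def kd (φ : V →ₗ[Q] Q) : ExteriorAlgebra Q V →ₗ[Q] ExteriorAlgebra Q V :=
  CliffordAlgebra.contractLeft (Q := (0 : QuadraticForm Q V)) φ

lemma kd_mul (φ : V →ₗ[Q] Q) (a : V) (x : ExteriorAlgebra Q V) :
    kd φ (ExteriorAlgebra.ι Q a * x) = φ a • x - ExteriorAlgebra.ι Q a * kd φ x :=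
  CliffordAlgebra.contractLeft_ι_mul φ a x

lemma kd_one (φ : V →ₗ[Q] Q) : kd φ (1 : ExteriorAlgebra Q V) = 0 :=
  CliffordAlgebra.contractLeft_one (Q := (0 : QuadraticForm Q V)) φ

lemma kd_kd (φ : V →ₗ[Q] Q) (x : ExteriorAlgebra Q V) : kd φ (kd φ x) = 0 :=
  CliffordAlgebra.contractLeft_contractLeft φ x

lemma kd_aug (φ : V →ₗ[Q] Q) (I : Ideal Q) (hφ : ∀ v, φ v ∈ I) (x : ExteriorAlgebra Q V) :
    ExteriorAlgebra.algebraMapInv (kd φ x) ∈ I := by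
  refine CliffordAlgebra.left_induction (Q := (0 : QuadraticForm Q V))
    (P := fun x => ExteriorAlgebra.algebraMapInv (kd φ x) ∈ I) ?_ ?_ ?_ x
  · intro r
    have : kd φ (algebraMap Q (ExteriorAlgebra Q V) r) = 0 := by
      rw [Algebra.algebraMap_eq_smul_one, map_smul, kd_one, smul_zero]
    change ExteriorAlgebra.algebraMapInv (kd φ (algebraMap Q (ExteriorAlgebra Q V) r)) ∈ I
    rw [this, map_zero]; exact I.zero_mem
  · intro x y hx hy
    rw [map_add, map_add]; exact I.add_mem hx hy
  · intro x v hx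
    change ExteriorAlgebra.algebraMapInv (kd φ (ExteriorAlgebra.ι Q v * x)) ∈ I
    rw [kd_mul, map_sub, map_smul, map_mul]
    refine I.sub_mem ?_ (I.mul_mem_left _ hx)
    rw [smul_eq_mul]
    exact I.mul_mem_right _ (hφ v)

/-- divided powers -/
noncomputable def dp : List (V × V) → ℕ → ExteriorAlgebra Q V
  | _, 0 => 1
  | [], _ + 1 => 0
  | h :: l, n + 1 => dp l (n + 1) + ExteriorAlgebra.ι Q h.1 * ExteriorAlgebra.ι Q h.2 * dp l n

lemma dp_zero (l : List (V × V)) : dp (Q := Q) l 0 = 1 := by cases l <;> rfl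

lemma dp_big (l : List (V × V)) : ∀ n, l.length < n → dp (Q := Q) l n = 0 := by
  induction l with
  | nil => intro n hn; cases n with
    | zero => simp at hn
    | succ n => rfl
  | cons h l ih =>
    intro n hn
    cases n with
    | zero => simp at hn
    | succ n =>
      simp only [List.length_cons] at hn
      rw [dp, ih _ (by omega), ih _ (by omega), mul_zero, add_zero]

lemma swap' (x y : V) : ExteriorAlgebra.ι Q x * ExteriorAlgebra.ι Q y = - (ExteriorAlgebra.ι Q y * ExteriorAlgebra.ι Q x) :=
  eq_neg_of_add_eq_zero_left (ExteriorAlgebra.ι_add_mul_swap x y)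

lemma comm_pair (v x y : V) : ExteriorAlgebra.ι Q v * (ExteriorAlgebra.ι Q x * ExteriorAlgebra.ι Q y) =
    (ExteriorAlgebra.ι Q x * ExteriorAlgebra.ι Q y) * ExteriorAlgebra.ι Q v := by
  rw [← mul_assoc, swap' v x, neg_mul, mul_assoc, swap' v y, mul_neg, neg_neg, mul_assoc]

/-- the vector `∑ φ(η) ζ` -/
def vv (φ : V →ₗ[Q] Q) (l : List (V × V)) : V := (l.map fun h => φ h.1 • h.2).sum

lemma kd_dp (φ : V →ₗ[Q] Q) (l : List (V × V)) (hl : ∀ h ∈ l, φ h.2 = 0) :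
    ∀ n, kd φ (dp l (n + 1)) = ExteriorAlgebra.ι Q (vv φ l) * dp l n := by
  induction l with
  | nil => intro n; simp [dp, vv]
  | cons h l ih =>
    intro n
    have ih := ih fun h' hh => hl h' (List.mem_cons_of_mem _ hh)
    have hh := hl h List.mem_cons_self
    have hv : vv φ (h :: l) = φ h.1 • h.2 + vv φ l := by simp [vv]
    have hs : ExteriorAlgebra.ι Q h.2 * (ExteriorAlgebra.ι Q h.1 * ExteriorAlgebra.ι Q h.2) = 0 := by
      rw [comm_pair, mul_assoc, ExteriorAlgebra.ι_sq_zero, mul_zero]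
    rw [dp, map_add, ih, mul_assoc, kd_mul, kd_mul, hh, zero_smul, zero_sub, mul_neg, sub_neg_eq_add, hv, map_add,
      map_smul]
    cases n with
    | zero => rw [dp_zero, dp_zero, kd_one]; simp [add_comm]
    | succ n =>
      rw [ih, dp]
      have e1 : (φ h.1 • ExteriorAlgebra.ι Q h.2 + ExteriorAlgebra.ι Q (vv φ l)) *
          (ExteriorAlgebra.ι Q h.1 * ExteriorAlgebra.ι Q h.2 * dp l n) =
          ExteriorAlgebra.ι Q h.1 * (ExteriorAlgebra.ι Q h.2 * (ExteriorAlgebra.ι Q (vv φ l) * dp l n)) := by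
        rw [← mul_assoc, add_mul, smul_mul_assoc, hs, smul_zero, zero_add, comm_pair]
        simp only [mul_assoc]
      rw [mul_add, e1, add_mul, smul_mul_assoc]
      abel

lemma koszul_key [IsLocalRing Q] [Module.Free Q V] (f g : Q) (hgm : g ∈ IsLocalRing.maximalIdeal Q)
    (hannf : ∀ x : Q, x * f = 0 → x ∈ Ideal.span {g})
    (hanng : ∀ x : Q, x * g = 0 → x ∈ Ideal.span {f})
    (φ : V →ₗ[Q] Q) (hφ : ∀ v, φ v ∈ IsLocalRing.maximalIdeal Q) (w : V) (hw : φ w = f) (l : List (V × V))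
    (hl : ∀ h ∈ l, φ h.2 = 0) (hgw : vv φ l = g • w) : False := by
  classical
  obtain ⟨I, bV⟩ := Module.Free.exists_basis Q V
  let _ : LinearOrder I := linearOrderOfSTO WellOrderingRel
  let b := bV.ExteriorAlgebra
  have hdiv : ∀ a c : Q, (∀ x : Q, x * a = 0 → x ∈ Ideal.span {c}) → ∀ x : ExteriorAlgebra Q V, a • x = 0 →
      ∃ y, x = c • y := by
    intro a c hac x hx
    have : ∀ i, ∃ z, c * z = b.repr x i := by
      intro i
      have h1 : a * b.repr x i = 0 := by
        have := congrArg (fun x => b.repr x i) hx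
        simpa using this
      have h2 := hac _ (by rw [mul_comm]; exact h1)
      obtain ⟨z, hz⟩ := Ideal.mem_span_singleton'.1 h2
      exact ⟨z, by rw [mul_comm]; exact hz⟩
    choose z hz using this
    refine ⟨∑ i ∈ (b.repr x).support, z i • b i, ?_⟩
    rw [Finset.smul_sum]
    conv_lhs => rw [← b.linearCombination_repr x]
    rw [Finsupp.linearCombination_apply, Finsupp.sum]
    refine Finset.sum_congr rfl fun i _ => ?_
    rw [smul_smul, hz]
  have hdp : ∀ n, kd φ (dp l (n + 1)) = g • (ExteriorAlgebra.ι Q w * dp l n) := by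
    intro n
    rw [kd_dp φ l hl, hgw, map_smul, smul_mul_assoc]
  have hwdp : ∀ n, kd φ (ExteriorAlgebra.ι Q w * dp l n) = f • dp l n := by
    intro n
    rw [kd_mul, hw]
    cases n with
    | zero => rw [dp_zero, kd_one, mul_zero, sub_zero]
    | succ n => rw [hdp, mul_smul_comm, ← mul_assoc, ExteriorAlgebra.ι_sq_zero, zero_mul, smul_zero, sub_zero]
  have hS : ∀ k n, l.length + 1 = n + k → ∃ v v', dp l n = kd φ v + g • v' := by
    intro k
    induction k with
    | zero => intro n hn; exact ⟨0, 0, by rw [dp_big l n (by omega)]; simp⟩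
    | succ k ih =>
      intro n hn
      obtain ⟨v, v', h1⟩ := ih (n + 1) (by omega)
      have h2 := congrArg (kd φ) h1
      rw [hdp, map_add, kd_kd, zero_add, map_smul, ← sub_eq_zero, ← smul_sub] at h2
      obtain ⟨v2, h3⟩ := hdiv g f hanng _ h2
      have h4 := congrArg (kd φ) h3
      rw [map_sub, kd_kd, sub_zero, hwdp, map_smul, ← sub_eq_zero, ← smul_sub] at h4
      obtain ⟨v3, h5⟩ := hdiv f g hannf _ h4
      exact ⟨v2, v3, by rw [← h5]; abel⟩
  obtain ⟨v, v', h⟩ := hS (l.length + 1) 0 (by omega)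
  rw [dp_zero] at h
  have h' := congrArg ExteriorAlgebra.algebraMapInv h
  rw [map_one, map_add, map_smul] at h'
  have : (1 : Q) ∈ IsLocalRing.maximalIdeal Q := by
    rw [h']
    exact Ideal.add_mem _ (kd_aug φ _ hφ v) (Ideal.mul_mem_right _ _ hgm)
  exact (Ideal.ne_top_iff_one _).1 (IsLocalRing.maximalIdeal.isMaximal Q).ne_top this

end koszul

section
variable {Q : Type} [CommRing Q] [IsLocalRing Q] {ι : Type} {deg : ι → ℕ} {d : (ι →₀ Q) →ₗ[Q] (ι →₀ Q)} {i0 : ι}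

lemma no_q (h : Res deg d i0) (f g : Q) (hgm : g ∈ IsLocalRing.maximalIdeal Q)
    (hannf : ∀ x : Q, x * f = 0 → x ∈ Ideal.span {g})
    (hanng : ∀ x : Q, x * g = 0 → x ∈ Ideal.span {f}) (w y : ι →₀ Q) (hw : d w = single i0 f)
    (hy : ∀ i, y i ∈ IsLocalRing.maximalIdeal Q) (hyw : d y = g • w) : False := by
  let φ : (ι →₀ Q) →ₗ[Q] Q := Finsupp.lapply i0 ∘ₗ d
  have : ∀ i, ∃ η, φ η = y i := by
    intro i
    obtain ⟨η, -, h2⟩ := h.surj _ (hy i)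
    exact ⟨η, by simp [φ, h2]⟩
  choose η hη using this
  refine koszul_key f g hgm hannf hanng φ h.min0 w (by simp [φ, hw])
    (y.support.toList.map fun i => (η i, d (single i 1))) ?_ ?_
  · intro p hp
    obtain ⟨i, -, rfl⟩ := List.mem_map.1 hp
    have := LinearMap.congr_fun h.dd (single i 1)
    simp only [LinearMap.comp_apply, LinearMap.zero_apply] at this
    simp [φ, this]
  · rw [vv, List.map_map]
    rw [← hyw]
    conv_rhs => rw [← Finsupp.sum_single y]
    rw [Finsupp.sum, map_sum, ← Finset.sum_map_toList]
    congr 1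
    refine List.map_congr_left fun i _ => ?_
    simp only [Function.comp_apply, hη]
    rw [← map_smul, smul_single, smul_eq_mul, mul_one]

end
end EZ

namespace EZ
open Finsupp
set_option linter.unusedSectionVars false

section ps
variable {E : Type} [Ring E]
open PowerSeries

lemma anti_low {W U : PowerSeries E} {n : ℕ} (hU : W * U + U * W = 0) (h : ∀ m < n, coeff m U = 0) :
    coeff 0 W * coeff n U = - (coeff n U * coeff 0 W) := by
  rw [← coeff_mul_of_low h, ← coeff_mul_of_low' h, ← map_neg]
  congr 1
  exact eq_neg_of_add_eq_zero_left hU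

lemma comm_anti {W B : PowerSeries E} (hL : W * W * B = B * (W * W)) :
    W * (W * B - B * W) + (W * B - B * W) * W = 0 := by
  rw [mul_sub, sub_mul, ← mul_assoc, mul_assoc B, hL, mul_assoc]; abel

lemma anti_all {W B : PowerSeries E} {n : ℕ} (hL : W * W * B = B * (W * W))
    (h : ∀ m < n, coeff m (W * B - B * W) = 0) :
    coeff 0 W * coeff n (W * B - B * W) = - (coeff n (W * B - B * W) * coeff 0 W) :=
  anti_low (comm_anti hL) h

lemma step_comm {W B : PowerSeries E} {n : ℕ} {b : E} (hb : coeff 0 W * b - b * coeff 0 W = - coeff (n + 1) (W * B - B * W)) :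
    coeff (n + 1) (W * (B + monomial (n + 1) b) - (B + monomial (n + 1) b) * W) = 0 := by
  have hmono := low_monomial n b
  rw [mul_add, add_mul, add_sub_add_comm, map_add, map_sub _ (W * monomial (n + 1) b), coeff_mul_of_low hmono, coeff_mul_of_low' hmono,
    coeff_monomial_same, hb, add_neg_cancel]

lemma comm_congr {W B B' : PowerSeries E} {n : ℕ} (h : ∀ m ≤ n, coeff m B = coeff m B') :
    coeff n (W * B - B * W) = coeff n (W * B' - B' * W) := by
  rw [map_sub, map_sub, coeff_mul_congr (fun _ _ => rfl) h, coeff_mul_congr h (fun _ _ => rfl)]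

lemma comm_C {W : PowerSeries E} {c : E} (h : coeff 0 W * c = c * coeff 0 W) : coeff 0 (W * C c - C c * W) = 0 := by
  rw [map_sub, coeff_mul_C, coeff_C_mul, h, sub_self]

lemma central_smul {S : Type} [CommRing S] {N : Type} [AddCommGroup N] [Module S N] (f : S) (B : PowerSeries (Module.End S N)) :
    (C (f • (1 : Module.End S N)) * X) * B = B * (C (f • (1 : Module.End S N)) * X) := by
  have h1 : B * C (f • (1 : Module.End S N)) = C (f • 1) * B := by
    ext1 m
    rw [coeff_mul_C, coeff_C_mul]
    simp
  rw [← mul_assoc, h1, mul_assoc, mul_assoc, (commute_X B).eq]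
end ps

section
variable {Q : Type} [CommRing Q] [IsLocalRing Q] {ι : Type} {deg : ι → ℕ} {d : (ι →₀ Q) →ₗ[Q] (ι →₀ Q)} {i0 : ι}
open PowerSeries

/-- existence of a functional -/
lemma exists_fun (q : ι →₀ Q)
    (hq : ∀ x ∈ gr Q deg 3, ¬ ∀ i, (q - d x) i ∈ IsLocalRing.maximalIdeal Q) :
    ∃ L : (ι →₀ Q) →ₗ[Q] Q, (∀ x ∈ gr Q deg 3, L (d x) ∈ IsLocalRing.maximalIdeal Q) ∧
      L q ∉ IsLocalRing.maximalIdeal Q := by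
  let k := IsLocalRing.ResidueField Q
  let N : Submodule k (ι →₀ k) :=
    { carrier := {v | ∃ x ∈ gr Q deg 3, bv k (d x) = v}
      add_mem' := by
        rintro _ _ ⟨x, hx, rfl⟩ ⟨y, hy, rfl⟩
        exact ⟨x + y, Submodule.add_mem _ hx hy, by rw [map_add, map_add]⟩
      zero_mem' := ⟨0, Submodule.zero_mem _, by rw [map_zero, map_zero]⟩
      smul_mem' := by
        rintro c _ ⟨x, hx, rfl⟩
        obtain ⟨c, rfl⟩ := IsLocalRing.residue_surjective c
        refine ⟨c • x, Submodule.smul_mem _ _ hx, ?_⟩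
        ext i
        rw [map_smul, map_smul]
        simp only [Finsupp.smul_apply, bv_apply]
        rw [Algebra.smul_def]; rfl }
  have hN : bv k q ∉ N := by
    rintro ⟨x, hx, e⟩
    refine hq x hx fun i => ?_
    have := DFunLike.congr_fun e i
    rw [bv_apply, bv_apply] at this
    rw [← IsLocalRing.residue_eq_zero_iff, Finsupp.sub_apply, map_sub, sub_eq_zero]
    exact this.symm
  obtain ⟨F, hF1, hF2⟩ := Submodule.exists_le_ker_of_notMem hN
  choose c hc using fun i => IsLocalRing.residue_surjective (F (single i 1))
  let L : (ι →₀ Q) →ₗ[Q] Q := Finsupp.linearCombination Q c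
  have hL : ∀ x, IsLocalRing.residue Q (L x) = F (bv k x) := by
    intro x
    induction x using Finsupp.induction_linear with
    | zero => simp
    | add x y hx hy => rw [map_add, map_add, map_add, map_add, hx, hy]
    | single i a =>
      rw [bv_single, show L (single i a) = a * c i by simp [L], map_mul, hc]
      have : single i (algebraMap Q k a) = algebraMap Q k a • single i (1 : k) := by
        rw [Finsupp.smul_single, smul_eq_mul, mul_one]
      rw [this, map_smul]; rfl
  refine ⟨L, ?_, ?_⟩
  · intro x hx
    rw [← IsLocalRing.residue_eq_zero_iff, hL]
    exact hF2 ⟨x, hx, rfl⟩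
  · rw [← IsLocalRing.residue_eq_zero_iff, hL]
    exact hF1

lemma exists_chi0 (h : Res deg d i0) (L : (ι →₀ Q) →ₗ[Q] Q)
    (hL : ∀ x ∈ gr Q deg 3, L (d x) ∈ IsLocalRing.maximalIdeal Q) :
    ∃ c : (ι →₀ Q) →ₗ[Q] (ι →₀ Q), IsDeg deg deg (-2) c ∧ d ∘ₗ c = c ∘ₗ d ∧
      ∀ x ∈ gr Q deg 2, c x = single i0 (L x) := by
  obtain ⟨c, hc⟩ := exists_lift h.hd (Y := ι →₀ Q)
    (fun i x y => y ∈ gr Q deg (deg i - 2) ∧ d y = x ∧ (deg i = 2 → y = single i0 (L (single i 1)))) (by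
      intro i c H
      have h1 : d (single i 1) ∈ gr Q deg (deg i - 1) := h.hd.mem (single_mem_gr i 1) (by ring)
      have hx : c (d (single i 1)) ∈ gr Q deg (deg i - 3) := by
        exact gr_induction (S := Q) (n := deg i - 1) c.toAddMonoidHom (gr Q deg (deg i - 3)).toAddSubgroup
          (fun j m hj => by
            have : single j m = m • single j (1 : Q) := by simp
            simp only [LinearMap.toAddMonoidHom_coe]
            rw [this, map_smul]
            refine Submodule.smul_mem _ _ ?_
            have := (H j (by omega)).1
            rwa [show (deg j : ℤ) - 2 = deg i - 3 by omega] at this) h1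
      by_cases h2 : deg i = 2
      · refine ⟨single i0 (L (single i 1)), single_mem_gr' _ _ (by rw [h.degi0, h2]; simp), ?_, fun _ => rfl⟩
        rw [gr_neg (by omega) hx]
        exact gr_neg (n := -1) (by norm_num) (h.hd.mem (single_mem_gr i0 _) (by rw [h.degi0]; simp))
      · have hdx : d (c (d (single i 1))) = 0 := by
          have := eq_of_lower (deg := deg) (h := d ∘ₗ c) (h' := c ∘ₗ d) (n := deg i - 1)
            (fun j hj => (H j (by omega)).2.1) h1
          simp only [LinearMap.comp_apply] at this
          rw [this, h.dd', map_zero]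
        obtain ⟨y, hy, e⟩ := h.exact' _ _ hx hdx (by
          intro h3
          have h3' : deg i = 3 := by omega
          have := eq_of_lower (deg := deg) (h := c) (h' := Finsupp.lsingle i0 ∘ₗ L) (n := deg i - 1)
            (fun j hj => (H j (by omega)).2.2 (by omega)) h1
          rw [this]
          simp only [LinearMap.comp_apply, Finsupp.lsingle_apply, Finsupp.single_eq_same]
          exact hL _ (single_mem_gr' _ _ (by omega)))
        exact ⟨y, by rwa [show (deg i : ℤ) - 3 + 1 = deg i - 2 by ring] at hy, e, fun h => absurd h h2⟩)
  refine ⟨c, ?_, ?_, ?_⟩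
  · rw [isDeg_iff_one]; intro i; exact (hc i).1
  · ext1 i
    ext1
    simp [(hc i).2.1]
  · intro x hx
    exact eq_of_lower (deg := deg) (h := c) (h' := Finsupp.lsingle i0 ∘ₗ L) (n := 2)
            (fun j hj => (hc j).2.2 (by omega)) hx

set_option maxHeartbeats 400000 in
lemma exists_chi (h : Res deg d i0) (a : Ideal Q) (ha : a ≤ IsLocalRing.maximalIdeal Q) (f : Q)
    (w : PowerSeries (Module.End Q (ι →₀ Q))) (w0 : coeff 0 w = d)
    (wd : ∀ n : ℕ, IsDeg deg deg (2 * n - 1) (coeff n w))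
    (wa : ∀ n ≠ 0, ∀ i j, coeff n w (single i 1) j ∈ a) (ww : w * w = C (f • 1) * X)
    (L : (ι →₀ Q) →ₗ[Q] Q)
    (c : (ι →₀ Q) →ₗ[Q] (ι →₀ Q)) (hcd : IsDeg deg deg (-2) c) (hcc : d ∘ₗ c = c ∘ₗ d)
    (hcL : ∀ x ∈ gr Q deg 2, c x = single i0 (L x)) :
    ∃ K : PowerSeries (Module.End Q (ι →₀ Q)), coeff 0 K = c ∧ (∀ n : ℕ, IsDeg deg deg (2 * n - 2) (coeff n K)) ∧
      w * K = K * w := by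
  suffices hs : ∃ K : PowerSeries (Module.End Q (ι →₀ Q)), coeff 0 K = c ∧
      ∀ n : ℕ, IsDeg deg deg (2 * n - 2) (coeff n K) ∧ coeff n (w * K - K * w) = 0 by
    obtain ⟨K, h0, hK⟩ := hs
    refine ⟨K, h0, fun n => (hK n).1, sub_eq_zero.1 (PowerSeries.ext fun n => ?_)⟩
    rw [(hK n).2, map_zero]
  refine exists_ps (E := Module.End Q (ι →₀ Q)) c (fun n K => IsDeg deg deg (2 * n - 2) (coeff n K) ∧ coeff n (w * K - K * w) = 0) ?_ ?_ ?_
  · intro n B B' hBB ⟨h1, h2⟩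
    have e := hBB n le_rfl
    have e2 := comm_congr (W := w) hBB
    rw [e] at h1
    rw [e2] at h2
    exact ⟨h1, h2⟩
  · refine ⟨by simpa using hcd, ?_⟩
    refine comm_C ?_
    rw [w0]
    exact hcc
  · intro n B hB0 hB hlow
    have hUlow : ∀ m < n + 1, coeff m (w * B - B * w) = 0 := fun m hm => (hB m (by omega)).2
    have hcen : w * w * B = B * (w * w) := by
      rw [ww]; exact central_smul (N := ι →₀ Q) f B
    have hanti := anti_all (W := w) (B := B) hcen hUlow
    rw [w0] at hanti
    have hdegB : ∀ m : ℕ, IsDeg deg deg (2 * m - 2) (coeff m B) := by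
      intro m
      rcases Nat.lt_or_ge n m with hm | hm
      · rw [hlow m hm]; exact isDeg_zero
      · exact (hB m hm).1
    set U := coeff (n + 1) (w * B - B * w) with hU
    have hUdeg : IsDeg deg deg (2 * n - 1) U := by
      rw [hU, map_sub]
      refine IsDeg.sub ?_ ?_
      · rw [coeff_mul]
        refine isDeg_sum _ ?_
        rintro ⟨a, b⟩ hab
        rw [Finset.HasAntidiagonal.mem_antidiagonal] at hab
        simp only at hab
        refine IsDeg.comp (wd a) (hdegB b) ?_
        have : (a : ℤ) + b = n + 1 := by exact_mod_cast hab
        linarith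
      · rw [coeff_mul]
        refine isDeg_sum _ ?_
        rintro ⟨a, b⟩ hab
        rw [Finset.HasAntidiagonal.mem_antidiagonal] at hab
        simp only at hab
        refine IsDeg.comp (hdegB a) (wd b) ?_
        have : (a : ℤ) + b = n + 1 := by exact_mod_cast hab
        linarith
    obtain ⟨k, hk, hk1, -⟩ := exists_nh (d' := d) (deg' := deg) h.hd h.dd (-1 : Q)
      (o := -U) (p := 2 * n - 1) (by
        refine LinearMap.ext fun x => ?_
        have hx : d (U x) = -(U (d x)) := LinearMap.congr_fun hanti x
        simp [hx])
      (fun _ => True) (by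
        intro i k hlow' hg h0'
        rw [neg_smul, one_smul, sub_neg_eq_add] at h0' ⊢
        obtain ⟨y, hy, hy2⟩ := h.exact' (deg i + (2 * n - 1))
          ((-U) (single i 1) + k (d (single i 1)))
          (Submodule.add_mem _ (hUdeg.neg _ _ (single_mem_gr i 1)) hg) h0' (by
            intro hz
            rw [Finsupp.add_apply]
            have hdi : deg i ≤ 1 := by omega
            refine Ideal.add_mem _ ?_ ?_
            · rw [LinearMap.neg_apply, Finsupp.neg_apply]
              refine neg_mem ?_
              by_cases hn : n = 0
              · subst hn
                have hi : deg i = 1 := by omega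
                rw [hU, map_sub, LinearMap.sub_apply, Finsupp.sub_apply]
                have e1 : coeff (0 + 1) (w * B) (single i 1) = 0 := by
                  rw [coeff_mul, LinearMap.sum_apply]
                  refine Finset.sum_eq_zero ?_
                  rintro ⟨a, b⟩ hab
                  rw [Finset.HasAntidiagonal.mem_antidiagonal] at hab
                  simp only at hab ⊢
                  by_cases hb : b = 0
                  · have : coeff b B (single i 1) = 0 := gr_neg (n := -1) (by norm_num)
                      ((hdegB b).mem (single_mem_gr i 1) (by rw [hi, hb]; norm_num))
                    rw [Module.End.mul_apply, this, map_zero]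
                  · rw [hlow b (by omega), mul_zero]; rfl
                have e2 : coeff (0 + 1) (B * w) (single i 1) = c (coeff 1 w (single i 1)) := by
                  rw [coeff_mul, LinearMap.sum_apply, Finset.sum_eq_single (0, 1)]
                  · rw [hB0]; rfl
                  · rintro ⟨a, b⟩ hab hne
                    rw [Finset.HasAntidiagonal.mem_antidiagonal] at hab
                    simp only at hab ⊢
                    have : a = 1 := by
                      by_contra ha
                      have : a = 0 := by omega
                      have : b = 1 := by omega
                      subst a b
                      exact hne rfl
                    rw [hlow a (by omega), zero_mul]; rfl
                  · intro hne
                    exact absurd (Finset.HasAntidiagonal.mem_antidiagonal.2 (by norm_num)) hne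
                have e3 : coeff 1 w (single i 1) ∈ gr Q deg 2 := (wd 1).mem (single_mem_gr i 1) (by rw [hi]; norm_num)
                rw [e1, e2, hcL _ e3, Finsupp.single_eq_same, Finsupp.zero_apply, zero_sub]
                refine neg_mem (ha ?_)
                rw [← Finsupp.sum_single (coeff 1 w (single i 1)), Finsupp.sum, map_sum]
                refine Ideal.sum_mem _ fun j _ => ?_
                have : ∀ r : Q, single j r = r • single j (1 : Q) := by simp
                rw [this, map_smul, smul_eq_mul]
                exact Ideal.mul_mem_right _ _ (wa 1 (by norm_num) i j)
              · omega
            · have hx0 : d (single i 1) ∈ gr Q deg (deg i - 1) := h.hd.mem (single_mem_gr i 1) (by ring)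
              by_cases hi : deg i = 1
              · rw [hi] at hx0
                have hx1 : d (single i 1) ∈ gr Q deg 0 := by simpa using hx0
                rw [h.gr0 hx1]
                have : ∀ r : Q, single i0 r = r • single i0 (1 : Q) := by simp
                rw [this, map_smul, Finsupp.smul_apply, smul_eq_mul]
                exact Ideal.mul_mem_right _ _ (h.min0 _)
              · rw [gr_neg (by omega) hx0, map_zero]; exact Ideal.zero_mem _)
        exact ⟨y, hy, trivial, hy2⟩)
    refine ⟨k, ?_, ?_⟩
    · rw [coeff_add_mono hlow]
      convert hk using 1; push_cast; ring
    · refine step_comm ?_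
      rw [w0]
      have : d * k - k * d = -U := by
        refine LinearMap.ext fun x => ?_
        have := LinearMap.congr_fun hk1 x
        simp only [LinearMap.add_apply, LinearMap.comp_apply, LinearMap.smul_apply, neg_smul, one_smul] at this
        rw [LinearMap.sub_apply, ← this, sub_eq_add_neg]
        rfl
      rw [this, ← hU]

end
end EZ

namespace EZ
open Finsupp PowerSeries
set_option linter.unusedSectionVars false

section pk
variable {Q : Type} [CommRing Q] {ι : Type}

lemma div_gr {deg : ι → ℕ} {n : ℤ} {v : ι →₀ Q} (hv : v ∈ gr Q deg n) (c : Q)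
    (h : ∀ i, v i ∈ Ideal.span {c}) : ∃ y ∈ gr Q deg n, v = c • y := by
  have : ∀ i, ∃ y, v i = c * y := fun i => by
    obtain ⟨y, hy⟩ := Ideal.mem_span_singleton.1 (h i)
    exact ⟨y, hy⟩
  choose F hF using this
  classical
  refine ⟨Finsupp.onFinset v.support (fun i => if v i = 0 then 0 else F i) ?_, ?_, ?_⟩
  · intro i hi
    rw [Finsupp.mem_support_iff]
    intro h0; simp [h0] at hi
  · rw [mem_gr]
    intro i hi
    refine mem_gr.1 hv i ?_
    intro h0
    apply hi
    simp [Finsupp.onFinset_apply, h0]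
  · ext i
    rw [Finsupp.smul_apply, Finsupp.onFinset_apply, smul_eq_mul]
    split_ifs with h0
    · rw [h0, mul_zero]
    · exact hF i

variable [IsLocalRing Q]

/-- the package -/
structure Pk (deg : ι → ℕ) (d : (ι →₀ Q) →ₗ[Q] (ι →₀ Q)) (i0 : ι) (f g : Q)
    (D χ : (ℕ × ι →₀ Q) →ₗ[Q] (ℕ × ι →₀ Q)) : Prop where
  res : Res deg d i0
  hDd : IsDeg (dT deg) (dT deg) (-1) D
  hXd : IsDeg (dT deg) (dT deg) (-2) χ
  DD : ∀ x, D (D x) = f • tau Q x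
  Dt : ∀ x, tau Q (D x) = D (tau Q x)
  Xt : ∀ x, tau Q (χ x) = χ (tau Q x)
  XD : ∀ x, χ (D x) = D (χ x)
  D0 : ∀ x, D (inc Q 0 x) = inc Q 0 (d x)
  key : ∃ u, u ∉ IsLocalRing.maximalIdeal Q ∧ ∀ x ∈ gr Q (dT deg) 2, ∀ y ∈ gr Q (dT deg) 1, ∀ x' ∈ gr Q (dT deg) 0,
    D x = f • y → tau Q x = D y + g • x' → χ x (0, i0) - u * x' (0, i0) ∈ IsLocalRing.maximalIdeal Q
  af : ∀ x : Q, x * f = 0 → x ∈ Ideal.span {g}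
  ag : ∀ x : Q, x * g = 0 → x ∈ Ideal.span {f}
  fg : f * g = 0
  fm : f ∈ IsLocalRing.maximalIdeal Q
  gm : g ∈ IsLocalRing.maximalIdeal Q

lemma apply_mem_of {κ : Type} (a : Ideal Q) (A : (ι →₀ Q) →ₗ[Q] (κ →₀ Q)) (h : ∀ i j, A (single i 1) j ∈ a) (x : ι →₀ Q) (j : κ) :
    A x j ∈ a := by
  induction x using Finsupp.induction_linear with
  | zero => simp
  | add x y hx hy => rw [map_add, Finsupp.add_apply]; exact Ideal.add_mem _ hx hy
  | single p c =>
    have : single p c = c • single p (1 : Q) := by simp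
    rw [this, map_smul, Finsupp.smul_apply]
    exact Ideal.mul_mem_left _ _ (h p j)

lemma fun_mem_of (a : Ideal Q) (L : (ι →₀ Q) →ₗ[Q] Q) (x : ι →₀ Q) (h : ∀ i, x i ∈ a) : L x ∈ a := by
  rw [← Finsupp.sum_single x, Finsupp.sum, map_sum]
  refine Ideal.sum_mem _ fun i _ => ?_
  have : single i (x i) = x i • single i (1 : Q) := by simp
  rw [this, map_smul]
  exact Ideal.mul_mem_right _ _ (h i)

set_option maxHeartbeats 800000 in
lemma exists_pk {deg : ι → ℕ} {d : (ι →₀ Q) →ₗ[Q] (ι →₀ Q)} {i0 : ι} (h : Res deg d i0) (f g : Q)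
    (gm : g ∈ IsLocalRing.maximalIdeal Q) (fg : f * g = 0)
    (af : ∀ x : Q, x * f = 0 → x ∈ Ideal.span {g})
    (ag : ∀ x : Q, x * g = 0 → x ∈ Ideal.span {f})
    (a : Ideal Q) (ha : a ≤ IsLocalRing.maximalIdeal Q) (hfa : f ∈ IsLocalRing.maximalIdeal Q * a) :
    ∃ w : PowerSeries (Module.End Q (ι →₀ Q)), coeff 0 w = d ∧
      (∀ n ≠ 0, ∀ i j, coeff n w (single i 1) j ∈ a) ∧ ∃ χ, Pk deg d i0 f g (Th w) χ := by
  obtain ⟨w, w0, wd, wa, ww⟩ := exists_w h f a hfa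
  have w1 : ∀ x, d (coeff 1 w x) + coeff 1 w (d x) = f • x := by
    intro x
    have e := congrArg (coeff 1) ww
    rw [coeff_mul] at e
    have e2 := LinearMap.congr_fun e x
    have : Finset.HasAntidiagonal.antidiagonal 1 = {((0 : ℕ), (1 : ℕ)), (1, 0)} := rfl
    rw [this, Finset.sum_pair (by simp), w0] at e2
    rw [coeff_C_mul, coeff_one_X] at e2
    simpa using e2
  let v := coeff 1 w (single i0 1)
  have hv : v ∈ gr Q deg 1 := (wd 1).mem (single_mem_gr i0 1) (by rw [h.degi0]; norm_num)
  have de0 : d (single i0 1) = 0 :=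
    gr_neg (by norm_num) (h.hd.mem (single_mem_gr i0 1) (r := -1) (by rw [h.degi0]; simp))
  have dv : d v = single i0 f := by
    have := w1 (single i0 1)
    rw [de0, map_zero, add_zero] at this
    simpa using this
  obtain ⟨q, hq, dq⟩ := h.exact 1 (by norm_num) (g • v) (Submodule.smul_mem _ _ hv) (by
    rw [map_smul, dv, Finsupp.smul_single, smul_eq_mul, mul_comm, fg, Finsupp.single_zero])
  obtain ⟨L, L1, L2⟩ := exists_fun (deg := deg) (d := d) q (by
    intro x hx H
    refine no_q h f g gm af ag v (q - d x) dv H ?_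
    rw [map_sub, h.dd', sub_zero, dq])
  obtain ⟨c, c1, c2, c3⟩ := exists_chi0 h L L1
  obtain ⟨K, K0, Kd, Kc⟩ := exists_chi h a ha f w w0 wd wa ww L c c1 c2 c3
  have D0 : ∀ x, Th w (inc Q 0 x) = inc Q 0 (d x) := by
    intro x
    rw [Th_inc, ← w0]
    have : Finset.HasAntidiagonal.antidiagonal 0 = {((0 : ℕ), (0 : ℕ))} := rfl
    rw [this, Finset.sum_singleton]
  have X0 : ∀ x, Th K (inc Q 0 x) = inc Q 0 (c x) := by
    intro x
    rw [Th_inc, ← K0]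
    have : Finset.HasAntidiagonal.antidiagonal 0 = {((0 : ℕ), (0 : ℕ))} := rfl
    rw [this, Finset.sum_singleton]
  have D1 : ∀ x, Th w (inc Q 1 x) = inc Q 1 (d x) + inc Q 0 (coeff 1 w x) := by
    intro x
    rw [Th_inc, ← w0]
    have : Finset.HasAntidiagonal.antidiagonal 1 = {((0 : ℕ), (1 : ℕ)), (1, 0)} := rfl
    rw [this, Finset.sum_pair (by simp)]
  have X1 : ∀ x, Th K (inc Q 1 x) = inc Q 1 (c x) + inc Q 0 (coeff 1 K x) := by
    intro x
    rw [Th_inc, ← K0]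
    have : Finset.HasAntidiagonal.antidiagonal 1 = {((0 : ℕ), (1 : ℕ)), (1, 0)} := rfl
    rw [this, Finset.sum_pair (by simp)]
  have mm : f ∈ IsLocalRing.maximalIdeal Q := Ideal.mul_le_right (I := IsLocalRing.maximalIdeal Q) (Ideal.mul_mono_right ha hfa)
  refine ⟨w, w0, wa, Th K, h, Th_deg (by intro j; exact wd j), Th_deg (by intro j; exact Kd j), ?_, Th_tau w, Th_tau K, ?_, D0, ⟨- L q, ?_, ?_⟩, af, ag, fg, mm, gm⟩
  · intro x
    rw [← Th_fX, ← ww, Th_mul]; rfl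
  · intro x
    have e := congrArg Th Kc
    rw [Th_mul, Th_mul] at e
    exact (LinearMap.congr_fun e x).symm
  · rwa [Ideal.neg_mem_iff]
  · intro x hx y hy x' hx' e1 e2
    have py : y = inc Q 0 (pr Q 0 y) := eq_inc_of_tau (gr_neg (by norm_num) (tau_deg.mem hy (r := -1) (by norm_num)))
    have px' : x' = inc Q 0 (pr Q 0 x') := eq_inc_of_tau (gr_neg (by norm_num) (tau_deg.mem hx' (r := -2) (by norm_num)))
    have py1 : pr Q 0 y ∈ gr Q deg 1 := pr_mem 0 hy (by norm_num)
    have px2 := h.gr0 (pr_mem 0 hx' (r := 0) (by norm_num))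
    have ptx : tau Q x = inc Q 0 (pr Q 0 (tau Q x)) := eq_inc_of_tau
      (gr_neg (by norm_num) (tau_deg.mem (tau_deg.mem hx (r := 0) (by norm_num)) (r := -2) (by norm_num)))
    have pt2 := h.gr0 (pr_mem 0 (tau_deg.mem hx (r := 0) (by norm_num)) (r := 0) (by norm_num))
    have dx := decomp (P := Q) x
    have hx0 : pr Q 0 x ∈ gr Q deg 2 := pr_mem 0 hx (by norm_num)
    set x0 := pr Q 0 x
    set y0 := pr Q 0 y
    set c' := pr Q 0 x' i0 with hc'
    set t := pr Q 0 (tau Q x) i0 with ht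
    rw [pt2] at ptx
    rw [ptx, sg_inc] at dx
    have et : single i0 t = d y0 + g • single i0 c' := by
      have := congrArg (pr Q 0) e2
      rw [py, px', px2, D0, map_add, pr_inc, map_smul, pr_inc] at this
      rw [← this, pt2]
    have tm : t ∈ IsLocalRing.maximalIdeal Q := by
      have := DFunLike.congr_fun et i0
      simp only [Finsupp.single_eq_same, Finsupp.add_apply, Finsupp.smul_apply, smul_eq_mul] at this
      rw [this]
      exact Ideal.add_mem _ (h.min0 _) (Ideal.mul_mem_right _ _ gm)
    have st : ∀ r : Q, single i0 r = r • single i0 (1 : Q) := by intro r; simp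
    have eD : coeff 1 w (single i0 t) + d x0 = f • y0 := by
      have := congrArg (pr Q 0) e1
      rw [dx, map_add, D1, D0, py] at this
      simp only [map_add, map_smul, pr_inc] at this
      rw [pr_inc_ne _ _ (by norm_num), zero_add] at this
      exact this
    have eq1 : d (x0 - coeff 1 w y0 + c' • q) = 0 := by
      rw [et, map_add, map_smul, st c', map_smul] at eD
      have h1 := w1 y0
      rw [map_add, map_sub, map_smul, dq]
      change coeff 1 w (d y0) + g • c' • v + d x0 = f • y0 at eD
      rw [← h1] at eD
      have : d x0 - d (coeff 1 w y0) + c' • g • v =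
        (coeff 1 w (d y0) + g • c' • v + d x0) - (d (coeff 1 w y0) + coeff 1 w (d y0)) := by
        rw [smul_comm c' g]; abel
      rw [this, eD, sub_self]
    have hwy : coeff 1 w y0 ∈ gr Q deg 2 := (wd 1).mem py1 (by norm_num)
    obtain ⟨x3, hx3, e3⟩ := h.exact 2 (by norm_num) _
      (Submodule.add_mem _ (Submodule.sub_mem _ hx0 hwy) (Submodule.smul_mem _ c' hq)) eq1
    have m3 := L1 x3 (by simpa using hx3)
    rw [e3, map_add, map_sub, map_smul, smul_eq_mul] at m3
    have m4 : L (coeff 1 w y0) ∈ IsLocalRing.maximalIdeal Q :=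
      fun_mem_of _ L _ fun i => ha (apply_mem_of a _ (wa 1 one_ne_zero) _ _)
    have m5 : Th K x (0, i0) = t * coeff 1 K (single i0 1) i0 + L x0 := by
      rw [dx, map_add, X1, X0, c3 x0 hx0, Finsupp.add_apply, Finsupp.add_apply, inc_apply_ne _ _ _ _ (by norm_num),
        inc_apply, inc_apply, st t, map_smul, Finsupp.smul_apply, zero_add, Finsupp.single_eq_same]
      rfl
    have m6 : x' (0, i0) = c' := by rw [hc', pr_apply]
    rw [m5, m6]
    have m7 := Ideal.add_mem _ (Ideal.add_mem _ m3 m4) (Ideal.mul_mem_right (coeff 1 K (single i0 1) i0) _ tm)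
    convert m7 using 1
    ring
end pk
end EZ

namespace EZ
open Finsupp
set_option linter.unusedSectionVars false

section evc
variable {Q : Type} [CommRing Q] [IsLocalRing Q] {ι : Type} {deg : ι → ℕ} {d : (ι →₀ Q) →ₗ[Q] (ι →₀ Q)} {i0 : ι}
  {f g : Q} {D χ : (ℕ × ι →₀ Q) →ₗ[Q] (ℕ × ι →₀ Q)}

lemma Pk.divf (h : Pk deg d i0 f g D χ) {n : ℤ} {v : ℕ × ι →₀ Q} (hv : v ∈ gr Q (dT deg) n) (e : f • v = 0) :
    ∃ y ∈ gr Q (dT deg) n, v = g • y := by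
  refine div_gr hv g fun i => h.af _ ?_
  have := DFunLike.congr_fun e i
  rw [mul_comm]; exact this

lemma Pk.divg (h : Pk deg d i0 f g D χ) {n : ℤ} {v : ℕ × ι →₀ Q} (hv : v ∈ gr Q (dT deg) n) (e : g • v = 0) :
    ∃ y ∈ gr Q (dT deg) n, v = f • y := by
  refine div_gr hv f fun i => h.ag _ ?_
  have := DFunLike.congr_fun e i
  rw [mul_comm]; exact this

lemma Pk.step (h : Pk deg d i0 f g D χ) {n : ℤ} {x y : ℕ × ι →₀ Q} (hx : x ∈ gr Q (dT deg) n)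
    (hy : y ∈ gr Q (dT deg) (n - 1)) (e : D x = f • y) :
    ∃ x' ∈ gr Q (dT deg) (n - 2), ∃ y' ∈ gr Q (dT deg) (n - 3), tau Q x = D y + g • x' ∧ D x' = f • y' := by
  have h1 : tau Q x - D y ∈ gr Q (dT deg) (n - 2) :=
    Submodule.sub_mem _ (tau_deg.mem hx (by ring)) (h.hDd.mem hy (by ring))
  obtain ⟨x', hx', e'⟩ := h.divf h1 (by
    rw [smul_sub, ← h.DD, e, map_smul, sub_self])
  obtain ⟨y', hy', e2⟩ := h.divg (h.hDd.mem hx' (r := n - 3) (by ring)) (by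
    rw [← map_smul, ← e', map_sub, h.DD, ← h.Dt, e, map_smul, sub_self])
  exact ⟨x', hx', y', hy', by rw [← e']; abel, e2⟩

/-- powers -/
lemma Pk.powD (h : Pk deg d i0 f g D χ) (j : ℕ) (x : ℕ × ι →₀ Q) : (χ ^ j) (D x) = D ((χ ^ j) x) := by
  induction j with
  | zero => rfl
  | succ j ih => rw [pow_succ', Module.End.mul_apply, ih, h.XD]; rfl

lemma Pk.powt (h : Pk deg d i0 f g D χ) (j : ℕ) (x : ℕ × ι →₀ Q) : tau Q ((χ ^ j) x) = (χ ^ j) (tau Q x) := by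
  induction j with
  | zero => rfl
  | succ j ih => rw [pow_succ', Module.End.mul_apply, h.Xt, ih, ← Module.End.mul_apply]

lemma Pk.powdeg (h : Pk deg d i0 f g D χ) (j : ℕ) : IsDeg (dT deg) (dT deg) (-2 * j) (χ ^ j) := by
  induction j with
  | zero =>
    rw [pow_zero]
    rw [Nat.cast_zero, mul_zero]
    exact isDeg_id
  | succ j ih => rw [pow_succ']; exact h.hXd.comp ih (by push_cast; ring)

lemma Pk.keyj (h : Pk deg d i0 f g D χ) : ∃ u, u ∉ IsLocalRing.maximalIdeal Q ∧ ∀ j : ℕ, ∀ x ∈ gr Q (dT deg) (2 * (j + 1)),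
    ∀ y ∈ gr Q (dT deg) (2 * (j + 1) - 1), ∀ x' ∈ gr Q (dT deg) (2 * j),
    D x = f • y → tau Q x = D y + g • x' →
      (χ ^ (j + 1)) x (0, i0) - u * (χ ^ j) x' (0, i0) ∈ IsLocalRing.maximalIdeal Q := by
  obtain ⟨u, hu, H⟩ := h.key
  refine ⟨u, hu, fun j x hx y hy x' hx' e1 e2 => ?_⟩
  have := H ((χ ^ j) x) ((h.powdeg j).mem hx (by ring)) ((χ ^ j) y) ((h.powdeg j).mem hy (by ring))
    ((χ ^ j) x') ((h.powdeg j).mem hx' (by ring)) (by rw [← h.powD, e1, map_smul])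
    (by rw [h.powt, e2, map_add, map_smul, h.powD])
  rw [pow_succ', Module.End.mul_apply]
  exact this

lemma Pk.zero_of (h : Pk deg d i0 f g D χ) {v : ι →₀ Q} (e : D (inc Q 0 v) = 0) : d v = 0 := by
  rw [h.D0] at e
  have := congrArg (pr Q 0) e
  rwa [pr_inc, map_zero] at this

lemma Pk.ex (h : Pk deg d i0 f g D χ) (N : ℕ) : ∀ n : ℤ, n < N → ∀ x ∈ gr Q (dT deg) n, ∀ y ∈ gr Q (dT deg) (n - 1),
    D x = f • y → (∀ j : ℕ, n = 2 * j → (χ ^ j) x (0, i0) ∈ IsLocalRing.maximalIdeal Q) →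
    ∃ a ∈ gr Q (dT deg) (n + 1), ∃ b ∈ gr Q (dT deg) n, x = D a + f • b := by
  induction N with
  | zero =>
    intro n hn x hx y hy e H
    refine ⟨0, Submodule.zero_mem _, 0, Submodule.zero_mem _, ?_⟩
    rw [gr_neg hn hx]; simp
  | succ N ih =>
    intro n hn x hx y hy e H
    rcases lt_trichotomy n 0 with hn0 | hn0 | hn0
    · exact ih n (by omega) x hx y hy e H
    · subst hn0
      have hm := H 0 (by simp)
      have px : x = inc Q 0 (pr Q 0 x) := eq_inc_of_tau (gr_neg (by norm_num) (tau_deg.mem hx (r := -2) (by norm_num)))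
      have px2 := h.res.gr0 (pr_mem 0 hx (r := 0) (by norm_num))
      obtain ⟨v, hv, e2⟩ := h.res.surj (pr Q 0 x i0) (by rw [pr_apply]; exact hm)
      refine ⟨inc Q 0 v, inc_mem 0 hv (by norm_num), 0, Submodule.zero_mem _, ?_⟩
      rw [h.D0, e2, ← px2, smul_zero, add_zero, ← px]
    · obtain ⟨x', hx', y', hy', e1, e2⟩ := h.step hx hy e
      obtain ⟨u, hu, ku⟩ := h.keyj
      obtain ⟨a, ha, b, hb, e3⟩ := ih (n - 2) (by push_cast at hn; omega) x' hx' y' (by convert hy' using 2; ring) e2 (by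
        intro j hj
        have hm := H (j + 1) (by push_cast; omega)
        obtain rfl : n = 2 * (j + 1) := by omega
        have := ku j x hx y hy x' (by convert hx' using 2; ring) e e1
        have h3 := Ideal.sub_mem _ hm this
        rw [sub_sub_cancel] at h3
        exact ((IsLocalRing.maximalIdeal.isMaximal Q).isPrime.mem_or_mem h3).resolve_left hu)
      have fga : ∀ z : ℕ × ι →₀ Q, f • g • z = 0 := fun z => by rw [smul_smul, h.fg, zero_smul]
      have gfa : ∀ z : ℕ × ι →₀ Q, g • f • z = 0 := fun z => by rw [smul_comm, fga]
      have hc : y + g • a ∈ gr Q (dT deg) (n - 1) := Submodule.add_mem _ hy (Submodule.smul_mem _ _ (by convert ha using 2; ring))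
      have hcs : sg Q (y + g • a) ∈ gr Q (dT deg) (n + 1) := sg_deg.mem hc (by ring)
      set c := sg Q (y + g • a) with hcd
      have hz : tau Q (x - D c) = 0 := by
        rw [map_sub, h.Dt, hcd, tau_sg, e1, e3, map_add, map_smul, smul_add, gfa, add_zero, sub_self]
      have hDz : D (x - D c) = 0 := by
        rw [map_sub, h.DD, hcd, tau_sg, e, smul_add, fga, add_zero, sub_self]
      have ez := eq_inc_of_tau hz
      have hzn : x - D c ∈ gr Q (dT deg) n := Submodule.sub_mem _ hx (h.hDd.mem hcs (by ring))
      rw [ez] at hDz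
      obtain ⟨v, hv, e5⟩ := h.res.exact n (by omega) _ (pr_mem 0 hzn (r := n) (by simp)) (h.zero_of hDz)
      refine ⟨c + inc Q 0 v, Submodule.add_mem _ hcs (inc_mem 0 hv (by simp)), 0, Submodule.zero_mem _, ?_⟩
      rw [map_add, h.D0, e5, ← ez, smul_zero]; abel

lemma Pk.gen (h : Pk deg d i0 f g D χ) (j : ℕ) : ∃ z ∈ gr Q (dT deg) (2 * j), D z = 0 ∧
    (χ ^ j) z (0, i0) ∉ IsLocalRing.maximalIdeal Q := by
  induction j with
  | zero =>
    have de0 : d (single i0 1) = 0 :=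
      gr_neg (by norm_num) (h.res.hd.mem (single_mem_gr i0 1) (r := -1) (by rw [h.res.degi0]; simp))
    refine ⟨inc Q 0 (single i0 1), inc_mem 0 (single_mem_gr i0 1) (by rw [h.res.degi0]; simp), ?_, ?_⟩
    · rw [h.D0, de0, map_zero]
    · rw [pow_zero, Module.End.one_apply, inc_apply, Finsupp.single_eq_same]
      exact fun hh => (IsLocalRing.maximalIdeal.isMaximal Q).ne_top ((Ideal.eq_top_iff_one _).2 hh)
  | succ j ih =>
    obtain ⟨z', hz', Dz', uz'⟩ := ih
    obtain ⟨u, hu, ku⟩ := h.keyj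
    have hs : sg Q (g • z') ∈ gr Q (dT deg) (2 * j + 2) := sg_deg.mem (Submodule.smul_mem _ _ hz') rfl
    have h1 : tau Q (D (sg Q (g • z'))) = 0 := by rw [h.Dt, tau_sg, map_smul, Dz', smul_zero]
    have ez := eq_inc_of_tau h1
    have h2 : D (D (sg Q (g • z'))) = 0 := by rw [h.DD, tau_sg, smul_smul, h.fg, zero_smul]
    rw [ez] at h2
    have h3 : D (sg Q (g • z')) ∈ gr Q (dT deg) (2 * j + 1) := h.hDd.mem hs (by ring)
    obtain ⟨v, hv, e5⟩ := h.res.exact (2 * j + 1) (by omega) _ (pr_mem 0 h3 (r := 2 * j + 1) (by simp)) (h.zero_of h2)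
    have hz : sg Q (g • z') - inc Q 0 v ∈ gr Q (dT deg) (2 * (j + 1)) :=
      Submodule.sub_mem _ (by convert hs using 2; ring) (inc_mem 0 hv (by push_cast; ring))
    have D0 : D (sg Q (g • z') - inc Q 0 v) = 0 := by rw [map_sub, h.D0, e5, ← ez, sub_self]
    refine ⟨sg Q (g • z') - inc Q 0 v, by exact_mod_cast hz, D0, fun hh => ?_⟩
    have := ku j _ hz 0 (Submodule.zero_mem _) z' hz' (by rw [D0, smul_zero])
      (by rw [map_sub, tau_sg, tau_inc_zero, map_zero, sub_zero, zero_add])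
    have h3 := Ideal.sub_mem _ hh this
    rw [sub_sub_cancel] at h3
    rcases (IsLocalRing.maximalIdeal.isMaximal Q).isPrime.mem_or_mem h3 with h4 | h4
    · exact hu h4
    · exact uz' h4

lemma fun_mem_of' {S : Type} [CommRing S] {κ : Type} (a : Ideal S) (L : (κ →₀ S) →ₗ[S] S) (h : ∀ i, L (single i 1) ∈ a) (x : κ →₀ S) :
    L x ∈ a := by
  rw [← Finsupp.sum_single x, Finsupp.sum, map_sum]
  refine Ideal.sum_mem _ fun i _ => ?_
  have : single i (x i) = x i • single i (1 : S) := by simp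
  rw [this, map_smul]
  exact Ideal.mul_mem_left _ _ (h i)

lemma mem_max_iff {R : Type} [CommRing R] [IsLocalRing R] [Algebra Q R]
    (hs : Function.Surjective (algebraMap Q R)) (x : Q) :
    algebraMap Q R x ∈ IsLocalRing.maximalIdeal R ↔ x ∈ IsLocalRing.maximalIdeal Q := by
  have : IsLocalHom (algebraMap Q R) := IsLocalHom.of_surjective _ hs
  rw [IsLocalRing.mem_maximalIdeal, IsLocalRing.mem_maximalIdeal, map_mem_nonunits_iff]

lemma Pk.evc (h : Pk deg d i0 f g D χ) (R : Type) [CommRing R] [IsLocalRing R] [Algebra Q R]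
    (hs : Function.Surjective (algebraMap Q R)) (hk : ∀ x, algebraMap Q R x = 0 ↔ x ∈ Ideal.span {f}) :
    ∃ ε, EvC (dT deg) (ext R R D) ε := by
  classical
  let e : (ℕ × ι →₀ Q) →ₗ[Q] Q := Finsupp.linearCombination Q fun p =>
    if Even (dT deg p) then (χ ^ (dT deg p / 2)) (single p 1) (0, i0) else 0
  have e_even : ∀ j : ℕ, ∀ x ∈ gr Q (dT deg) (2 * j), e x = (χ ^ j) x (0, i0) := by
    intro j x hx
    refine eq_of_lower (h := e) (h' := Finsupp.lapply (0, i0) ∘ₗ (χ ^ j)) ?_ hx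
    intro p hp
    have hp' : dT deg p = 2 * j := by exact_mod_cast hp
    simp [e, hp']
  have e_odd : ∀ n : ℤ, ¬ Even n → ∀ x ∈ gr Q (dT deg) n, e x = 0 := by
    intro n hn x hx
    refine eq_of_lower (h := e) (h' := 0) ?_ hx
    intro p hp
    have : ¬ Even (dT deg p) := by rw [← hp] at hn; exact_mod_cast hn
    simp [e, this]
  let ε : (ℕ × ι →₀ R) →ₗ[R] R := Finsupp.linearCombination R fun p => algebraMap Q R (e (single p 1))
  have hε : ∀ x, ε (bv R x) = algebraMap Q R (e x) := by
    intro x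
    induction x using Finsupp.induction_linear with
    | zero => simp
    | add x y hx hy => rw [map_add, map_add, hx, hy, map_add, map_add]
    | single p c =>
      have : single p c = c • single p (1 : Q) := by simp
      rw [bv_single, this, map_smul]
      simp [ε]
  have he : ∀ x, e (D x) ∈ IsLocalRing.maximalIdeal Q := by
    intro x
    refine fun_mem_of' _ (e ∘ₗ D) ?_ x
    intro p
    have hp : D (single p 1) ∈ gr Q (dT deg) (dT deg p - 1) := h.hDd.mem (single_mem_gr p 1) rfl
    by_cases hev : Even ((dT deg p : ℤ) - 1)
    · obtain ⟨k, hk⟩ := hev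
      by_cases hk0 : k < 0
      · have := gr_neg (by omega) hp
        simp [this]
      obtain ⟨k, rfl⟩ : ∃ j : ℕ, k = j := ⟨k.toNat, by omega⟩
      rw [LinearMap.comp_apply, e_even k _ (by convert hp using 2; omega), h.powD]
      have h1 : (χ ^ k) (single p 1) ∈ gr Q (dT deg) 1 := (h.powdeg k).mem (single_mem_gr p 1) (by omega)
      rw [eq_inc_of_tau (P := Q) (gr_neg (by norm_num) (tau_deg.mem h1 (r := -1) (by norm_num))), h.D0, inc_apply]
      exact h.res.min0 _
    · rw [LinearMap.comp_apply, e_odd _ hev _ hp]; exact Ideal.zero_mem _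
  refine ⟨ε, isDeg_ext h.hDd, ?_, ?_, ?_, ?_, ?_⟩
  · rw [← ext_comp]
    refine ext_eq_zero fun i j m => ?_
    rw [LinearMap.comp_apply, h.DD, Finsupp.smul_apply, smul_eq_mul, Algebra.smul_def, map_mul,
      (hk f).2 (Ideal.mem_span_singleton_self f), zero_mul, zero_mul]
  · intro n hn x hx
    obtain ⟨x, hx', rfl⟩ := bv_surj hs hx
    rw [hε, e_odd n hn x hx', map_zero]
  · intro x
    refine fun_mem_of' _ (ε ∘ₗ ext R R D) ?_ x
    intro p
    have : (single p 1 : ℕ × ι →₀ R) = bv R (single p (1 : Q)) := by rw [bv_single, map_one]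
    rw [LinearMap.comp_apply, this, ext_bv, hε, mem_max_iff hs]
    exact he _
  · intro n x hx h0 hm
    obtain ⟨x, hx', rfl⟩ := bv_surj hs hx
    rw [ext_bv] at h0
    rw [hε, mem_max_iff hs] at hm
    obtain ⟨y, hy, e1⟩ := div_gr (h.hDd.mem hx' (r := n - 1) (by ring)) f (fun i => by
      rw [← hk, ← bv_apply, h0]; rfl)
    obtain ⟨a, ha, b, hb, e2⟩ := h.ex (n.toNat + 1) n (by omega) x hx' y hy e1 (by
      rintro j rfl
      rwa [← e_even j x hx'])
    refine ⟨bv R a, gr_tm ha _, ?_⟩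
    rw [ext_bv, e2, map_add, left_eq_add]
    ext i
    rw [bv_apply, Finsupp.smul_apply, smul_eq_mul, map_mul, (hk f).2 (Ideal.mem_span_singleton_self f), zero_mul]
    rfl
  · intro n hn
    obtain ⟨k, hk'⟩ := hn
    obtain ⟨k, rfl⟩ : ∃ j : ℕ, k = j := ⟨k.toNat, by omega⟩
    obtain ⟨z, hz, z0, zu⟩ := h.gen k
    have hu : IsUnit (e z) := by
      rw [e_even k z hz]
      by_contra hh
      exact zu ((IsLocalRing.mem_maximalIdeal _).2 hh)
    obtain ⟨v, hv⟩ := hu.exists_right_inv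
    refine ⟨bv R (v • z), gr_tm (Submodule.smul_mem _ _ (by convert hz using 2; omega)) _, ?_, ?_⟩
    · rw [ext_bv, map_smul, z0, smul_zero, map_zero]
    · rw [hε, map_smul, smul_eq_mul, mul_comm, hv, map_one]
end evc
end EZ

namespace EZ
open Finsupp
open scoped TensorProduct
set_option linter.unusedSectionVars false

section killed
variable {A : Type} [CommRing A] [IsLocalRing A] {T : Type} [AddCommGroup T] [Module A T]

lemma length_tensor (h : ∀ b ∈ IsLocalRing.maximalIdeal A, ∀ t : T, b • t = 0) :
    Module.length A T = (Module.rank (IsLocalRing.ResidueField A) (IsLocalRing.ResidueField A ⊗[A] T)).toENat := by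
  have e1 : (A ⧸ IsLocalRing.maximalIdeal A) ⊗[A] T ≃ₗ[A] T ⧸ (IsLocalRing.maximalIdeal A • (⊤ : Submodule A T)) :=
    TensorProduct.quotTensorEquivQuotSMul T (IsLocalRing.maximalIdeal A)
  have hb : (IsLocalRing.maximalIdeal A • (⊤ : Submodule A T)) = ⊥ := by
    rw [eq_bot_iff, Submodule.smul_le]
    intro r hr n _
    rw [Submodule.mem_bot]; exact h r hr n
  have e2 := Submodule.quotEquivOfEqBot _ hb
  have e3 : IsLocalRing.ResidueField A ⊗[A] T ≃ₗ[A] T := e1.trans e2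
  rw [← e3.length_eq, Module.length_eq_of_surjective (R := IsLocalRing.ResidueField A) (IsLocalRing.residue_surjective (R := A)),
    Module.length_eq_rank]

lemma finrank_tensor (h : ∀ b ∈ IsLocalRing.maximalIdeal A, ∀ t : T, b • t = 0) :
    Module.finrank (IsLocalRing.ResidueField A) (IsLocalRing.ResidueField A ⊗[A] T) = (Module.length A T).toNat := by
  rw [length_tensor h, Module.finrank]
  simp

lemma length_fin [Module.Finite A T] (h : ∀ b ∈ IsLocalRing.maximalIdeal A, ∀ t : T, b • t = 0) :
    Module.length A T ≠ ⊤ := by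
  rw [length_tensor h]
  have := Module.rank_lt_aleph0 (IsLocalRing.ResidueField A) (IsLocalRing.ResidueField A ⊗[A] T)
  simpa using this
end killed

section fin
variable {A : Type} [CommRing A] {M : Type} [AddCommGroup M] [Module A M] {ι : Type} {deg : ι → ℕ}
  {d : (ι →₀ A) →ₗ[A] (ι →₀ A)} {i0 : ι}

lemma gr_noeth [IsNoetherian A M] (n : ℤ) (h : ∀ n, {i | deg i = n}.Finite) : IsNoetherian A (gr A (M := M) deg n) := by
  have hf : {i | (deg i : ℤ) = n}.Finite := by
    by_cases hn : n < 0
    · convert Set.finite_empty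
      ext i; simp; omega
    · obtain ⟨k, rfl⟩ : ∃ k : ℕ, n = k := ⟨n.toNat, by omega⟩
      simpa using h k
  have : Finite {i | (deg i : ℤ) = n} := hf
  have : IsNoetherian A (Finsupp.supported M A {i | (deg i : ℤ) = n}) :=
    isNoetherian_of_linearEquiv ((Finsupp.supportedEquivFinsupp (M := M) (R := A) {i | (deg i : ℤ) = n}).trans
      (Finsupp.linearEquivFunOnFinite A M _)).symm
  refine isNoetherian_of_le (t := Finsupp.supported M A {i | (deg i : ℤ) = n}) ?_
  intro x hx
  rw [Finsupp.mem_supported]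
  intro i hi
  exact mem_gr.1 hx i (Finsupp.mem_support_iff.1 (by simpa using hi))

variable [IsLocalRing A]

lemma Res.hkill (h : Res deg d i0) (b : A) (hb : b ∈ IsLocalRing.maximalIdeal A) :
    ∃ k : (ι →₀ A) →ₗ[A] (ι →₀ A), IsDeg deg deg 1 k ∧ d ∘ₗ k + k ∘ₗ d = b • LinearMap.id := by
  obtain ⟨k, hk, e, -⟩ := exists_nh (p := 0) h.hd h.dd (d' := d) (deg' := deg) (1 : A) (o := b • LinearMap.id)
    (by refine LinearMap.ext fun x => ?_; simp) (fun _ => True) (by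
      intro i k H h1 h2
      have hmem : (b • LinearMap.id : (ι →₀ A) →ₗ[A] (ι →₀ A)) (single i 1) - (1 : A) • k (d (single i 1)) ∈ gr A deg (deg i + 0) := by
        refine Submodule.sub_mem _ ?_ (Submodule.smul_mem _ _ h1)
        rw [LinearMap.smul_apply, LinearMap.id_apply]
        refine Submodule.smul_mem _ _ ?_
        simpa using single_mem_gr (S := A) (deg := deg) i (1 : A)
      obtain ⟨y, hy, e⟩ := h.exact' _ _ hmem h2 (by
        intro hn
        have : d (single i 1) = 0 := gr_neg (by norm_num) (h.hd.mem (single_mem_gr i 1) (r := -1) (by omega))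
        rw [this]
        simp only [map_zero, smul_zero, sub_zero, LinearMap.smul_apply, LinearMap.id_apply, Finsupp.smul_apply, smul_eq_mul]
        exact Ideal.mul_mem_right _ _ hb)
      exact ⟨y, hy, trivial, e⟩)
  exact ⟨k, by simpa using hk, by simpa using e⟩

lemma Res.hm_kill (h : Res deg d i0) (n : ℤ) (b : A) (hb : b ∈ IsLocalRing.maximalIdeal A)
    (t : Hm deg (ext A M d) n) : b • t = 0 := by
  obtain ⟨z, rfl⟩ := Submodule.Quotient.mk_surjective _ t
  obtain ⟨k, hk, e⟩ := h.hkill b hb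
  rw [← Submodule.Quotient.mk_smul, sq_mk_eq_zero, mem_Bc]
  have hz := mem_Zc.1 z.2
  refine ⟨ext A M k z, (isDeg_ext hk).mem hz.2 rfl, ?_⟩
  have e2 := congrArg (ext A M) e
  rw [ext_add, ext_comp, ext_comp] at e2
  have e3 := LinearMap.congr_fun e2 z.1
  rw [ext_smul_apply, ext_id, LinearMap.add_apply, LinearMap.comp_apply, LinearMap.comp_apply, hz.1, map_zero, add_zero] at e3
  exact e3

lemma Res.hl_fin [IsNoetherianRing A] [Module.Finite A M] (h : Res deg d i0) (n : ℤ) : hl deg (ext A M d) n ≠ ⊤ := by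
  have : IsNoetherian A M := isNoetherian_of_isNoetherianRing_of_finite A M
  have h1 : IsNoetherian A (gr A (M := M) deg n) := gr_noeth n h.fin
  have h2 : IsNoetherian A (Zc deg (ext A M d) n) := isNoetherian_of_le (t := gr A (M := M) deg n) inf_le_right
  have : Module.Finite A (Hm deg (ext A M d) n) := inferInstance
  exact length_fin (h.hm_kill n)

end fin

section conv
variable {Q : Type} [CommRing Q] {R : Type} [CommRing R] [Algebra Q R] {M : Type} [AddCommGroup M] [Module Q M] [Module R M]
  [IsScalarTower Q R M] {ι : Type} {deg : ι → ℕ} 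

lemma hl_conv (hs : Function.Surjective (algebraMap Q R)) (D : (ι →₀ M) →ₗ[R] (ι →₀ M)) (D' : (ι →₀ M) →ₗ[Q] (ι →₀ M)) (hD : ∀ x, D' x = D x) (n : ℤ) :
    hl deg D' n = hl deg D n := by
  rw [hl, hl, ← Module.length_eq_of_surjective (S := Q) (R := R) hs]
  have hz : ∀ x, x ∈ Zc deg D' n ↔ x ∈ Zc deg D n := by
    intro x; rw [mem_Zc, mem_Zc, hD, mem_gr, mem_gr]
  have hb : ∀ x, x ∈ Bc deg D' n ↔ x ∈ Bc deg D n := by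
    intro x; rw [mem_Bc, mem_Bc]; simp only [hD, mem_gr]
  let F : Zc deg D' n →ₗ[Q] Hm deg D n :=
    { toFun := fun z => Submodule.Quotient.mk ⟨z.1, (hz _).1 z.2⟩
      map_add' := fun a b => rfl
      map_smul' := fun c a => rfl }
  have hF : LinearMap.ker F = (Bc deg D' n).submoduleOf (Zc deg D' n) := by
    ext z
    rw [LinearMap.mem_ker]
    change (Submodule.Quotient.mk _ : Hm deg D n) = 0 ↔ _
    rw [sq_mk_eq_zero]
    exact (hb _).symm
  have hFs : Function.Surjective F := by
    intro x
    obtain ⟨z, rfl⟩ := Submodule.Quotient.mk_surjective _ x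
    exact ⟨⟨z.1, (hz _).2 z.2⟩, rfl⟩
  exact ((Submodule.quotEquivOfEq _ _ hF.symm).trans (F.quotKerEquivOfSurjective hFs)).length_eq

lemma hl_conv_ext (hs : Function.Surjective (algebraMap Q R)) {A : Type} [CommRing A] [Module A M] [SMulCommClass A Q M] [SMulCommClass A R M]
    (d : (ι →₀ A) →ₗ[A] (ι →₀ A)) (n : ℤ) : hl deg (ext Q M d) n = hl deg (ext R M d) n := by
  refine hl_conv hs _ _ ?_ n
  intro x
  induction x using Finsupp.induction_linear with
  | zero => simp
  | add x y hx hy => rw [map_add, hx, hy, map_add]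
  | single i m => rw [ext_single, ext_single]
end conv

section thmA
variable {Q : Type} [CommRing Q] [IsLocalRing Q] [IsNoetherianRing Q] {R : Type} [CommRing R] [IsLocalRing R] [Algebra Q R]
  {M : Type} [AddCommGroup M] [Module Q M] [Module R M] [IsScalarTower Q R M] [Module.Finite R M]

lemma thmA (hs : Function.Surjective (algebraMap Q R)) (f g : Q) (hk : ∀ x, algebraMap Q R x = 0 ↔ x ∈ Ideal.span {f})
    (gm : g ∈ IsLocalRing.maximalIdeal Q) (fg : f * g = 0)
    (af : ∀ x : Q, x * f = 0 → x ∈ Ideal.span {g})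
    (ag : ∀ x : Q, x * g = 0 → x ∈ Ideal.span {f})
    (a : Ideal Q) (ha : a ≤ IsLocalRing.maximalIdeal Q) (hfa : f ∈ IsLocalRing.maximalIdeal Q * a)
    (haM : ∀ c ∈ a, ∀ m : M, c • m = 0)
    {ι : Type} {deg : ι → ℕ} {d : (ι →₀ Q) →ₗ[Q] (ι →₀ Q)} {i0 : ι} (h : Res deg d i0)
    {ι' : Type} {deg' : ι' → ℕ} {d' : (ι' →₀ R) →ₗ[R] (ι' →₀ R)} {i0' : ι'} (h' : Res deg' d' i0') (n : ℤ) :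
    hl deg (ext Q M d) n = hl deg' (ext R M d') n := by
  obtain ⟨w, w0, wa, χ, hp⟩ := exists_pk h f g gm fg af ag a ha hfa
  obtain ⟨ε, he⟩ := hp.evc R hs hk
  obtain ⟨ε', he'⟩ := h'.evc
  have : IsNoetherianRing R := isNoetherianRing_of_surjective Q R (algebraMap Q R) hs
  have t1 : ∀ n : ℤ, hl (dT deg) (ext R M (Th w)) n = hl deg (ext R M d) n + hl (dT deg) (ext R M (Th w)) (n - 2) := by
    refine hl_tot ?_
    intro l x
    rw [ext_Th w (fun n hn i j m => haM _ (wa n hn i j) m), w0]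
  have t2 : ∀ n : ℤ, hl (dT deg') (ext R M (Th (PowerSeries.C (d' : Module.End R (ι' →₀ R))))) n = hl deg' (ext R M d') n +
      hl (dT deg') (ext R M (Th (PowerSeries.C (d' : Module.End R (ι' →₀ R))))) (n - 2) := by
    refine hl_tot ?_
    intro l x
    rw [ext_Th _ (fun n hn i j m => by rw [PowerSeries.coeff_C, if_neg hn]; simp)]
    rw [PowerSeries.coeff_zero_C]
  have t3 : ∀ n : ℤ, hl (dT deg) (ext R M (Th w)) n = hl (dT deg') (ext R M (Th (PowerSeries.C (d' : Module.End R (ι' →₀ R))))) n := by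
    intro n
    rw [← he.hl_eq he' (P := R) (M := M), ext_trans]
  have fin2 : ∀ N : ℕ, ∀ n : ℤ, n < N → hl (dT deg') (ext R M (Th (PowerSeries.C (d' : Module.End R (ι' →₀ R))))) n ≠ ⊤ := by
    intro N
    induction N with
    | zero =>
      intro n hn
      have hz : ∀ t : Hm (dT deg') (ext R M (Th (PowerSeries.C (d' : Module.End R (ι' →₀ R))))) n, t = 0 := by
        intro t
        obtain ⟨z, rfl⟩ := Submodule.Quotient.mk_surjective _ t
        rw [sq_mk_eq_zero, gr_neg hn (mem_Zc.1 z.2).2]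
        exact Submodule.zero_mem _
      have : Subsingleton (Hm (dT deg') (ext R M (Th (PowerSeries.C (d' : Module.End R (ι' →₀ R))))) n) :=
        ⟨fun a b => by rw [hz a, hz b]⟩
      rw [hl, Module.length_eq_zero]
      exact ENat.zero_ne_top
    | succ N ih =>
      intro n hn
      rw [t2]
      exact WithTop.add_ne_top.2 ⟨h'.hl_fin n, ih _ (by push_cast at hn; omega)⟩
  rw [hl_conv_ext hs]
  have e := t3 n
  rw [t1, t2, t3] at e
  exact (ENat.add_left_injective_of_ne_top (fin2 (n.toNat + 1) (n - 2) (by omega))) e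
end thmA
end EZ

open CategoryTheory TensorProduct

/-- The `i`-th Betti number of a module `M` over a local ring `A`:
`β_i^A(M) = dim_k Tor_i^A(M, k)`, computed as the `k`-dimension of
`k ⊗_A Tor_i^A(M, k)` (the two agree since `Tor_i^A(M, k)` is a `k`-vector
space, being annihilated by the maximal ideal of `A`). -/
noncomputable def bettiNumber (A : Type) [CommRing A] [IsLocalRing A]
    (M : Type) [AddCommGroup M] [Module A M] (i : ℕ) : ℕ :=
  Module.finrank (IsLocalRing.ResidueField A)
    (IsLocalRing.ResidueField A ⊗[A]
      (((Tor (ModuleCat A) i).obj (ModuleCat.of A M)).obj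
        (ModuleCat.of A (IsLocalRing.ResidueField A))))

namespace EZ
open Finsupp
set_option linter.unusedSectionVars false

section pieces
variable {A : Type} [CommRing A] {M : Type} [AddCommGroup M] [Module A M] {ι : Type} (deg : ι → ℕ)

/-- index set of degree n -/
abbrev Jx (n : ℕ) : Type := {i : ι // deg i = n}

/-- inclusion of the degree n piece -/
noncomputable def jn (A M : Type) [CommRing A] [AddCommGroup M] [Module A M] (n : ℕ) :
    (Jx deg n →₀ M) →ₗ[A] (ι →₀ M) := Finsupp.lmapDomain M A Subtype.val

/-- projection to the degree n piece -/
noncomputable def rn (A M : Type) [CommRing A] [AddCommGroup M] [Module A M] (n : ℕ) :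
    (ι →₀ M) →ₗ[A] (Jx deg n →₀ M) := Finsupp.lsubtypeDomain {i | deg i = n}

lemma rn_apply (n : ℕ) (x : ι →₀ M) (i : Jx deg n) : rn deg A M n x i = x i.1 := rfl

lemma jn_apply (n : ℕ) (x : Jx deg n →₀ M) (i : Jx deg n) : jn deg A M n x i.1 = x i := by
  simp only [jn, Finsupp.lmapDomain_apply]
  exact Finsupp.mapDomain_apply Subtype.val_injective x i

lemma jn_apply' (n : ℕ) (x : Jx deg n →₀ M) (i : ι) (hi : deg i ≠ n) : jn deg A M n x i = 0 := by
  simp only [jn, Finsupp.lmapDomain_apply]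
  apply Finsupp.mapDomain_of_notMem_range
  rintro ⟨j, rfl⟩; exact hi j.2

lemma jn_mem (n : ℕ) (x : Jx deg n →₀ M) : jn deg A M n x ∈ gr A deg (n : ℤ) := by
  rw [mem_gr]; intro i hi
  by_contra h
  exact hi (jn_apply' deg n x i (by exact_mod_cast h))

lemma rn_jn (n : ℕ) (x : Jx deg n →₀ M) : rn deg A M n (jn deg A M n x) = x := by
  ext i; rw [rn_apply, jn_apply]

lemma jn_rn (n : ℕ) (x : ι →₀ M) (hx : x ∈ gr A deg (n : ℤ)) : jn deg A M n (rn deg A M n x) = x := by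
  ext i
  by_cases h : deg i = n
  · exact jn_apply (A := A) deg n _ ⟨i, h⟩
  · rw [jn_apply' deg n _ i h]
    by_contra h'
    exact h (by exact_mod_cast mem_gr.1 hx i (Ne.symm h'))

lemma jn_inj (n : ℕ) : Function.Injective (jn deg A M n) := fun x y h => by
  rw [← rn_jn (A := A) deg n x, h, rn_jn]

variable {deg} {d : (ι →₀ A) →ₗ[A] (ι →₀ A)}

/-- the differential -/
noncomputable def dn (deg : ι → ℕ) (d : (ι →₀ A) →ₗ[A] (ι →₀ A)) (n : ℕ) : (Jx deg (n + 1) →₀ A) →ₗ[A] (Jx deg n →₀ A) :=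
  rn deg A A n ∘ₗ d ∘ₗ jn deg A A (n + 1)

lemma jn_dn (hd : IsDeg deg deg (-1) d) (n : ℕ) (x : Jx deg (n + 1) →₀ A) :
    jn deg A A n (dn deg d n x) = d (jn deg A A (n + 1) x) := by
  apply jn_rn
  have := hd _ _ (jn_mem (A := A) deg (n + 1) x)
  rw [show ((n + 1 : ℕ) : ℤ) + -1 = n by push_cast; ring] at this
  exact this

lemma dn_dn (hd : IsDeg deg deg (-1) d) (dd : d ∘ₗ d = 0) (n : ℕ) : dn deg d n ∘ₗ dn deg d (n + 1) = 0 := by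
  refine LinearMap.ext fun x => jn_inj (A := A) deg n ?_
  rw [LinearMap.comp_apply, jn_dn hd, jn_dn hd]
  simpa using LinearMap.congr_fun dd (jn deg A A (n + 1 + 1) x)

open Classical in
/-- comparison -/
noncomputable def En (A M : Type) [CommRing A] [AddCommGroup M] [Module A M] (deg : ι → ℕ) (n : ℕ) :
    M ⊗[A] (Jx deg n →₀ A) →ₗ[A] (ι →₀ M) :=
  jn deg A M n ∘ₗ (TensorProduct.finsuppScalarRight A A M (Jx deg n)).toLinearMap

open Classical in
lemma En_tmul (n : ℕ) (m : M) (x : Jx deg n →₀ A) : En A M deg n (m ⊗ₜ x) = tm m (jn deg A A n x) := by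
  ext i
  rw [tm_apply]
  by_cases h : deg i = n
  · obtain ⟨i, rfl⟩ : ∃ j : Jx deg n, j.1 = i := ⟨⟨i, h⟩, rfl⟩
    rw [jn_apply]
    simp only [En, LinearMap.comp_apply]
    rw [jn_apply]
    simp
  · rw [jn_apply' deg n _ i h, zero_smul]
    exact jn_apply' (A := A) deg n _ i h

lemma En_inj (n : ℕ) : Function.Injective (En A M deg n) := by
  unfold En
  rw [LinearMap.coe_comp]
  exact (jn_inj deg n).comp (LinearEquiv.injective _)

lemma En_mem (n : ℕ) (x) : En A M deg n x ∈ gr A deg (n : ℤ) := jn_mem _ _ _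

open Classical in
lemma En_surj (n : ℕ) (x : ι →₀ M) (hx : x ∈ gr A deg (n : ℤ)) : ∃ y, En A M deg n y = x := by
  refine ⟨(TensorProduct.finsuppScalarRight A A M (Jx deg n)).symm (rn deg A M n x), ?_⟩
  simp only [En, LinearMap.comp_apply]
  simp [jn_rn deg n x hx]

lemma En_d (hd : IsDeg deg deg (-1) d) (n : ℕ) (y) :
    En A M deg n (LinearMap.lTensor M (dn deg d n) y) = ext A M d (En A M deg (n + 1) y) := by
  induction y using TensorProduct.induction_on with
  | zero => simp
  | add x y hx hy => simp [hx, hy]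
  | tmul m x => rw [LinearMap.lTensor_tmul, En_tmul, En_tmul, ext_tm, jn_dn hd]

end pieces

section gen
variable {A : Type} [CommRing A]

lemma gen_iso (S : ShortComplex (ModuleCat.{0} A)) {W : Type} [AddCommGroup W] [Module A W] (Z B : Submodule A W)
    (E : S.X₂ →ₗ[A] W) (hE : Function.Injective E) (hZ : ∀ x, S.g.hom x = 0 ↔ E x ∈ Z)
    (hZ' : ∀ z ∈ Z, ∃ x, E x = z) (hB : ∀ x, E x ∈ B ↔ ∃ y, S.f.hom y = x) :
    Nonempty (S.homology ≃ₗ[A] Sq Z B) := by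
  let φ : LinearMap.ker S.g.hom ≃ₗ[A] Z := LinearEquiv.ofBijective
    (E.restrict (p := LinearMap.ker S.g.hom) (q := Z) (fun x hx => (hZ x).1 hx)) ⟨by
      intro x y h
      exact Subtype.ext (hE (congrArg Subtype.val h)), by
      rintro ⟨z, hz⟩
      obtain ⟨x, rfl⟩ := hZ' z hz
      exact ⟨⟨x, (hZ x).2 hz⟩, rfl⟩⟩
  suffices hh : Submodule.map φ.toLinearMap (LinearMap.range S.moduleCatToCycles) = B.submoduleOf Z from
    ⟨S.moduleCatHomologyIso.toLinearEquiv ≪≫ₗ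
      (Submodule.Quotient.equiv (LinearMap.range S.moduleCatToCycles) (B.submoduleOf Z) φ hh : _)⟩
  ext z
  obtain ⟨x, rfl⟩ := φ.surjective z
  constructor
  · rintro ⟨_, ⟨y, rfl⟩, hy⟩
    have := φ.injective hy
    subst this
    exact (hB _).2 ⟨y, rfl⟩
  · intro h
    obtain ⟨y, hy⟩ := (hB x.1).1 h
    exact ⟨x, ⟨y, Subtype.ext hy⟩, rfl⟩
end gen
end EZ

namespace EZ
open Finsupp
set_option linter.unusedSectionVars false
section res
variable {A : Type} [CommRing A] [IsLocalRing A] {ι : Type} {deg : ι → ℕ}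
  {d : (ι →₀ A) →ₗ[A] (ι →₀ A)} {i0 : ι}

/-- complex -/
noncomputable def Res.cx (h : Res deg d i0) : ChainComplex (ModuleCat.{0} A) ℕ :=
  ChainComplex.of (fun n => ModuleCat.of A (Jx deg n →₀ A)) (fun n => ModuleCat.ofHom (dn deg d n))
    (fun n => by
      rw [← ModuleCat.ofHom_comp, dn_dn h.hd h.dd]; rfl)

lemma Res.cx_d (h : Res deg d i0) (n : ℕ) : h.cx.d (n + 1) n = ModuleCat.ofHom (dn deg d n) :=
  ChainComplex.of_d (fun n => ModuleCat.of A (Jx deg n →₀ A)) (fun n => ModuleCat.ofHom (dn deg d n)) n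

/-- augmentation -/
noncomputable def Res.aug (h : Res deg d i0) : (Jx deg 0 →₀ A) →ₗ[A] IsLocalRing.ResidueField A :=
  (Algebra.linearMap A (IsLocalRing.ResidueField A)) ∘ₗ Finsupp.lapply ⟨i0, h.degi0⟩

lemma Res.aug_apply (h : Res deg d i0) (x) : h.aug x = IsLocalRing.residue A (x ⟨i0, h.degi0⟩) := rfl

lemma Res.aug_zero (h : Res deg d i0) (x) : h.aug x = 0 ↔ ∃ y, dn deg d 0 y = x := by
  have key : jn deg A A 0 x = single i0 (x ⟨i0, h.degi0⟩) := by
    ext i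
    by_cases hi : i = i0
    · subst hi; rw [single_eq_same]; exact jn_apply (A := A) deg 0 x ⟨i, h.degi0⟩
    · rw [single_eq_of_ne (by tauto)]
      exact jn_apply' (A := A) deg 0 x i (fun e => hi ((h.deg0 i).1 e))
  rw [h.aug_apply, IsLocalRing.residue_eq_zero_iff]
  constructor
  · intro hx
    obtain ⟨y, hy, e⟩ := h.surj _ hx
    refine ⟨rn deg A A 1 y, jn_inj (A := A) deg 0 ?_⟩
    rw [jn_dn h.hd, key, ← e]
    congr 1
    exact jn_rn deg 1 y (by simpa using hy)
  · rintro ⟨y, rfl⟩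
    exact h.min0 _

lemma Res.aug_surj (h : Res deg d i0) : Function.Surjective h.aug := by
  intro y
  obtain ⟨a, rfl⟩ := IsLocalRing.residue_surjective y
  exact ⟨single ⟨i0, h.degi0⟩ a, by rw [h.aug_apply, single_eq_same]⟩

lemma Res.dn_exact (h : Res deg d i0) (n : ℕ) (x) (hx : dn deg d n x = 0) : ∃ y, dn deg d (n + 1) y = x := by
  obtain ⟨y, hy, e⟩ := h.exact (n + 1 : ℕ) (by omega) _ (jn_mem (A := A) deg (n + 1) x)
    (by rw [← jn_dn h.hd, hx, map_zero])
  refine ⟨rn deg A A (n + 1 + 1) y, jn_inj (A := A) deg (n + 1) ?_⟩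
  rw [jn_dn h.hd, ← e]
  congr 1
  exact jn_rn deg (n + 1 + 1) y (by exact_mod_cast hy)

/-- augmentation morphism -/
noncomputable def Res.pi (h : Res deg d i0) :
    h.cx ⟶ (ChainComplex.single₀ (ModuleCat.{0} A)).obj (ModuleCat.of A (IsLocalRing.ResidueField A)) :=
  (ChainComplex.toSingle₀Equiv _ _).symm ⟨(ModuleCat.ofHom h.aug : ModuleCat.of A (Jx deg 0 →₀ A) ⟶ _), by
    rw [h.cx_d]
    ext x
    exact (h.aug_zero _).2 ⟨_, rfl⟩⟩

lemma Res.pi_f (h : Res deg d i0) : h.pi.f 0 = ModuleCat.ofHom h.aug :=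
  ChainComplex.toSingle₀Equiv_symm_apply_f_zero _ _

lemma Res.qi (h : Res deg d i0) : QuasiIso h.pi := by
  constructor
  intro n
  cases n with
  | zero =>
    rw [ChainComplex.quasiIsoAt₀_iff, ShortComplex.quasiIso_iff_of_zeros' _ rfl rfl rfl]
    constructor
    · rw [ShortComplex.moduleCat_exact_iff]
      intro x hx
      change (h.pi.f 0).hom x = 0 at hx
      rw [h.pi_f] at hx
      obtain ⟨y, hy⟩ := (h.aug_zero x).1 hx
      refine ⟨y, ?_⟩
      change (h.cx.d 1 0).hom y = x
      rw [h.cx_d 0]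
      exact hy
    · rw [ModuleCat.epi_iff_surjective]
      intro y
      obtain ⟨x, hx⟩ := h.aug_surj y
      refine ⟨x, ?_⟩
      change (h.pi.f 0).hom x = y
      rw [h.pi_f]
      exact hx
  | succ n =>
    rw [quasiIsoAt_iff_exactAt' _ _ (ChainComplex.exactAt_succ_single_obj _ _)]
    rw [HomologicalComplex.exactAt_iff' _ (n+1+1) (n+1) n (by simp) (by simp)]
    rw [ShortComplex.moduleCat_exact_iff]
    intro x hx
    change (h.cx.d (n+1) n).hom x = 0 at hx
    rw [h.cx_d] at hx
    obtain ⟨y, hy⟩ := h.dn_exact n x hx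
    refine ⟨y, ?_⟩
    change (h.cx.d (n+1+1) (n+1)).hom y = x
    rw [h.cx_d]
    exact hy


/-- the projective resolution of the residue field -/
noncomputable def Res.pres (h : Res deg d i0) :
    ProjectiveResolution (ModuleCat.of A (IsLocalRing.ResidueField A) : ModuleCat.{0} A) where
  complex := h.cx
  projective n := by
    change Projective (ModuleCat.of A (Jx deg n →₀ A))
    infer_instance
  π := h.pi
  quasiIso := h.qi

variable {M : Type} [AddCommGroup M] [Module A M]

lemma Res.tor_iso (h : Res deg d i0) (n : ℕ) :
    Nonempty ((((Tor (ModuleCat.{0} A) n).obj (ModuleCat.of A M)).obj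
        (ModuleCat.of A (IsLocalRing.ResidueField A))) ≃ₗ[A] Hm deg (ext A M d) (n : ℤ)) := by
  let F := (MonoidalCategory.tensoringLeft (ModuleCat.{0} A)).obj (ModuleCat.of A M)
  let K := (F.mapHomologicalComplex (ComplexShape.down ℕ)).obj h.cx
  have e1 : ((Tor (ModuleCat.{0} A) n).obj (ModuleCat.of A M)).obj
        (ModuleCat.of A (IsLocalRing.ResidueField A)) ≅ K.homology n := h.pres.isoLeftDerivedObj F n
  have hKd : ∀ n (y : M ⊗[A] (Jx deg (n + 1) →₀ A)), (K.d (n + 1) n).hom y = LinearMap.lTensor M (dn deg d n) y := by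
    intro n y
    change (F.map (h.cx.d (n + 1) n)).hom y = _
    rw [h.cx_d]
    rfl
  have hB : ∀ n (x : M ⊗[A] (Jx deg n →₀ A)), En A M deg n x ∈ Bc deg (ext A M d) (n : ℤ) ↔
      ∃ y, (K.d (n + 1) n).hom y = x := by
    intro n x
    rw [mem_Bc]
    constructor
    · rintro ⟨y, hy, e⟩
      obtain ⟨z, rfl⟩ := En_surj (n + 1) y (by exact_mod_cast hy)
      refine ⟨z, En_inj (A := A) n ?_⟩
      rw [← e, ← En_d h.hd, hKd]
    · rintro ⟨y, rfl⟩
      exact ⟨En A M deg (n + 1) y, by exact_mod_cast En_mem (n + 1) y, ((congrArg (En A M deg n) (hKd n y)).trans (En_d h.hd n y)).symm⟩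
  have hZ : ∀ n (x : M ⊗[A] (Jx deg (n + 1) →₀ A)), LinearMap.lTensor M (dn deg d n) x = 0 ↔
      En A M deg (n + 1) x ∈ Zc deg (ext A M d) ((n + 1 : ℕ) : ℤ) := by
    intro n x
    rw [mem_Zc, ← En_d h.hd]
    constructor
    · intro e
      exact ⟨by rw [e, map_zero], En_mem _ x⟩
    · intro e
      exact En_inj (A := A) n (by rw [e.1, map_zero])
  cases n with
  | zero =>
    have e2 : K.homology 0 ≅ (K.sc' 1 0 0).homology :=
      ShortComplex.homologyMapIso (K.isoSc' 1 0 0 (by simp) (by simp))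
    obtain ⟨e3⟩ := gen_iso (K.sc' 1 0 0) (Zc deg (ext A M d) (0 : ℕ)) (Bc deg (ext A M d) (0 : ℕ))
      (En A M deg 0) (En_inj 0) (by
        intro x
        have h1 : (K.sc' 1 0 0).g = 0 := K.shape _ _ (by simp)
        rw [h1, mem_Zc]
        refine iff_of_true rfl ⟨?_, En_mem 0 x⟩
        exact gr_neg (S := A) (n := -1) (by omega) (IsDeg.mem (isDeg_ext h.hd) (En_mem 0 x) (by simp)))
      (fun z hz => En_surj 0 z (mem_Zc.1 hz).2)
      (hB 0)
    exact ⟨e1.toLinearEquiv ≪≫ₗ e2.toLinearEquiv ≪≫ₗ e3⟩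
  | succ n =>
    have e2 : K.homology (n + 1) ≅ (K.sc' (n + 1 + 1) (n + 1) n).homology :=
      ShortComplex.homologyMapIso (K.isoSc' (n + 1 + 1) (n + 1) n (by simp) (by simp))
    obtain ⟨e3⟩ := gen_iso (K.sc' (n + 1 + 1) (n + 1) n) (Zc deg (ext A M d) (n + 1 : ℕ)) (Bc deg (ext A M d) (n + 1 : ℕ))
      (En A M deg (n + 1)) (En_inj (n + 1)) (by
        intro x
        exact (Eq.congr_left (hKd n x)).trans (hZ n x))
      (fun z hz => En_surj (n + 1) z (mem_Zc.1 hz).2)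
      (hB (n + 1))
    exact ⟨e1.toLinearEquiv ≪≫ₗ e2.toLinearEquiv ≪≫ₗ e3⟩

lemma Res.betti (h : Res deg d i0) (n : ℕ) :
    bettiNumber A M n = (hl deg (ext A M d) (n : ℤ)).toNat := by
  obtain ⟨e⟩ := h.tor_iso (M := M) n
  unfold bettiNumber
  rw [finrank_tensor, e.length_eq, hl]
  · intro b hb t
    apply e.injective
    rw [map_smul, map_zero]
    exact h.hm_kill n b hb _

end res
end EZ

namespace EZ
section fin
lemma betti_congr {A : Type} [CommRing A] [IsLocalRing A] {M N : Type} [AddCommGroup M] [Module A M]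
    [AddCommGroup N] [Module A N] (e : M ≃ₗ[A] N) (n : ℕ) : bettiNumber A M n = bettiNumber A N n := by
  let e' : ((Tor (ModuleCat.{0} A) n).obj (ModuleCat.of A M)).obj (ModuleCat.of A (IsLocalRing.ResidueField A)) ≅
      ((Tor (ModuleCat.{0} A) n).obj (ModuleCat.of A N)).obj (ModuleCat.of A (IsLocalRing.ResidueField A)) :=
    ((Tor (ModuleCat.{0} A) n).mapIso e.toModuleIso).app _
  exact (LinearEquiv.baseChange A (IsLocalRing.ResidueField A) _ _ e'.toLinearEquiv).finrank_eq

lemma betti_zero {A : Type} [CommRing A] [IsLocalRing A] [IsNoetherianRing A] {M : Type} [AddCommGroup M] [Module A M]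
    [Subsingleton M] (n : ℕ) : bettiNumber A M n = 0 := by
  obtain ⟨ι, deg, d, i0, h⟩ := exists_res (S := A)
  rw [h.betti]
  have : Subsingleton (Hm deg (ext A M d) (n : ℤ)) := by
    have : Subsingleton (Zc deg (ext A M d) (n : ℤ)) := ⟨fun x y => Subtype.ext (Subsingleton.elim _ _)⟩
    exact (Submodule.Quotient.mk_surjective _).subsingleton
  rw [hl, Module.length_eq_zero]
  rfl

lemma res_equiv {Q : Type} [CommRing Q] [IsLocalRing Q] {R : Type} [CommRing R] [IsLocalRing R] [Algebra Q R]
    (hs : Function.Surjective (algebraMap Q R)) :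
    Nonempty (IsLocalRing.ResidueField Q ≃ₗ[Q] IsLocalRing.ResidueField R) := by
  have hm : ∀ x, Algebra.linearMap Q (IsLocalRing.ResidueField R) x = IsLocalRing.residue R (algebraMap Q R x) :=
    fun x => rfl
  have hsurj : Function.Surjective (Algebra.linearMap Q (IsLocalRing.ResidueField R)) := by
    intro y
    obtain ⟨z, rfl⟩ := IsLocalRing.residue_surjective y
    obtain ⟨x, rfl⟩ := hs z
    exact ⟨x, hm x⟩
  have hker : IsLocalRing.maximalIdeal Q = LinearMap.ker (Algebra.linearMap Q (IsLocalRing.ResidueField R)) := by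
    ext x
    rw [LinearMap.mem_ker, hm, IsLocalRing.residue_eq_zero_iff, mem_max_iff hs]
  exact ⟨(Submodule.quotEquivOfEq _ _ hker).trans (LinearMap.quotKerEquivOfSurjective _ hsurj)⟩

lemma betti_thmA {Q : Type} [CommRing Q] [IsLocalRing Q] [IsNoetherianRing Q] {R : Type} [CommRing R] [IsLocalRing R] [Algebra Q R]
    {M : Type} [AddCommGroup M] [Module Q M] [Module R M] [IsScalarTower Q R M] [Module.Finite R M]
    (hs : Function.Surjective (algebraMap Q R)) (f g : Q) (hk : ∀ x, algebraMap Q R x = 0 ↔ x ∈ Ideal.span {f})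
    (gm : g ∈ IsLocalRing.maximalIdeal Q) (fg : f * g = 0)
    (af : ∀ x : Q, x * f = 0 → x ∈ Ideal.span {g})
    (ag : ∀ x : Q, x * g = 0 → x ∈ Ideal.span {f})
    (a : Ideal Q) (ha : a ≤ IsLocalRing.maximalIdeal Q) (hfa : f ∈ IsLocalRing.maximalIdeal Q * a)
    (haM : ∀ c ∈ a, ∀ m : M, c • m = 0) (n : ℕ) : bettiNumber Q M n = bettiNumber R M n := by
  have : IsNoetherianRing R := isNoetherianRing_of_surjective Q R (algebraMap Q R) hs
  obtain ⟨ι, deg, d, i0, h⟩ := exists_res (S := Q)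
  obtain ⟨ι', deg', d', i0', h'⟩ := exists_res (S := R)
  rw [h.betti, h'.betti, thmA hs f g hk gm fg af ag a ha hfa haM h h']
end fin
end EZ


/-- **Inertness, exact zerodivisor case.** Let `f, g` be an exact pair of
zerodivisors in the maximal ideal `m` of a Noetherian local ring `Q` and set
`R = Q/(f)`. If `M` is a finitely generated `R`-module with `f ∈ m·ann_Q(M)`,
then `M` is inert by `Q → R`:
`∑_{p+q=i} β_p^R(M)·β_q^Q(k) = ∑_{p+q=i} β_p^Q(M)·β_q^R(k)` for all `i ≥ 0`. -/
theorem inert_of_exact_zerodivisor_of_ann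
    (Q : Type) [CommRing Q] [IsNoetherianRing Q] [IsLocalRing Q]
    (f g : Q) (hf0 : f ≠ 0) (hg0 : g ≠ 0)
    (hfm : f ∈ IsLocalRing.maximalIdeal Q) (hgm : g ∈ IsLocalRing.maximalIdeal Q)
    (hannf : ∀ x : Q, x * f = 0 ↔ x ∈ Ideal.span {g})
    (hanng : ∀ x : Q, x * g = 0 ↔ x ∈ Ideal.span {f})
    [IsLocalRing (Q ⧸ Ideal.span {f})]
    (M : Type) [AddCommGroup M] [Module Q M] [Module (Q ⧸ Ideal.span {f}) M]
    [IsScalarTower Q (Q ⧸ Ideal.span {f}) M]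
    [Module.Finite (Q ⧸ Ideal.span {f}) M]
    (hann : f ∈ IsLocalRing.maximalIdeal Q * Module.annihilator Q M)
    (i : ℕ) :
    ∑ p ∈ Finset.range (i + 1),
        bettiNumber (Q ⧸ Ideal.span {f}) M p *
          bettiNumber Q (IsLocalRing.ResidueField Q) (i - p) =
      ∑ p ∈ Finset.range (i + 1),
        bettiNumber Q M p *
          bettiNumber (Q ⧸ Ideal.span {f})
            (IsLocalRing.ResidueField (Q ⧸ Ideal.span {f})) (i - p) := by
  rcases subsingleton_or_nontrivial M with hM | hM
  · simp [EZ.betti_zero]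
  have hs : Function.Surjective (algebraMap Q (Q ⧸ Ideal.span {f})) := Ideal.Quotient.mk_surjective
  have hk : ∀ x, algebraMap Q (Q ⧸ Ideal.span {f}) x = 0 ↔ x ∈ Ideal.span {f} :=
    fun x => Ideal.Quotient.eq_zero_iff_mem
  have fg : f * g = 0 := (hanng f).2 (Ideal.mem_span_singleton_self f)
  have ha : Module.annihilator Q M ≤ IsLocalRing.maximalIdeal Q := by
    apply IsLocalRing.le_maximalIdeal
    intro h
    have h1 : (1 : Q) ∈ Module.annihilator Q M := h ▸ Submodule.mem_top
    obtain ⟨m, hm⟩ := exists_ne (0 : M)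
    exact hm (by simpa using Module.mem_annihilator.1 h1 m)
  have h1 : ∀ n, bettiNumber Q M n = bettiNumber (Q ⧸ Ideal.span {f}) M n :=
    EZ.betti_thmA hs f g hk hgm fg (fun x => (hannf x).1) (fun x => (hanng x).1) _ ha hann
      (fun c hc m => Module.mem_annihilator.1 hc m)
  obtain ⟨e⟩ := EZ.res_equiv hs
  have h2 : ∀ n, bettiNumber Q (IsLocalRing.ResidueField Q) n =
      bettiNumber (Q ⧸ Ideal.span {f}) (IsLocalRing.ResidueField (Q ⧸ Ideal.span {f})) n := by
    intro n
    rw [EZ.betti_congr e]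
    refine EZ.betti_thmA hs f g hk hgm fg (fun x => (hannf x).1) (fun x => (hanng x).1) _ le_rfl
      (Ideal.mul_mono_right ha hann) ?_ n
    intro c hc m
    obtain ⟨z, rfl⟩ := IsLocalRing.residue_surjective m
    rw [Algebra.smul_def, show algebraMap Q (IsLocalRing.ResidueField (Q ⧸ Ideal.span {f})) c =
      IsLocalRing.residue _ (algebraMap Q (Q ⧸ Ideal.span {f}) c) from rfl,
      (IsLocalRing.residue_eq_zero_iff _).2 ((EZ.mem_max_iff hs c).2 hc), zero_mul]
  exact Finset.sum_congr rfl fun p _ => by rw [h1, h2]
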